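/- There exist constants C > 0 and 0 < c ≤ 1 such that the following holds for all n, d and λ > 0. If G is an (n,d,λ)-graph with d/λ ≥ C·(log n)^3, then G contains a spanning nearly-balanced subdivision of the complete graph K_t for every integer t with 2 ≤ t ≤ min{cd, c·√(n/(log n)^3)}. -/

import Mathlib

open SimpleGraph

/-- `G` is an `(n,d,λ)`-graph: `n` vertices, `d`-regular, and all adjacency-matrix
eigenvalues except the largest one `d` are at most `λ` in absolute value. -/
def IsNDLGraph (n d : ℕ) (lam : ℝ) {V : Type*} [Fintype V] [DecidableEq V]
    (G : SimpleGraph V) [DecidableRel G.Adj] : Prop :=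
  Fintype.card V = n ∧ G.IsRegularOfDegree d ∧
    ∀ hA : (G.adjMatrix ℝ).IsHermitian,
      ∃ i₀ : V, hA.eigenvalues i₀ = (d : ℝ) ∧
        ∀ i : V, i ≠ i₀ → |hA.eigenvalues i| ≤ lam

/-- `G` contains a spanning nearly-balanced subdivision of the complete graph `K_t`:
there are `t` (distinct) branch vertices, pairwise internally disjoint paths
joining every pair of branch vertices, every vertex of `G` lies on one of these
paths, and there is a positive integer `ℓ` such that every branching path has
length between `ℓ - 1` and `ℓ + 1`. -/
def HasSpanningNearlyBalancedKSubdivision {V : Type*} (G : SimpleGraph V) (t : ℕ) : Prop :=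
  ∃ (b : Fin t ↪ V) (P : ∀ i j : Fin t, i < j → G.Walk (b i) (b j)),
    (∀ i j (h : i < j), (P i j h).IsPath) ∧
    (∀ i j (h : i < j) (k : Fin t), k ≠ i → k ≠ j → b k ∉ (P i j h).support) ∧
    (∀ i j (h : i < j) (i' j' : Fin t) (h' : i' < j'), ¬(i = i' ∧ j = j') →
      ∀ v : V, v ∈ (P i j h).support → v ∈ (P i' j' h').support →
        ∃ k : Fin t, v = b k) ∧
    (∀ v : V, ∃ (i j : Fin t) (h : i < j), v ∈ (P i j h).support) ∧
    (∃ ℓ : ℕ, 1 ≤ ℓ ∧ ∀ i j (h : i < j),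
      ℓ - 1 ≤ (P i j h).length ∧ (P i j h).length ≤ ℓ + 1)

/-! By the expander mixing lemma an `(n, d, λ)`-graph is jumbled, and a random-like partition splits
its vertices into sets of which every vertex sees its share. One of the sets is a reservoir in which
the Friedman–Pippenger method grows binary trees, joins them into paths of prescribed length, and
gives the unused parts back. Such paths are assembled into switches, and the switches, following
Beneš, into a network of disjoint paths of equal length from a set `A` to a set `B` which can
realise any bijection. The vertices outside this network are covered by perfect matchings between
successive layers, that is, by paths of equal length from `B` back to `A`. The matchings determine
some uncontrolled bijection, but the network can be switched afterwards so that its trips and those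
through the layers concatenate to branching paths between prescribed ends, each of which makes a
prescribed number of trips. The trips account for almost all of the length, so sharing them out
evenly balances the subdivision. -/

section Jumbled

open Finset

variable {V : Type*} {G : SimpleGraph V} [DecidableRel G.Adj]

/-- `G` is `(p, lam)`-jumbled (bijumbled, in part of the literature): the number of edges between
two vertex sets, as ordered pairs, differs from `p |S| |T|` by at most `lam √(|S| |T|)`. -/
def Jumbled (G : SimpleGraph V) [DecidableRel G.Adj] (p lam : ℝ) : Prop :=
  ∀ S T : Finset V, |(#(G.interedges S T) : ℝ) - p * #S * #T| ≤ lam * √(#S * #T)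

lemma card_interedges_eq_sum (S T : Finset V) :
    #(G.interedges S T) = ∑ u ∈ S, #{w ∈ T | G.Adj u w} := by
  simp only [SimpleGraph.interedges, Rel.interedges, card_filter, sum_product]

end Jumbled

section Mixing

open Finset Matrix

variable {V : Type*} [Fintype V] [DecidableEq V] {A : Matrix V V ℝ}

lemma sum_dotProduct_eigenvectorBasis_mul (hA : A.IsHermitian) (x y : V → ℝ) :
    ∑ i, (x ⬝ᵥ ⇑(hA.eigenvectorBasis i)) * (y ⬝ᵥ ⇑(hA.eigenvectorBasis i)) = x ⬝ᵥ y := by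
  have h := hA.eigenvectorBasis.sum_inner_mul_inner (WithLp.toLp 2 x) (WithLp.toLp 2 y)
  simp only [EuclideanSpace.inner_eq_star_dotProduct, star_trivial] at h
  rw [dotProduct_comm x y, ← h]
  exact sum_congr rfl fun i _ => by rw [dotProduct_comm x]

lemma mulVec_dotProduct_eigenvectorBasis (hA : A.IsHermitian) (x : V → ℝ) (i : V) :
    A *ᵥ x ⬝ᵥ ⇑(hA.eigenvectorBasis i) =
      hA.eigenvalues i * (x ⬝ᵥ ⇑(hA.eigenvectorBasis i)) := by
  have hT : Aᵀ = A := by simpa using hA.eq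
  rw [dotProduct_comm, dotProduct_mulVec, ← mulVec_transpose, hT, hA.mulVec_eigenvectorBasis,
    smul_dotProduct, smul_eq_mul, dotProduct_comm]

lemma dotProduct_eigenvectorBasis_eq_zero (hA : A.IsHermitian) {u : V → ℝ} {μ : ℝ}
    (hu : A *ᵥ u = μ • u) {i : V} (hi : hA.eigenvalues i ≠ μ) :
    u ⬝ᵥ ⇑(hA.eigenvectorBasis i) = 0 := by
  have h := mulVec_dotProduct_eigenvectorBasis hA u i
  rw [hu, smul_dotProduct, smul_eq_mul] at h
  exact (mul_eq_mul_right_iff.1 h).resolve_left hi.symm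

lemma dotProduct_eigenvectorBasis_mul_dotProduct_self (hA : A.IsHermitian) {u : V → ℝ} {i₀ : V}
    (hu : ∀ i ≠ i₀, u ⬝ᵥ ⇑(hA.eigenvectorBasis i) = 0) (x y : V → ℝ) :
    (x ⬝ᵥ ⇑(hA.eigenvectorBasis i₀)) * (y ⬝ᵥ ⇑(hA.eigenvectorBasis i₀)) * (u ⬝ᵥ u) =
      (x ⬝ᵥ u) * (y ⬝ᵥ u) := by
  have hdot : ∀ z : V → ℝ,
      z ⬝ᵥ u = (z ⬝ᵥ ⇑(hA.eigenvectorBasis i₀)) * (u ⬝ᵥ ⇑(hA.eigenvectorBasis i₀)) := fun z => by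
    rw [← sum_dotProduct_eigenvectorBasis_mul hA z u]
    exact sum_eq_single i₀ (fun i _ hi => by rw [hu i hi, mul_zero]) (by simp)
  rw [hdot x, hdot y, hdot u]
  ring

lemma abs_dotProduct_mulVec_sub_le (hA : A.IsHermitian) {i₀ : V} {lam : ℝ} (hlam : 0 ≤ lam)
    (h : ∀ i ≠ i₀, |hA.eigenvalues i| ≤ lam) (x y : V → ℝ) :
    |x ⬝ᵥ A *ᵥ y - hA.eigenvalues i₀ *
        ((x ⬝ᵥ ⇑(hA.eigenvectorBasis i₀)) * (y ⬝ᵥ ⇑(hA.eigenvectorBasis i₀)))| ≤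
      lam * √((x ⬝ᵥ x) * (y ⬝ᵥ y)) := by
  set f : V → ℝ := fun i => x ⬝ᵥ ⇑(hA.eigenvectorBasis i)
  set g : V → ℝ := fun i => y ⬝ᵥ ⇑(hA.eigenvectorBasis i)
  have hsum : x ⬝ᵥ A *ᵥ y = ∑ i, hA.eigenvalues i * (f i * g i) := by
    rw [← sum_dotProduct_eigenvectorBasis_mul hA]
    exact sum_congr rfl fun i _ => by rw [mulVec_dotProduct_eigenvectorBasis]; ring
  rw [hsum, ← add_sum_erase _ _ (mem_univ i₀), add_sub_cancel_left]
  calc |∑ i ∈ univ.erase i₀, hA.eigenvalues i * (f i * g i)|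
      ≤ ∑ i ∈ univ.erase i₀, lam * (|f i| * |g i|) := by
        refine (abs_sum_le_sum_abs _ _).trans (sum_le_sum fun i hi => ?_)
        rw [abs_mul, abs_mul]
        exact mul_le_mul_of_nonneg_right (h i (ne_of_mem_erase hi)) (by positivity)
    _ ≤ ∑ i, lam * (|f i| * |g i|) :=
        sum_le_sum_of_subset_of_nonneg (erase_subset _ _) fun i _ _ => by positivity
    _ = lam * ∑ i, |f i| * |g i| := by rw [mul_sum]
    _ ≤ lam * √((x ⬝ᵥ x) * (y ⬝ᵥ y)) := by
        refine mul_le_mul_of_nonneg_left (Real.le_sqrt_of_sq_le ?_) hlam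
        refine (sum_mul_sq_le_sq_mul_sq _ _ _).trans_eq ?_
        simp only [sq, abs_mul_abs_self, f, g, sum_dotProduct_eigenvectorBasis_mul]

lemma card_interedges_eq_dotProduct_adjMatrix (G : SimpleGraph V) [DecidableRel G.Adj]
    (S T : Finset V) :
    (#(G.interedges S T) : ℝ) =
      (fun v => if v ∈ S then 1 else 0) ⬝ᵥ G.adjMatrix ℝ *ᵥ fun v => if v ∈ T then 1 else 0 := by
  have hrow : ∀ u, (G.adjMatrix ℝ *ᵥ fun v => if v ∈ T then 1 else 0) u =
      #{w ∈ T | G.Adj u w} := fun u => by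
    simp [mulVec, dotProduct, adjMatrix_apply, sum_ite_mem, inter_comm]
  simp [dotProduct, hrow, card_interedges_eq_sum]

theorem IsNDLGraph.jumbled {n d : ℕ} {lam : ℝ} {G : SimpleGraph V} [DecidableRel G.Adj]
    (hG : IsNDLGraph n d lam G) (hlam : 0 ≤ lam) (hlamd : lam < d) :
    Jumbled G ((d : ℝ) / n) lam := by
  obtain ⟨rfl, hreg, hspec⟩ := hG
  have hA : (G.adjMatrix ℝ).IsHermitian := by simp [Matrix.IsHermitian]
  obtain ⟨i₀, hi₀, hle⟩ := hspec hA
  intro S T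
  have hone : G.adjMatrix ℝ *ᵥ 1 = (d : ℝ) • 1 := by
    ext v
    simpa [Function.const_def] using
      adjMatrix_mulVec_const_apply_of_regular (α := ℝ) (a := 1) hreg (v := v)
  have horth : ∀ i ≠ i₀, 1 ⬝ᵥ ⇑(hA.eigenvectorBasis i) = 0 := fun i hi =>
    dotProduct_eigenvectorBasis_eq_zero hA hone
      (((le_abs_self _).trans (hle i hi)).trans_lt hlamd).ne
  have hmain := dotProduct_eigenvectorBasis_mul_dotProduct_self hA horth
    (fun v => if v ∈ S then 1 else 0) (fun v => if v ∈ T then 1 else 0)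
  have hV : (Fintype.card V : ℝ) ≠ 0 := by
    exact_mod_cast (Fintype.card_pos_iff.2 ⟨i₀⟩).ne'
  simp only [dotProduct_one, sum_boole, filter_mem_eq_inter, univ_inter, Pi.one_apply, sum_const,
    card_univ, nsmul_eq_mul, mul_one] at hmain
  have h := abs_dotProduct_mulVec_sub_le hA hlam hle
    (fun v => if v ∈ S then 1 else 0) (fun v => if v ∈ T then 1 else 0)
  rw [← card_interedges_eq_dotProduct_adjMatrix, eq_div_of_mul_eq hV hmain, hi₀] at h
  convert h using 2
  · congr 1
    ring
  · simp [dotProduct]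

end Mixing

section Partition

open Finset

variable {ι : Type*} [Fintype ι]

lemma sum_ite_exp_neg_one_le {α : Type*} [Fintype α] [Nonempty α] (mark : α → Prop)
    [DecidablePred mark] {K : ℝ} (hK : Fintype.card α ≤ K) :
    ∑ a, (if mark a then Real.exp (-1) else 1) ≤
      Fintype.card α * Real.exp (-(#{a | mark a} / (2 * K))) := by
  have : (0 : ℝ) < Fintype.card α := by exact_mod_cast Fintype.card_pos
  have hexp : Real.exp (-1) ≤ 1 / 2 := by
    rw [Real.exp_neg, one_div]
    exact inv_anti₀ (by norm_num) (by linarith [Real.add_one_le_exp (1 : ℝ)])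
  calc ∑ a, (if mark a then Real.exp (-1) else 1)
      ≤ ∑ a, (1 - if mark a then (1 / 2 : ℝ) else 0) :=
        sum_le_sum fun a _ => by split_ifs <;> linarith
    _ = Fintype.card α * (1 - #{a | mark a} / (2 * Fintype.card α)) := by
        rw [sum_sub_distrib, ← sum_filter, sum_const, sum_const, card_univ]
        simp only [nsmul_eq_mul]
        field_simp
    _ ≤ Fintype.card α * (1 - #{a | mark a} / (2 * K)) := by gcongr
    _ ≤ Fintype.card α * Real.exp (-(#{a | mark a} / (2 * K))) := by
        gcongr
        exact Real.one_sub_le_exp_neg _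

lemma sum_exp_neg_card_filter_le [DecidableEq ι] {α : ι → Type*} [∀ b, Fintype (α b)]
    [∀ b, Nonempty (α b)] (mark : ∀ b, α b → Prop) [∀ b, DecidablePred (mark b)] {K : ℝ}
    (hK : ∀ b, Fintype.card (α b) ≤ K) :
    ∑ ω : ∀ b, α b, Real.exp (-(#{b | mark b (ω b)} : ℝ)) ≤
      Fintype.card (∀ b, α b) * Real.exp (-((∑ b, (#{a | mark b a} : ℝ)) / (2 * K))) :=
  calc ∑ ω : ∀ b, α b, Real.exp (-(#{b | mark b (ω b)} : ℝ))
      = ∑ ω : ∀ b, α b, ∏ b, (if mark b (ω b) then Real.exp (-1) else 1) := by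
        refine sum_congr rfl fun ω _ => ?_
        rw [prod_ite, prod_const, prod_const_one, mul_one, ← Real.exp_nat_mul, mul_neg_one]
    _ = ∏ b, ∑ a, (if mark b a then Real.exp (-1) else 1) := by
        rw [prod_univ_sum, Fintype.piFinset_univ]
    _ ≤ ∏ b, Fintype.card (α b) * Real.exp (-(#{a | mark b a} / (2 * K))) :=
        prod_le_prod (fun b _ => sum_nonneg fun a _ => by split_ifs <;> positivity)
          fun b _ => sum_ite_exp_neg_one_le _ (hK b)
    _ = _ := by
        rw [prod_mul_distrib, ← Real.exp_sum, Fintype.card_pi, Nat.cast_prod, sum_neg_distrib,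
          sum_div]

-- Markov's inequality for the exponential moment of the number of marked coordinates.
lemma card_filter_card_marked_lt_le [DecidableEq ι] {α : ι → Type*} [∀ b, Fintype (α b)]
    [∀ b, Nonempty (α b)] (mark : ∀ b, α b → Prop) [∀ b, DecidablePred (mark b)] {K δ : ℝ}
    (hK : ∀ b, Fintype.card (α b) ≤ K) (hK0 : 0 < K) (hδ : δ ≤ ∑ b, (#{a | mark b a} : ℝ)) :
    (#{ω : ∀ b, α b | (#{b | mark b (ω b)} : ℝ) < δ / (4 * K)} : ℝ) ≤
      Fintype.card (∀ b, α b) * Real.exp (-(δ / (4 * K))) := by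
  set τ := δ / (4 * K)
  have hτ : 2 * τ = δ / (2 * K) := by simp only [τ]; field_simp; ring
  refine le_of_mul_le_mul_right ?_ (Real.exp_pos (-τ))
  calc (#{ω : ∀ b, α b | (#{b | mark b (ω b)} : ℝ) < τ} : ℝ) * Real.exp (-τ)
      ≤ ∑ ω : ∀ b, α b with (#{b | mark b (ω b)} : ℝ) < τ,
          Real.exp (-(#{b | mark b (ω b)} : ℝ)) := by
        rw [← nsmul_eq_mul]
        exact card_nsmul_le_sum _ _ _ fun ω hω =>
          Real.exp_le_exp.2 (neg_le_neg (mem_filter.1 hω).2.le)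
    _ ≤ ∑ ω : ∀ b, α b, Real.exp (-(#{b | mark b (ω b)} : ℝ)) :=
        sum_le_sum_of_subset_of_nonneg (filter_subset _ _) fun _ _ _ => by positivity
    _ ≤ Fintype.card (∀ b, α b) * Real.exp (-((∑ b, (#{a | mark b a} : ℝ)) / (2 * K))) :=
        sum_exp_neg_card_filter_le mark hK
    _ ≤ Fintype.card (∀ b, α b) * Real.exp (-(2 * τ)) := by rw [hτ]; gcongr
    _ = Fintype.card (∀ b, α b) * Real.exp (-τ) * Real.exp (-τ) := by
        rw [mul_assoc, ← Real.exp_add]; ring_nf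

lemma exists_forall_forall_not_of_card_le {Ω κ : Type*} [Fintype Ω] [Nonempty Ω] [Fintype κ]
    (bad : κ → Ω → Prop) [∀ k, DecidablePred (bad k)] {ε : ℝ}
    (hbad : ∀ k, (#{ω | bad k ω} : ℝ) ≤ Fintype.card Ω * ε) (hε : Fintype.card κ * ε < 1) :
    ∃ ω, ∀ k, ¬ bad k ω := by
  classical
  by_contra! hcover
  have hΩ : (0 : ℝ) < Fintype.card Ω := by exact_mod_cast Fintype.card_pos
  have hsub : (univ : Finset Ω) ⊆ univ.biUnion fun k => {ω | bad k ω} := fun ω _ => by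
    simpa using hcover ω
  have hcard : (Fintype.card Ω : ℝ) ≤ ∑ k, (#{ω | bad k ω} : ℝ) := by
    exact_mod_cast (card_le_card hsub).trans card_biUnion_le
  have hsum : ∑ k, (#{ω | bad k ω} : ℝ) ≤ Fintype.card κ * (Fintype.card Ω * ε) := by
    simpa using sum_le_sum fun k (_ : k ∈ univ) => hbad k
  nlinarith

lemma exists_equiv_sigma_fin {α : Type*} [Fintype α] {N s : ℕ} (hlo : N * s ≤ Fintype.card α)
    (hhi : Fintype.card α ≤ N * (s + 1)) :
    ∃ m : Fin N → ℕ, (∀ b, s ≤ m b ∧ m b ≤ s + 1) ∧ Nonempty ((Σ b, Fin (m b)) ≃ α) := by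
  refine ⟨fun b => s + if (b : ℕ) < Fintype.card α - N * s then 1 else 0,
    fun b => by dsimp only; split_ifs <;> omega, ⟨Fintype.equivOfCardEq ?_⟩⟩
  rw [mul_add_one] at hhi
  have hlong : #{b : Fin N | (b : ℕ) < Fintype.card α - N * s} = Fintype.card α - N * s := by
    rw [Fin.card_filter_val_lt]; omega
  simp only [Fintype.card_sigma, Fintype.card_fin, sum_add_distrib, sum_const, card_univ,
    smul_eq_mul, sum_boole, hlong, Nat.cast_id]
  omega

lemma sum_card_filter_sigma_eq {α : ι → Type*} [∀ b, Fintype (α b)] {V : Type*} {R : Finset V}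
    (e : (Σ b, α b) ≃ R) (P : V → Prop) [DecidablePred P] :
    ∑ b, #{a | P (e ⟨b, a⟩)} = #{w ∈ R | P w} := by
  simp only [card_filter, ← Fintype.sum_sigma' fun b a => if P (e ⟨b, a⟩) then 1 else 0]
  rw [← sum_coe_sort R]
  exact e.sum_comp fun w => if P w then 1 else 0

lemma exists_forall_le_card_filter_perm {α : ι → Type*} [∀ b, Fintype (α b)]
    [∀ b, Nonempty (α b)] {V κ : Type*} [Fintype V] [Fintype κ] (mark : V → ∀ b, α b → Prop)
    [∀ v b, DecidablePred (mark v b)] (π : κ → ∀ b, Equiv.Perm (α b)) {K δ : ℝ}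
    (hK : ∀ b, Fintype.card (α b) ≤ K) (hK0 : 0 < K) (hδ : ∀ v, δ ≤ ∑ b, (#{a | mark v b a} : ℝ))
    (hbig : (Fintype.card V : ℝ) * Fintype.card κ < Real.exp (δ / (4 * K))) :
    ∃ ω : ∀ b, α b, ∀ v k, δ / (4 * K) ≤ #{b | mark v b (π k b (ω b))} := by
  classical
  obtain ⟨ω, hω⟩ := exists_forall_forall_not_of_card_le
    (fun (x : V × κ) (ω : ∀ b, α b) => (#{b | mark x.1 b (π x.2 b (ω b))} : ℝ) < δ / (4 * K))
    (ε := Real.exp (-(δ / (4 * K))))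
    (fun x => card_filter_card_marked_lt_le (fun b a => mark x.1 b (π x.2 b a)) hK hK0 <|
      (hδ x.1).trans_eq <| sum_congr rfl fun b _ => by
        exact_mod_cast (card_equiv (π x.2 b) fun a => by simp).symm)
    (by
      rw [Real.exp_neg, ← div_eq_mul_inv, div_lt_one (Real.exp_pos _), Fintype.card_prod]
      exact_mod_cast hbig)
  exact ⟨ω, fun v k => not_lt.1 (hω (v, k))⟩

theorem exists_degree_preserving_parts {V : Type*} [Fintype V] (G : SimpleGraph V)
    [DecidableRel G.Adj] (R : Finset V) {N s : ℕ} (hlo : N * s ≤ #R) (hhi : #R ≤ N * (s + 1))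
    {δ : ℝ} (hδ : ∀ v, δ ≤ #{w ∈ R | G.Adj v w})
    (hbig : (Fintype.card V : ℝ) * s < Real.exp (δ / (4 * (s + 1)))) :
    ∃ P : Fin s → Finset V, (∀ j, P j ⊆ R) ∧ (∀ j, #(P j) = N) ∧
      Pairwise (Function.onFun Disjoint P) ∧
      ∀ v j, δ / (4 * (s + 1)) ≤ #{w ∈ P j | G.Adj v w} := by
  classical
  rcases s.eq_zero_or_pos with rfl | hs
  · exact ⟨fun _ => ∅, fun j => j.elim0, fun j => j.elim0, fun j => j.elim0, fun _ j => j.elim0⟩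
  obtain ⟨m, hm, ⟨e⟩⟩ := exists_equiv_sigma_fin (α := R) (by simpa using hlo) (by simpa using hhi)
  have : ∀ b, NeZero (m b) := fun b => ⟨by have := hm b; omega⟩
  let shift (j : Fin s) (b : Fin N) : Fin (m b) := ⟨j, j.2.trans_le (hm b).1⟩
  obtain ⟨ω, hω⟩ := exists_forall_le_card_filter_perm (fun v b a => G.Adj v (e ⟨b, a⟩))
    (fun j b => Equiv.addRight (shift j b)) (K := s + 1)
    (fun b => by simpa using mod_cast (hm b).2) (by positivity)
    (fun v => (hδ v).trans_eq (mod_cast (sum_card_filter_sigma_eq e _).symm))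
    (by simpa using hbig)
  let pick (j : Fin s) (b : Fin N) : V := e ⟨b, ω b + shift j b⟩
  have hpick : ∀ i j b b', pick i b = pick j b' → i = j ∧ b = b' := fun i j b b' h => by
    obtain ⟨rfl, h'⟩ := Sigma.mk.inj (e.injective (Subtype.ext h))
    exact ⟨Fin.ext (Fin.mk.inj (add_left_cancel (eq_of_heq h'))), rfl⟩
  have hinj : ∀ j, (pick j).Injective := fun j b b' h => (hpick j j b b' h).2
  refine ⟨fun j => univ.image (pick j), fun j => ?_, fun j => ?_, fun i j hij => ?_,
    fun v j => ?_⟩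
  · exact image_subset_iff.2 fun b _ => (e _).2
  · rw [card_image_of_injective _ (hinj j), card_univ, Fintype.card_fin]
  · refine disjoint_left.2 fun w hi hj => ?_
    obtain ⟨b, _, rfl⟩ := mem_image.1 hi
    obtain ⟨b', _, h⟩ := mem_image.1 hj
    exact hij (hpick j i b' b h).1.symm
  · rw [filter_image, card_image_of_injective _ (hinj j)]
    exact hω v j

end Partition

section Expansion

open Finset

variable {V : Type*}

/-- Every two sets of at least `M` vertices are joined by an edge. -/
def SetsJoined (G : SimpleGraph V) (M : ℕ) : Prop :=
  ∀ S T : Finset V, M ≤ #S → M ≤ #T → ∃ u ∈ S, ∃ w ∈ T, G.Adj u w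

/-- The vertices of `Q` adjacent to some vertex of `U`. -/
def nbrsIn (G : SimpleGraph V) [DecidableRel G.Adj] (Q U : Finset V) : Finset V :=
  {w ∈ Q | ∃ u ∈ U, G.Adj u w}

variable {G : SimpleGraph V} [DecidableRel G.Adj]

@[simp] lemma mem_nbrsIn {Q U : Finset V} {w : V} :
    w ∈ nbrsIn G Q U ↔ w ∈ Q ∧ ∃ u ∈ U, G.Adj u w := by simp [nbrsIn]

lemma nbrsIn_subset (Q U : Finset V) : nbrsIn G Q U ⊆ Q := filter_subset _ _

lemma Jumbled.exists_adj {p lam : ℝ} (hJ : Jumbled G p lam) {S T : Finset V}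
    (h : lam * √(#S * #T) < p * #S * #T) : ∃ u ∈ S, ∃ w ∈ T, G.Adj u w := by
  have hpos : 0 < #(G.interedges S T) := by
    have := (abs_le.1 (hJ S T)).1
    exact_mod_cast show (0 : ℝ) < #(G.interedges S T) by linarith
  obtain ⟨⟨u, w⟩, huw⟩ := card_pos.1 hpos
  obtain ⟨hu, hw, hadj⟩ := G.mem_interedges_iff.1 huw
  exact ⟨u, hu, w, hw, hadj⟩

lemma Jumbled.setsJoined {p lam : ℝ} (hJ : Jumbled G p lam) (hp : 0 < p) (hlam : 0 ≤ lam) {M : ℕ}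
    (h : lam < p * M) : SetsJoined G M := by
  intro S T hS hT
  have hM : (0 : ℝ) < M := pos_of_mul_pos_right (hlam.trans_lt h) hp.le
  set r := √((#S : ℝ) * #T)
  have hrr : r * r = #S * #T := Real.mul_self_sqrt (by positivity)
  have hMr : M ≤ r := Real.le_sqrt_of_sq_le <| by
    rw [sq]
    gcongr
  refine hJ.exists_adj ?_
  calc lam * r < p * M * r := by
        have := hM.trans_le hMr
        gcongr
    _ ≤ p * r * r := by gcongr
    _ = p * #S * #T := by rw [mul_assoc, hrr, mul_assoc]

-- Otherwise too few vertices of `X` would receive all the edges leaving `S`.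
lemma Jumbled.mul_card_le_card_nbrsIn {p lam δ : ℝ} (hJ : Jumbled G p lam) (hp : 0 ≤ p)
    (hlam : 0 ≤ lam) {K : ℕ} {S X : Finset V} (hδ : ∀ u ∈ S, δ ≤ #{w ∈ X | G.Adj u w})
    (h : p * (K * #S) + lam * √K < δ) : K * #S ≤ #(nbrsIn G X S) := by
  by_contra! hcon
  set T := nbrsIn G X S
  have hlow : δ * #S ≤ #(G.interedges S T) := by
    rw [mul_comm, ← nsmul_eq_mul, card_interedges_eq_sum, Nat.cast_sum]
    refine card_nsmul_le_sum _ _ _ fun u hu => (hδ u hu).trans ?_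
    exact_mod_cast card_le_card fun w hw => by
      obtain ⟨hwX, hadj⟩ := mem_filter.1 hw
      exact mem_filter.2 ⟨mem_nbrsIn.2 ⟨hwX, u, hu, hadj⟩, hadj⟩
  have hS : (0 : ℝ) < #S := by
    exact_mod_cast Nat.pos_of_mul_pos_left (Nat.zero_lt_of_lt hcon)
  have hT : (#T : ℝ) ≤ K * #S := by exact_mod_cast hcon.le
  have hsqrt : √((#S : ℝ) * #T) ≤ √K * #S := by
    refine (Real.sqrt_le_sqrt (by gcongr)).trans_eq
      (b := √(#S * (K * #S) : ℝ)) ?_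
    rw [mul_left_comm, Real.sqrt_mul (by positivity), Real.sqrt_mul_self hS.le]
  have hup : (#(G.interedges S T) : ℝ) ≤ (p * (K * #S) + lam * √K) * #S :=
    calc (#(G.interedges S T) : ℝ) ≤ p * #S * #T + lam * √(#S * #T) := by
          linarith [(abs_le.1 (hJ S T)).2]
      _ ≤ p * #S * (K * #S) + lam * (√K * #S) := by gcongr
      _ = _ := by ring
  exact (hlow.trans hup).not_gt (by gcongr)

end Expansion

section Linked

open Finset

variable {V : Type*} {G : SimpleGraph V} {ι κ : Type*}

/-- Walks of length `L` from `x i` to `y i`, for all `i`, that together visit all of `A`. When `A`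
has as many vertices as walks of this length can visit, they are disjoint paths. -/
def Linked (G : SimpleGraph V) (A : Finset V) (L : ℕ) (x y : ι → V) : Prop :=
  ∃ w : ∀ i, G.Walk (x i) (y i), (∀ i, (w i).length = L) ∧ ∀ v ∈ A, ∃ i, v ∈ (w i).support

lemma Linked.trans [DecidableEq V] {A B : Finset V} {L L' : ℕ} {x y z : ι → V}
    (h : Linked G A L x y) (h' : Linked G B L' y z) : Linked G (A ∪ B) (L + L') x z := by
  obtain ⟨w, hw, hA⟩ := h
  obtain ⟨w', hw', hB⟩ := h'
  refine ⟨fun i => (w i).append (w' i), fun i => by rw [Walk.length_append, hw, hw'], ?_⟩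
  intro v hv
  simp only [Walk.mem_support_append_iff]
  rcases mem_union.1 hv with hv | hv
  · exact (hA v hv).imp fun i => Or.inl
  · exact (hB v hv).imp fun i => Or.inr

lemma Linked.comp {A : Finset V} {L : ℕ} {x y : ι → V} (h : Linked G A L x y) {f : κ → ι}
    (hf : f.Surjective) : Linked G A L (x ∘ f) (y ∘ f) := by
  obtain ⟨w, hw, hA⟩ := h
  exact ⟨fun k => w (f k), fun k => hw _, fun v hv => hf.exists.1 (hA v hv)⟩

lemma Linked.mono {A B : Finset V} {L : ℕ} {x y : ι → V} (h : Linked G A L x y) (hB : B ⊆ A) :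
    Linked G B L x y := by
  obtain ⟨w, hw, hA⟩ := h
  exact ⟨w, hw, fun v hv => hA v (hB hv)⟩

lemma Linked.refl (x : ι → V) : Linked G ∅ 0 x x :=
  ⟨fun _ => Walk.nil, fun _ => rfl, fun v hv => absurd hv (notMem_empty v)⟩

end Linked

section Matching

open Finset

variable {V : Type*} {G : SimpleGraph V} [DecidableRel G.Adj]

-- Small sets expand; if a large `S` did not, then `B \ nbrsIn G B S`, which has no edges to `S`,
-- would be small and expand into `A \ S`.
lemma card_le_card_nbrsIn_of_setsJoined {A B S : Finset V} (hAB : #A = #B) (hS : S ⊆ A) {N : ℕ}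
    (hA : ∀ S ⊆ A, #S ≤ N → #S ≤ #(nbrsIn G B S)) (hB : ∀ T ⊆ B, #T ≤ N → #T ≤ #(nbrsIn G A T))
    (hjoin : SetsJoined G (N + 1)) : #S ≤ #(nbrsIn G B S) := by
  classical
  rcases le_or_gt #S N with hsmall | hlarge
  · exact hA S hS hsmall
  set T := B \ nbrsIn G B S
  have hno : ∀ u ∈ S, ∀ w ∈ T, ¬ G.Adj u w := fun u hu w hw hadj =>
    (mem_sdiff.1 hw).2 (mem_nbrsIn.2 ⟨(mem_sdiff.1 hw).1, u, hu, hadj⟩)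
  have hT : #T ≤ N := by
    by_contra! hlt
    obtain ⟨u, hu, w, hw, hadj⟩ := hjoin S T hlarge hlt
    exact hno u hu w hw hadj
  have hsub : nbrsIn G A T ⊆ A \ S := fun u hu => by
    obtain ⟨huA, w, hw, hadj⟩ := mem_nbrsIn.1 hu
    exact mem_sdiff.2 ⟨huA, fun huS => hno u huS w hw hadj.symm⟩
  have hle := (hB T sdiff_subset hT).trans (card_le_card hsub)
  have hTcard : #T + #(nbrsIn G B S) = #B := card_sdiff_add_card_eq_card (nbrsIn_subset _ _)
  have hScard := card_sdiff_add_card_eq_card hS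
  omega

lemma exists_linked_one_of_card_le_card_nbrsIn [DecidableEq V] {ι : Type*} [Fintype ι] {a : ι → V}
    (ha : a.Injective) {B : Finset V} (hB : #B = Fintype.card ι)
    (hall : ∀ S ⊆ univ.image a, #S ≤ #(nbrsIn G B S)) :
    ∃ a' : ι → V, a'.Injective ∧ univ.image a' = B ∧ Linked G B 1 a a' := by
  have hhall : ∀ s : Finset ι, #s ≤ #(s.biUnion fun i => {w ∈ B | G.Adj (a i) w}) := fun s => by
    have hs : s.biUnion (fun i => {w ∈ B | G.Adj (a i) w}) = nbrsIn G B (s.image a) := by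
      ext w
      simp only [mem_biUnion, mem_filter, mem_nbrsIn, exists_mem_image]
      tauto
    rw [hs, ← card_image_of_injective s ha]
    exact hall _ (image_subset_image (subset_univ _))
  obtain ⟨f, hf, hmem⟩ := (all_card_le_biUnion_card_iff_exists_injective _).1 hhall
  have himage : univ.image f = B :=
    eq_of_subset_of_card_le (image_subset_iff.2 fun i _ => (mem_filter.1 (hmem i)).1)
      (by rw [hB, card_image_of_injective _ hf, card_univ])
  have hmatched : ∀ v ∈ B, ∃ i, f i = v := by simp [← himage]
  refine ⟨f, hf, himage, fun i => (mem_filter.1 (hmem i)).2.toWalk, fun i => by simp, ?_⟩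
  rintro v hv
  obtain ⟨i, rfl⟩ := hmatched v hv
  exact ⟨i, Walk.end_mem_support _⟩

end Matching

section Extendable

open Finset

variable {V : Type*} [DecidableEq V] {G : SimpleGraph V} [DecidableRel G.Adj] {Q : Finset V}
  {D M : ℕ} {W : Finset V} {c : V → ℕ}

/-- The vertices `W` of the reservoir `Q` have been used, and every vertex set `U` of size at most
`2 * M` still has room in `Q` for `c u` private new neighbours of each `u ∈ U`. Unused vertices of
the reservoir have the full budget `D`. -/
structure Extendable (G : SimpleGraph V) [DecidableRel G.Adj] (Q : Finset V) (D M : ℕ)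
    (W : Finset V) (c : V → ℕ) : Prop where
  subset : W ⊆ Q
  le : ∀ z, c z ≤ D
  fresh : ∀ z ∈ Q, z ∉ W → c z = D
  expand : ∀ U : Finset V, #U ≤ 2 * M → ∑ u ∈ U, c u ≤ #(nbrsIn G Q U \ W)

/-- A vertex which is outside the reservoir or has already been used. -/
def Placed (Q W : Finset V) (z : V) : Prop := z ∈ W ∨ z ∉ Q

omit [DecidableEq V] in
lemma Placed.mono {W' : Finset V} {z : V} (h : Placed Q W z) (hW : W ⊆ W') : Placed Q W' z :=
  h.imp_left (@hW z)

omit [DecidableEq V] in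
lemma Placed.notMem {T : Finset V} {z : V} (h : Placed Q W z) (hTQ : T ⊆ Q) (hWT : Disjoint W T) :
    z ∉ T :=
  h.elim (fun hz => Finset.disjoint_left.1 hWT hz) fun hz hzT => hz (hTQ hzT)

lemma Extendable.sdiff (h : Extendable G Q D M W c) {R : Finset V} (hR : R ⊆ W) {par : V → V}
    (hpar : ∀ w ∈ R, G.Adj (par w) w) (hle : ∀ z, c z + #{w ∈ R | par w = z} ≤ D)
    (hfresh : ∀ z ∈ R, c z + #{w ∈ R | par w = z} = D) :
    Extendable G Q D M (W \ R) fun z => c z + #{w ∈ R | par w = z} where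
  subset := sdiff_subset.trans h.subset
  le := hle
  fresh z hzQ hz := by
    by_cases hzR : z ∈ R
    · exact hfresh z hzR
    · have := h.fresh z hzQ fun hzW => hz (mem_sdiff.2 ⟨hzW, hzR⟩)
      exact (hle z).antisymm (this.ge.trans (Nat.le_add_right _ _))
  expand U hU := by
    have hfiber : #{w ∈ R | par w ∈ U} = ∑ z ∈ U, #{w ∈ R | par w = z} := by
      refine (card_eq_sum_card_fiberwise fun w hw => (mem_filter.1 hw).2).trans
        (sum_congr rfl fun z hz => ?_)
      rw [filter_filter]
      exact congrArg card (filter_congr fun w _ => ⟨And.right, fun h => ⟨h ▸ hz, h⟩⟩)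
    have hsub : (nbrsIn G Q U \ W) ∪ {w ∈ R | par w ∈ U} ⊆ nbrsIn G Q U \ (W \ R) := by
      refine union_subset (sdiff_subset_sdiff le_rfl sdiff_subset) fun v hv => ?_
      obtain ⟨hvR, hvU⟩ := mem_filter.1 hv
      exact mem_sdiff.2 ⟨mem_nbrsIn.2 ⟨h.subset (hR hvR), par v, hvU, hpar v hvR⟩,
        fun h' => (mem_sdiff.1 h').2 hvR⟩
    have hdisj : Disjoint (nbrsIn G Q U \ W) {w ∈ R | par w ∈ U} :=
      disjoint_of_subset_right ((filter_subset _ _).trans hR) sdiff_disjoint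
    calc ∑ z ∈ U, (c z + #{w ∈ R | par w = z})
        ≤ #(nbrsIn G Q U \ W) + #{w ∈ R | par w ∈ U} := by
          rw [sum_add_distrib, hfiber]
          exact Nat.add_le_add_right (h.expand U hU) _
      _ ≤ #(nbrsIn G Q U \ (W \ R)) := by
          rw [← card_union_of_disjoint hdisj]
          exact card_le_card hsub

/-- The expansion condition of an extendable state holds with equality at `U`. -/
def Critical (G : SimpleGraph V) [DecidableRel G.Adj] (Q : Finset V) (M : ℕ) (W : Finset V)
    (c : V → ℕ) (U : Finset V) : Prop :=
  #U ≤ 2 * M ∧ #(nbrsIn G Q U \ W) = ∑ u ∈ U, c u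

lemma Extendable.card_lt_of_critical (h : Extendable G Q D M W c) (hjoin : SetsJoined G M)
    (hroom : #W + (2 * D + 1) * M ≤ #Q) {U : Finset V} (hU : Critical G Q M W c U) : #U < M := by
  by_contra! hMU
  have hmissed : #(Q \ nbrsIn G Q U) < M := by
    by_contra! hle
    obtain ⟨x, hx, w, hw, hadj⟩ := hjoin U _ hMU hle
    exact (mem_sdiff.1 hw).2 (mem_nbrsIn.2 ⟨(mem_sdiff.1 hw).1, x, hx, hadj⟩)
  have hbudget : ∑ z ∈ U, c z ≤ 2 * M * D :=
    (sum_le_card_nsmul _ _ _ fun z _ => h.le z).trans (Nat.mul_le_mul_right _ hU.1)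
  have hQ := card_sdiff_add_card_eq_card (nbrsIn_subset (G := G) Q U)
  have hW := le_card_sdiff W (nbrsIn G Q U)
  have heq := hU.2
  linarith [Nat.sub_le_iff_le_add.1 hW, hroom, show (2 * D + 1) * M = 2 * M * D + M by ring]

lemma nbrsIn_union (U U' : Finset V) : nbrsIn G Q (U ∪ U') = nbrsIn G Q U ∪ nbrsIn G Q U' := by
  ext w
  simp only [mem_nbrsIn, mem_union, or_and_right, exists_or, and_or_left]

-- The number of available neighbours is submodular in `U`.
lemma Extendable.critical_union (h : Extendable G Q D M W c) {U U' : Finset V}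
    (hU : Critical G Q M W c U) (hU' : Critical G Q M W c U') (hcard : #(U ∪ U') ≤ 2 * M) :
    Critical G Q M W c (U ∪ U') := by
  have hinter : nbrsIn G Q (U ∩ U') \ W ⊆ (nbrsIn G Q U \ W) ∩ (nbrsIn G Q U' \ W) := by
    intro w
    simp only [mem_sdiff, mem_nbrsIn, mem_inter]
    tauto
  have hsubmod := card_union_add_card_inter (nbrsIn G Q U \ W) (nbrsIn G Q U' \ W)
  rw [← union_sdiff_distrib, ← nbrsIn_union] at hsubmod
  have hsum := sum_union_inter (s₁ := U) (s₂ := U') (f := c)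
  have hle := h.expand _ hcard
  have hle' := (h.expand _ ((card_le_card inter_subset_left).trans hU.1)).trans
    (card_le_card hinter)
  have heq := hU.2
  have heq' := hU'.2
  exact ⟨hcard, by omega⟩

lemma Extendable.exists_critical_of_not_extendable (h : Extendable G Q D M W c) {u w : V}
    (hu : Placed Q W u) (hcu : 0 < c u) (hw : w ∈ Q)
    (hnot : ¬ Extendable G Q D M (insert w W) (Function.update c u (c u - 1))) :
    ∃ U, Critical G Q M W c U ∧ u ∉ U ∧ w ∈ nbrsIn G Q U := by
  have hle : ∀ z, Function.update c u (c u - 1) z ≤ c z :=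
    update_le_iff.2 ⟨Nat.sub_le _ _, fun _ _ => le_rfl⟩
  obtain ⟨U, hU, hlt⟩ : ∃ U : Finset V, #U ≤ 2 * M ∧
      #(nbrsIn G Q U \ insert w W) < ∑ z ∈ U, Function.update c u (c u - 1) z := by
    by_contra! hall
    refine hnot ⟨insert_subset hw h.subset, fun z => (hle z).trans (h.le z), ?_, hall⟩
    intro z hz hzW
    rw [mem_insert, not_or] at hzW
    rw [Function.update_of_ne (by rintro rfl; exact hu.elim hzW.2 fun h => h hz)]
    exact h.fresh z hz hzW.2
  rw [sdiff_insert] at hlt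
  have hexp := h.expand U hU
  have herase := pred_card_le_card_erase (s := nbrsIn G Q U \ W) (a := w)
  have huU : u ∉ U := fun huU => by
    have hsum := sum_update_of_mem huU c (c u - 1)
    have hsum' := add_sum_erase U c huU
    rw [sdiff_singleton_eq_erase] at hsum
    omega
  rw [sum_update_of_notMem huU] at hlt
  refine ⟨U, ⟨hU, by omega⟩, huU, ?_⟩
  by_contra hwU
  rw [erase_eq_of_notMem fun h => hwU (mem_sdiff.1 h).1] at hlt
  omega

/-- The Friedman–Pippenger step. -/
theorem Extendable.exists_leaf (h : Extendable G Q D M W c) (hjoin : SetsJoined G M)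
    (hroom : #W + (2 * D + 1) * M ≤ #Q) {u : V} (hu : Placed Q W u) (hcu : 0 < c u) :
    ∃ w ∈ Q, w ∉ W ∧ G.Adj u w ∧
      Extendable G Q D M (insert w W) (Function.update c u (c u - 1)) := by
  by_contra! hcon
  -- If no leaf works, the critical sets blocking the leaves have a critical union `U` absorbing
  -- all available neighbours of `u`, so the positive budget of `u` violates expansion.
  have hblocked : ∀ C ⊆ {w ∈ Q | G.Adj u w} \ W,
      ∃ U, Critical G Q M W c U ∧ u ∉ U ∧ C ⊆ nbrsIn G Q U := by
    intro C
    induction C using Finset.induction_on with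
    | empty => exact fun _ => ⟨∅, by simp [Critical, nbrsIn], notMem_empty _, empty_subset _⟩
    | insert w C _ ih =>
      intro hC
      obtain ⟨hw, hC⟩ := insert_subset_iff.1 hC
      simp only [mem_sdiff, mem_filter] at hw
      obtain ⟨U, hU, huU, hCU⟩ := ih hC
      obtain ⟨U', hU', huU', hwU'⟩ := h.exists_critical_of_not_extendable hu hcu hw.1.1
        (hcon w hw.1.1 hw.2 hw.1.2)
      have hlt := h.card_lt_of_critical hjoin hroom hU
      have hlt' := h.card_lt_of_critical hjoin hroom hU'
      refine ⟨U ∪ U', h.critical_union hU hU' ((card_union_le _ _).trans (by omega)),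
        by simp [huU, huU'], ?_⟩
      rw [nbrsIn_union]
      exact insert_subset (mem_union_right _ hwU') (hCU.trans subset_union_left)
  obtain ⟨U, hU, huU, hCU⟩ := hblocked _ Subset.rfl
  have hlt := h.card_lt_of_critical hjoin hroom hU
  have hexp := h.expand (insert u U) (by rw [card_insert_of_notMem huU]; omega)
  have hsub : nbrsIn G Q (insert u U) \ W ⊆ nbrsIn G Q U \ W := by
    refine fun v hv => mem_sdiff.2 ⟨?_, (mem_sdiff.1 hv).2⟩
    obtain ⟨⟨hvQ, x, hx, hadj⟩, hvW⟩ := (mem_sdiff.1 hv).imp_left mem_nbrsIn.1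
    rcases mem_insert.1 hx with rfl | hx
    · exact hCU (mem_sdiff.2 ⟨mem_filter.2 ⟨hvQ, hadj⟩, hvW⟩)
    · exact mem_nbrsIn.2 ⟨hvQ, x, hx, hadj⟩
  rw [sum_insert huU, ← hU.2] at hexp
  have := hexp.trans (card_le_card hsub)
  omega

end Extendable

section Tree

open Finset

variable {V : Type*} [DecidableEq V] {G : SimpleGraph V}

/-- The vertices `T`, each joined to its parent `par`, form a tree in `G` with root `p`, where the
root is not counted in `T` and `dep` is the distance to the root. -/
structure HangingTree (G : SimpleGraph V) (p : V) (T : Finset V) (par : V → V) (dep : V → ℕ) :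
    Prop where
  root_notMem : p ∉ T
  adj : ∀ w ∈ T, G.Adj (par w) w
  par_mem : ∀ w ∈ T, par w ∈ insert p T
  dep_root : dep p = 0
  dep_eq : ∀ w ∈ T, dep w = dep (par w) + 1

variable {p : V} {T N : Finset V} {par par' : V → V} {dep : V → ℕ}

lemma HangingTree.dep_pos (h : HangingTree G p T par dep) {w : V} (hw : w ∈ T) : 0 < dep w :=
  (h.dep_eq w hw).symm ▸ Nat.succ_pos _

lemma HangingTree.extend (h : HangingTree G p T par dep) (hp : p ∉ N) (hTN : Disjoint T N) {j : ℕ}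
    (hN : ∀ w ∈ N, par' w ∈ insert p T ∧ dep (par' w) = j ∧ G.Adj (par' w) w) :
    HangingTree G p (T ∪ N) (N.piecewise par' par) (N.piecewise (fun _ => j + 1) dep) where
  root_notMem := notMem_union.2 ⟨h.root_notMem, hp⟩
  adj w hw := by
    by_cases hwN : w ∈ N
    · simpa [hwN] using (hN w hwN).2.2
    · simpa [hwN] using h.adj w ((mem_union.1 hw).resolve_right hwN)
  par_mem w hw := by
    refine insert_subset_insert p subset_union_left ?_
    by_cases hwN : w ∈ N
    · simpa [hwN] using (hN w hwN).1
    · simpa [hwN] using h.par_mem w ((mem_union.1 hw).resolve_right hwN)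
  dep_root := by simpa [hp] using h.dep_root
  dep_eq w hw := by
    have hold : ∀ z ∈ insert p T, z ∉ N := fun z hz =>
      (mem_insert.1 hz).elim (fun hzp => hzp ▸ hp) fun hzT => Finset.disjoint_left.1 hTN hzT
    by_cases hwN : w ∈ N
    · simp [hwN, hold _ (hN w hwN).1, (hN w hwN).2.1]
    · have hwT := (mem_union.1 hw).resolve_right hwN
      simpa [hwN, hold _ (h.par_mem w hwT)] using h.dep_eq w hwT

lemma HangingTree.card_filter_par_eq_zero (h : HangingTree G p T par dep) {z : V}
    (hz : ∀ w ∈ T, dep w ≤ dep z) : #{w ∈ T | par w = z} = 0 := by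
  refine card_eq_zero.2 (filter_eq_empty_iff.2 ?_)
  rintro w hw rfl
  have := h.dep_eq w hw
  have := hz w hw
  omega

lemma HangingTree.card_filter_par_of_notMem (h : HangingTree G p T par dep) {z : V}
    (hz : z ∉ insert p T) : #{w ∈ T | par w = z} = 0 := by
  refine card_eq_zero.2 (filter_eq_empty_iff.2 ?_)
  rintro w hw rfl
  exact hz (h.par_mem w hw)

lemma HangingTree.filter_dep_eq_succ (h : HangingTree G p T par dep) {j : ℕ}
    (hdep : ∀ w ∈ T, dep w ≤ j) :
    {z ∈ insert p (T ∪ N) | N.piecewise (fun _ => j + 1) dep z = j + 1} = N := by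
  ext z
  by_cases hzN : z ∈ N
  · simp [hzN]
  · simp only [mem_filter, mem_insert, mem_union, hzN, or_false, not_false_eq_true,
      piecewise_eq_of_notMem, iff_false, not_and]
    rintro (rfl | hzT)
    · rw [h.dep_root]
      omega
    · have := hdep z hzT
      omega

/-- `K` consists of the vertices other than `p` of the branch of a rooted tree from `p` to `z`. -/
structure IsBranch (G : SimpleGraph V) (par : V → V) (p z : V) (K : Finset V) : Prop where
  mem : z ∈ insert p K
  par_mem : ∀ w ∈ K, par w ∈ insert p K
  injOn : Set.InjOn par K
  exists_walk : ∃ w : G.Walk p z, w.length = #K ∧ ∀ v ∈ K, v ∈ w.support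

lemma HangingTree.exists_isBranch (h : HangingTree G p T par dep) {z : V} (hz : z ∈ insert p T) :
    ∃ K ⊆ T, #K = dep z ∧ IsBranch G par p z K := by
  suffices ∀ j, ∀ z ∈ insert p T, dep z = j →
      ∃ K ⊆ T, #K = j ∧ (∀ v ∈ K, dep v ≤ j) ∧ Set.InjOn dep K ∧ z ∈ insert p K ∧
        (∀ w ∈ K, par w ∈ insert p K) ∧
        ∃ w : G.Walk p z, w.length = j ∧ ∀ v ∈ K, v ∈ w.support by
    obtain ⟨K, hKT, hcard, -, hinj, hzK, hpar, w, hw⟩ := this _ z hz rfl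
    refine ⟨K, hKT, hcard, hzK, hpar, fun u hu v hv huv => hinj hu hv ?_, w, hcard ▸ hw⟩
    rw [h.dep_eq u (hKT hu), h.dep_eq v (hKT hv), huv]
  clear hz z
  intro j
  induction j with
  | zero =>
    intro z hz hdep
    obtain rfl := (mem_insert.1 hz).resolve_right fun hzT => (h.dep_pos hzT).ne' hdep
    exact ⟨∅, by simp, by simp, by simp, by simp, by simp, by simp, Walk.nil, rfl, by simp⟩
  | succ j ih =>
    intro z hz hdep
    have hzT : z ∈ T := (mem_insert.1 hz).resolve_left <| by
      rintro rfl
      exact absurd (h.dep_root.symm.trans hdep) (Nat.succ_ne_zero j).symm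
    obtain ⟨K, hKT, hcard, hle, hinj, hparK, hpar, w, hw, hwK⟩ := ih (par z) (h.par_mem z hzT)
      (Nat.succ.inj ((h.dep_eq z hzT).symm.trans hdep))
    have hlt : ∀ v ∈ K, dep v ≠ dep z := fun v hv => by have := hle v hv; omega
    have hzK : z ∉ K := fun hzK => hlt z hzK rfl
    have hmono : insert p K ⊆ insert p (insert z K) := insert_subset_insert _ (subset_insert _ _)
    refine ⟨insert z K, insert_subset hzT hKT, by rw [card_insert_of_notMem hzK, hcard],
      forall_mem_insert .. |>.2 ⟨hdep.le, fun v hv => (hle v hv).trans j.le_succ⟩, ?_, by simp,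
      forall_mem_insert .. |>.2 ⟨hmono hparK, fun v hv => hmono (hpar v hv)⟩,
      w.concat (h.adj z hzT), by rw [Walk.length_concat, hw], ?_⟩
    · rw [coe_insert, Set.injOn_insert (mem_coe.not.2 hzK)]
      exact ⟨hinj, fun ⟨v, hv, hvz⟩ => hlt v hv hvz⟩
    · simp only [Walk.support_concat, List.mem_append,
        List.mem_singleton, forall_mem_insert, or_true, true_and]
      exact fun v hv => Or.inl (hwK v hv)

lemma IsBranch.card_filter_par_le {z : V} {K : Finset V} (h : IsBranch G par p z K) (u : V) :
    #{w ∈ K | par w = u} ≤ if u ∈ insert p K then 1 else 0 := by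
  split_ifs with hu
  · refine card_le_one.2 fun v hv w hw => ?_
    simp only [mem_filter] at hv hw
    exact h.injOn hv.1 hw.1 (hv.2.trans hw.2.symm)
  · refine (card_eq_zero.2 (filter_eq_empty_iff.2 ?_)).le
    rintro w hw rfl
    exact hu (h.par_mem w hw)

end Tree

section Growth

open Finset

variable {V : Type*} [DecidableEq V] {G : SimpleGraph V} [DecidableRel G.Adj] {Q : Finset V}
  {D M : ℕ} {W : Finset V} {c c' : V → ℕ}

-- The multiset `s` lists the prescribed parents of the new vertices.
lemma Extendable.exists_children (h : Extendable G Q D M W c) (hjoin : SetsJoined G M)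
    (s : Multiset V) (hs : ∀ u ∈ s, Placed Q W u ∧ s.count u ≤ c u)
    (hroom : #W + s.card + (2 * D + 1) * M ≤ #Q) :
    ∃ (T : Finset V) (par : V → V), Disjoint W T ∧ T.val.map par = s ∧
      (∀ w ∈ T, G.Adj (par w) w) ∧ Extendable G Q D M (W ∪ T) fun z => c z - s.count z := by
  induction s using Multiset.induction_on with
  | empty => exact ⟨∅, id, by simp, by simp, by simp, by simpa using h⟩
  | cons u s ih =>
    rw [Multiset.card_cons] at hroom
    obtain ⟨T, par, hWT, hpar, hadj, hext⟩ := ih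
      (fun v hv => (hs v (Multiset.mem_cons_of_mem hv)).imp_right
        ((Multiset.count_le_count_cons _ _ _).trans ·)) (by omega)
    obtain ⟨hu, hcu⟩ := hs u (Multiset.mem_cons_self u s)
    rw [Multiset.count_cons_self] at hcu
    have hT : #T = s.card := by rw [← hpar, Multiset.card_map, card_def]
    obtain ⟨a, -, haW, hua, hext'⟩ := hext.exists_leaf hjoin
      (by rw [card_union_of_disjoint hWT]; omega) (hu.mono subset_union_left) (by omega)
    obtain ⟨haW, haT⟩ := notMem_union.1 haW
    have hold : ∀ w ∈ T, Function.update par a u w = par w := fun w hw =>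
      Function.update_of_ne (ne_of_mem_of_not_mem hw haT) _ _
    refine ⟨insert a T, Function.update par a u, disjoint_insert_right.2 ⟨haW, hWT⟩, ?_, ?_, ?_⟩
    · rw [insert_val_of_notMem haT, Multiset.map_cons, Function.update_self,
        Multiset.map_congr rfl hold, hpar]
    · rw [forall_mem_insert, Function.update_self]
      exact ⟨hua, fun w hw => (hold w hw).symm ▸ hadj w hw⟩
    · rw [union_insert]
      convert hext' using 1
      ext z
      by_cases hz : z = u
      · rw [hz, Function.update_self, Multiset.count_cons_self, Nat.sub_add_eq]
      · rw [Function.update_of_ne hz, Multiset.count_cons_of_ne hz]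

lemma card_filter_piecewise_eq {T N : Finset V} (hTN : Disjoint T N) (f g : V → V) (z : V) :
    #{w ∈ T ∪ N | N.piecewise f g w = z} = #{w ∈ T | g w = z} + #{w ∈ N | f w = z} := by
  rw [filter_union, card_union_of_disjoint (disjoint_filter_filter hTN)]
  congr 2
  · exact filter_congr fun w hw => by
      rw [piecewise_eq_of_notMem _ _ _ (Finset.disjoint_left.1 hTN hw)]
  · exact filter_congr fun w hw => by rw [piecewise_eq_of_mem _ _ _ hw]

lemma Extendable.exists_two_children (h : Extendable G Q D M W c) (hjoin : SetsJoined G M)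
    {F : Finset V} (hF : ∀ u ∈ F, Placed Q W u ∧ 2 ≤ c u)
    (hroom : #W + 2 * #F + (2 * D + 1) * M ≤ #Q) :
    ∃ (N : Finset V) (par : V → V) (c' : V → ℕ), Disjoint W N ∧ #N = 2 * #F ∧
      (∀ w ∈ N, par w ∈ F ∧ G.Adj (par w) w) ∧ Extendable G Q D M (W ∪ N) c' ∧
      ∀ z, c' z + #{w ∈ N | par w = z} = c z := by
  have hcount : ∀ z, (2 • F.val).count z = if z ∈ F then 2 else 0 := fun z => by
    simp [Multiset.count_nsmul, Multiset.count_eq_of_nodup F.nodup]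
  have hcard : (2 • F.val).card = 2 * #F := by rw [Multiset.card_nsmul, card_def]
  obtain ⟨N, par, hWN, hpar, hadj, hext⟩ := h.exists_children hjoin (2 • F.val)
    (fun u hu => by
      have huF : u ∈ F := Multiset.mem_of_mem_nsmul hu
      simpa [hcount, huF] using hF u huF) (by rwa [hcard])
  refine ⟨N, par, _, hWN, by rw [← hcard, ← hpar, Multiset.card_map, card_def], fun w hw =>
    ⟨Multiset.mem_of_mem_nsmul (hpar ▸ Multiset.mem_map_of_mem par hw), hadj w hw⟩, hext,
    fun z => ?_⟩
  have hfiber : #{w ∈ N | par w = z} = (2 • F.val).count z := by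
    simp only [← hpar, Multiset.count_map, card_def, filter_val, eq_comm]
  rw [hfiber, Nat.sub_add_cancel]
  rw [hcount]
  split_ifs with hz
  exacts [(hF z hz).2, Nat.zero_le _]

lemma Extendable.exists_hangingTree (h : Extendable G Q D M W c) (hjoin : SetsJoined G M)
    (hD : 2 ≤ D) {p : V} (hp : Placed Q W p) (hcp : 2 ≤ c p) (j : ℕ)
    (hroom : #W + 2 ^ (j + 1) + (2 * D + 1) * M ≤ #Q) :
    ∃ (T : Finset V) (par : V → V) (dep : V → ℕ) (c' : V → ℕ), HangingTree G p T par dep ∧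
      Disjoint W T ∧ #T + 2 = 2 ^ (j + 1) ∧ (∀ w ∈ T, dep w ≤ j) ∧
      #{z ∈ insert p T | dep z = j} = 2 ^ j ∧ Extendable G Q D M (W ∪ T) c' ∧
      ∀ z, c' z + #{w ∈ T | par w = z} = c z := by
  induction j with
  | zero =>
    exact ⟨∅, id, fun _ => 0, c, ⟨by simp, by simp, by simp, rfl, by simp⟩, by simp, by simp,
      by simp, by simp, by simpa using h, by simp⟩
  | succ j ih =>
    have : 2 ^ (j + 1 + 1) = 2 ^ (j + 1) + 2 ^ (j + 1) := by ring
    have hpow' : 2 ^ (j + 1) = 2 * 2 ^ j := by ring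
    obtain ⟨T, par, dep, c', htree, hWT, hTcard, hdep, hleaves, hext, hc⟩ := ih (by omega)
    have hF : ∀ u ∈ {z ∈ insert p T | dep z = j}, Placed Q (W ∪ T) u ∧ 2 ≤ c' u := fun u hu => by
      obtain ⟨huT, hdepu⟩ := mem_filter.1 hu
      rw [← Nat.add_zero (c' u), ← htree.card_filter_par_eq_zero fun w hw => hdepu ▸ hdep w hw, hc]
      rcases mem_insert.1 huT with rfl | huT
      · exact ⟨hp.mono subset_union_left, hcp⟩
      · have huW := mem_union_right W huT
        exact ⟨Or.inl huW,
          (h.fresh u (hext.subset huW) (Finset.disjoint_right.1 hWT huT)).symm ▸ hD⟩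
    obtain ⟨N, parN, c'', hWN, hNcard, hN, hextN, hcN⟩ := hext.exists_two_children hjoin hF
      (by rw [card_union_of_disjoint hWT]; omega)
    rw [hleaves] at hNcard
    rw [union_assoc] at hextN
    have hTN : Disjoint T N := (disjoint_union_left.1 hWN).2
    have hWTN : Disjoint W (T ∪ N) := disjoint_union_right.2 ⟨hWT, (disjoint_union_left.1 hWN).1⟩
    have hpTN : p ∉ T ∪ N := hp.notMem (subset_union_right.trans hextN.subset) hWTN
    have hpN := (notMem_union.1 hpTN).2
    refine ⟨T ∪ N, N.piecewise parN par, N.piecewise (fun _ => j + 1) dep, c'',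
      htree.extend hpN hTN fun w hw => ?_, hWTN, by rw [card_union_of_disjoint hTN]; omega,
      fun w hw => ?_, ?_, hextN, fun z => ?_⟩
    · obtain ⟨hw, hadj⟩ := hN w hw
      exact ⟨(mem_filter.1 hw).1, (mem_filter.1 hw).2, hadj⟩
    · by_cases hwN : w ∈ N
      · simp [hwN]
      · simpa [hwN] using (hdep w ((mem_union.1 hw).resolve_right hwN)).trans j.le_succ
    · rw [htree.filter_dep_eq_succ hdep, hNcard, hpow']
    · rw [card_filter_piecewise_eq hTN, ← hc, ← hcN, add_assoc, add_comm (#_) (#_)]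

end Growth

section Connect

open Finset

variable {V : Type*} [DecidableEq V] {G : SimpleGraph V}

/-- The budgets drop from `c` to `c'` by at most one, and only on `S`. -/
def Spends (S : Finset V) (c c' : V → ℕ) : Prop := ∀ z, c z ≤ c' z + if z ∈ S then 1 else 0

variable {Q S S' : Finset V} {D M h : ℕ} {W : Finset V} {c c' c'' : V → ℕ}

lemma Spends.le_add_one (hS : Spends S c c') (z : V) : c z ≤ c' z + 1 :=
  (hS z).trans (by split_ifs <;> omega)

lemma Spends.le_of_notMem (hS : Spends S c c') {z : V} (hz : z ∉ S) : c z ≤ c' z := by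
  simpa [hz] using hS z

lemma Spends.trans (hS : Spends S c c') (hS' : Spends S' c' c'') (hdisj : Disjoint S S') :
    Spends (S ∪ S') c c'' := fun z => by
  have := hS z
  have := hS' z
  have : z ∈ S → z ∉ S' := fun hz => Finset.disjoint_left.1 hdisj hz
  simp only [mem_union]
  grind

lemma Spends.update {u : V} : Spends {u} c (Function.update c u (c u - 1)) := fun z => by
  by_cases hz : z = u
  · subst hz
    simp
    omega
  · simp [hz]

variable [DecidableRel G.Adj]

lemma Extendable.exists_prune (hext : Extendable G Q D M (W ∪ S) c') (hWS : Disjoint W S) {p z : V}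
    {par : V → V} {dep : V → ℕ} (htree : HangingTree G p S par dep) {K : Finset V} (hKS : K ⊆ S)
    (hK : IsBranch G par p z K) (hc : ∀ u, c' u + #{w ∈ S | par w = u} = c u)
    (hle : ∀ u, c u ≤ D) (hfresh : ∀ u ∈ S, c u = D) :
    ∃ c'', Extendable G Q D M (W ∪ K) c'' ∧ ∀ u, c'' u + #{w ∈ K | par w = u} = c u := by
  have hsplit : ∀ u, c' u + #{w ∈ S \ K | par w = u} + #{w ∈ K | par w = u} = c u := fun u => by
    rw [← hc, add_assoc, ← card_union_of_disjoint (disjoint_filter_filter sdiff_disjoint),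
      ← filter_union, sdiff_union_of_subset hKS]
  have hpruned := hext.sdiff (R := S \ K) (sdiff_subset.trans subset_union_right)
    (fun w hw => htree.adj w (mem_sdiff.1 hw).1)
    (fun u => (Nat.le_add_right _ _).trans ((hsplit u).trans_le (hle u))) fun u hu => by
      obtain ⟨huS, huK⟩ := mem_sdiff.1 hu
      have hbranch := hK.card_filter_par_le u
      rw [if_neg (by simp [huK, ne_of_mem_of_not_mem huS htree.root_notMem])] at hbranch
      have := hsplit u
      have := hfresh u huS
      omega
  refine ⟨_, ?_, hsplit⟩
  rwa [union_sdiff_distrib, Finset.sdiff_sdiff_eq_self hKS,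
    sdiff_eq_self_of_disjoint (hWS.mono_right sdiff_subset)] at hpruned

lemma Extendable.exists_prune_two {T₁ T₂ K₁ K₂ : Finset V} {c₁ c₂ : V → ℕ} {p q z₁ z₂ : V}
    {par₁ par₂ : V → V} {dep₁ dep₂ : V → ℕ} (hW : Extendable G Q D M W c)
    (hext₁ : Extendable G Q D M (W ∪ T₁) c₁) (hext₂ : Extendable G Q D M (W ∪ T₁ ∪ T₂) c₂)
    (hWT₁ : Disjoint W T₁) (hWT₂ : Disjoint (W ∪ T₁) T₂)
    (hT : Disjoint (insert p T₁) (insert q T₂)) (htree₁ : HangingTree G p T₁ par₁ dep₁)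
    (htree₂ : HangingTree G q T₂ par₂ dep₂) (hc₁ : ∀ u, c₁ u + #{w ∈ T₁ | par₁ w = u} = c u)
    (hc₂ : ∀ u, c₂ u + #{w ∈ T₂ | par₂ w = u} = c₁ u) (hKT₁ : K₁ ⊆ T₁) (hKT₂ : K₂ ⊆ T₂)
    (hK₁ : IsBranch G par₁ p z₁ K₁) (hK₂ : IsBranch G par₂ q z₂ K₂) :
    ∃ c', Extendable G Q D M (W ∪ (K₁ ∪ K₂)) c' ∧
      Spends (insert p (insert q (K₁ ∪ K₂))) c c' := by
  obtain ⟨c₃, hext₃, hc₃⟩ := hext₂.exists_prune hWT₂ htree₂ hKT₂ hK₂ hc₂ hext₁.le fun u hu =>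
    hext₁.fresh u (hext₂.subset (mem_union_right _ hu)) (Finset.disjoint_right.1 hWT₂ hu)
  rw [union_right_comm] at hext₃
  obtain ⟨c', hext, hc'⟩ := hext₃.exists_prune
    (disjoint_union_left.2 ⟨hWT₁, ((disjoint_union_left.1 hWT₂).2.mono_right hKT₂).symm⟩) htree₁
    hKT₁ hK₁ (fun u => rfl)
    (fun u => by
      have := hW.le u
      have := hc₁ u
      have := hc₃ u
      omega)
    fun u hu => by
      have hu₂ := Finset.disjoint_left.1 hT (mem_insert_of_mem hu)
      have hbranch := hK₂.card_filter_par_le u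
      rw [if_neg fun h => hu₂ (insert_subset_insert q hKT₂ h)] at hbranch
      have := hW.fresh u (hext₁.subset (mem_union_right _ hu)) (Finset.disjoint_right.1 hWT₁ hu)
      have := hc₁ u
      have := hc₃ u
      omega
  refine ⟨c', by rwa [union_comm K₁, ← union_assoc], ?_⟩
  have hspend₁ : Spends (insert p K₁) (fun u => c₃ u + #{w ∈ T₁ | par₁ w = u}) c' := fun u =>
    (hc' u).ge.trans (Nat.add_le_add_left (hK₁.card_filter_par_le u) _)
  have hspend₂ : Spends (insert q K₂) c fun u => c₃ u + #{w ∈ T₁ | par₁ w = u} := fun u => by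
    have := hK₂.card_filter_par_le u
    have := hc₁ u
    have := hc₃ u
    simp only
    omega
  convert hspend₂.trans hspend₁ (disjoint_of_subset_left (insert_subset_insert q hKT₂)
    (hT.symm.mono_right (insert_subset_insert p hKT₁))) using 1
  ext u
  simp only [mem_insert, mem_union]
  tauto

/-- The number of reservoir vertices that are kept free for growing trees of depth `h`. -/
def spareRoom (D M h : ℕ) : ℕ := 4 * 2 ^ h + (2 * D + 1) * M

-- Two trees are grown from `p` and `q` until they have enough leaves to be joined by an edge, and
-- everything but the path through that edge is given back.
lemma Extendable.exists_short_path (hW : Extendable G Q D M W c) (hjoin : SetsJoined G M)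
    (hD : 2 ≤ D) (hM : M ≤ 2 ^ h) (hroom : #W + spareRoom D M h ≤ #Q) {p q : V}
    (hp : Placed Q W p) (hq : Placed Q W q) (hpq : p ≠ q) (hcp : 2 ≤ c p) (hcq : 2 ≤ c q) :
    ∃ (K : Finset V) (c' : V → ℕ), Disjoint W K ∧ Extendable G Q D M (W ∪ K) c' ∧
      Spends (insert p (insert q K)) c c' ∧ #K = 2 * h ∧
      ∃ w : G.Walk p q, w.length = 2 * h + 1 ∧ ∀ v ∈ K, v ∈ w.support := by
  have : 2 ^ (h + 1) = 2 * 2 ^ h := by ring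
  rw [spareRoom] at hroom
  obtain ⟨T₁, par₁, dep₁, c₁, htree₁, hWT₁, hcard₁, -, hleaves₁, hext₁, hc₁⟩ :=
    hW.exists_hangingTree hjoin hD hp hcp h (by omega)
  have hqT₁ : q ∉ T₁ := hq.notMem (subset_union_right.trans hext₁.subset) hWT₁
  have hcq₁ := htree₁.card_filter_par_of_notMem (z := q) (by simp [hpq.symm, hqT₁])
  obtain ⟨T₂, par₂, dep₂, c₂, htree₂, hWT₂, -, -, hleaves₂, hext₂, hc₂⟩ :=
    hext₁.exists_hangingTree hjoin hD (hq.mono subset_union_left) (by have := hc₁ q; omega) h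
      (by rw [card_union_of_disjoint hWT₁]; omega)
  obtain ⟨z₁, hz₁, z₂, hz₂, hadj⟩ := hjoin _ _ (hM.trans hleaves₁.ge) (hM.trans hleaves₂.ge)
  obtain ⟨hz₁, hdep₁⟩ := mem_filter.1 hz₁
  obtain ⟨hz₂, hdep₂⟩ := mem_filter.1 hz₂
  obtain ⟨K₁, hKT₁, hKcard₁, hK₁⟩ := htree₁.exists_isBranch hz₁
  obtain ⟨K₂, hKT₂, hKcard₂, hK₂⟩ := htree₂.exists_isBranch hz₂
  have hpT₂ : p ∉ T₂ := (hp.mono subset_union_left).notMem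
    (subset_union_right.trans hext₂.subset) hWT₂
  have hT : Disjoint (insert p T₁) (insert q T₂) := by
    simpa [hpq.symm, hpT₂, hqT₁] using (disjoint_union_left.1 hWT₂).2
  obtain ⟨c', hext, hspend⟩ := hW.exists_prune_two hext₁ hext₂ hWT₁ hWT₂ hT htree₁ htree₂ hc₁ hc₂
    hKT₁ hKT₂ hK₁ hK₂
  obtain ⟨w₁, hw₁, hKw₁⟩ := hK₁.exists_walk
  obtain ⟨w₂, hw₂, hKw₂⟩ := hK₂.exists_walk
  refine ⟨K₁ ∪ K₂, c', (disjoint_union_right.2 ⟨hWT₁, (disjoint_union_left.1 hWT₂).1⟩).mono_right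
    (union_subset_union hKT₁ hKT₂), hext, hspend, ?_, w₁.append (w₂.reverse.cons hadj), ?_, ?_⟩
  · rw [card_union_of_disjoint (disjoint_of_subset_left hKT₁
      ((disjoint_union_left.1 hWT₂).2.mono_right hKT₂))]
    omega
  · rw [Walk.length_append, Walk.length_cons, Walk.length_reverse]
    omega
  · simp only [mem_union, Walk.mem_support_append_iff, Walk.support_cons, Walk.support_reverse,
      List.mem_cons, List.mem_reverse]
    exact fun v hv => hv.imp (hKw₁ v) fun hv => Or.inr (hKw₂ v hv)

lemma Extendable.placed_and_le_of_mem_insert (hW : Extendable G Q D M W c) {K : Finset V}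
    (hext : Extendable G Q D M (W ∪ K) c') (hWK : Disjoint W K) {p p' : V} (hp : Placed Q W p)
    {k : ℕ} (hcp : k ≤ c p) (hkD : k ≤ D) (hp' : p' ∈ insert p K) :
    Placed Q (W ∪ K) p' ∧ k ≤ c p' := by
  rcases mem_insert.1 hp' with rfl | hp'
  · exact ⟨hp.mono subset_union_left, hcp⟩
  · have hpW := mem_union_right W hp'
    exact ⟨Or.inl hpW, hkD.trans_eq
      (hW.fresh p' (hext.subset hpW) (Finset.disjoint_right.1 hWK hp')).symm⟩

lemma Extendable.exists_path_from (hW : Extendable G Q D M W c) (hjoin : SetsJoined G M)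
    (hD : 1 ≤ D) {p : V} (hp : Placed Q W p) (hcp : 1 ≤ c p) (j : ℕ)
    (hroom : #W + j + (2 * D + 1) * M ≤ #Q) :
    ∃ (K : Finset V) (c' : V → ℕ), Disjoint W K ∧ Extendable G Q D M (W ∪ K) c' ∧ #K = j ∧
      ∃ p' ∈ insert p K, Spends ((insert p K).erase p') c c' ∧
        ∃ w : G.Walk p p', w.length = j ∧ ∀ v ∈ K, v ∈ w.support := by
  induction j with
  | zero => exact ⟨∅, c, by simp, by simpa using hW, by simp, p, by simp,
      fun z => Nat.le_add_right _ _, Walk.nil, rfl, by simp⟩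
  | succ j ih =>
    obtain ⟨K, c', hWK, hext, hK, p', hp', hspend, w, hw, hKw⟩ := ih (by omega)
    obtain ⟨hpl', hcp'⟩ := hW.placed_and_le_of_mem_insert hext hWK hp hcp hD hp'
    obtain ⟨a, haQ, haW, hadj, hext'⟩ := hext.exists_leaf hjoin
      (by rw [card_union_of_disjoint hWK]; omega) hpl'
      (hcp'.trans (hspend.le_of_notMem (notMem_erase p' _)))
    obtain ⟨haW, haK⟩ := notMem_union.1 haW
    have hap : a ≠ p := fun h => hp.elim (fun hpW => haW (h ▸ hpW)) fun hpQ => hpQ (h ▸ haQ)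
    refine ⟨insert a K, _, disjoint_insert_right.2 ⟨haW, hWK⟩, by rwa [union_insert],
      by rw [card_insert_of_notMem haK, hK], a, by simp, ?_, w.concat hadj,
      by rw [Walk.length_concat, hw], ?_⟩
    · have hspend' := hspend.trans Spends.update (disjoint_singleton_right.2 (notMem_erase p' _))
      rwa [union_comm, ← insert_eq, insert_erase hp',
        ← erase_insert (a := a) (s := insert p K) (by simp [hap, haK]), insert_comm] at hspend'
    · simp only [Walk.support_concat, List.mem_append, List.mem_singleton, forall_mem_insert,
        or_true, true_and]
      exact fun v hv => Or.inl (hKw v hv)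

lemma Extendable.exists_path (hW : Extendable G Q D M W c) (hjoin : SetsJoined G M)
    (hD : 2 ≤ D) (hM : M ≤ 2 ^ h) {p q : V} (hp : Placed Q W p) (hq : Placed Q W q) (hpq : p ≠ q)
    (hcp : 2 ≤ c p) (hcq : 2 ≤ c q) {l : ℕ} (hl : 2 * h + 1 ≤ l)
    (hroom : #W + l + spareRoom D M h ≤ #Q) :
    ∃ (K : Finset V) (c' : V → ℕ), Disjoint W K ∧ Extendable G Q D M (W ∪ K) c' ∧
      Spends (insert p (insert q K)) c c' ∧ #K + 1 = l ∧
      ∃ w : G.Walk p q, w.length = l ∧ ∀ v ∈ K, v ∈ w.support := by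
  have hspare : (2 * D + 1) * M ≤ spareRoom D M h := Nat.le_add_left _ _
  obtain ⟨K, c', hWK, hext, hK, p', hp', hspend, w, hw, hKw⟩ :=
    hW.exists_path_from hjoin (by omega) hp (by omega) (l - (2 * h + 1)) (by omega)
  have hqK : q ∉ insert p K := by
    simpa [hpq.symm] using hq.notMem (subset_union_right.trans hext.subset) hWK
  obtain ⟨hpl', hcp'⟩ := hW.placed_and_le_of_mem_insert hext hWK hp hcp hD hp'
  obtain ⟨K', c'', hWK', hext', hspend', hK', w', hw', hKw'⟩ :=
    hext.exists_short_path hjoin hD hM (by rw [card_union_of_disjoint hWK]; omega) hpl'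
      (hq.mono subset_union_left) (ne_of_mem_of_not_mem hp' hqK)
      (hcp'.trans (hspend.le_of_notMem (notMem_erase p' _)))
      (hcq.trans (hspend.le_of_notMem fun h => hqK (mem_of_mem_erase h)))
  obtain ⟨hWK'', hKK'⟩ := disjoint_union_left.1 hWK'
  have hpK' := (hp.mono subset_union_left).notMem (subset_union_right.trans hext'.subset) hWK'
  refine ⟨K ∪ K', c'', disjoint_union_right.2 ⟨hWK, hWK''⟩, by rwa [← union_assoc], ?_,
    by rw [card_union_of_disjoint hKK']; omega, w.append w', by rw [Walk.length_append]; omega,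
    ?_⟩
  · convert hspend.trans hspend' ?_ using 1
    · rw [union_insert p', ← insert_union p', insert_erase hp', union_insert, insert_union,
        insert_comm]
    · simp only [disjoint_insert_right, notMem_erase, not_false_eq_true, true_and]
      exact ⟨fun h => hqK (mem_of_mem_erase h),
        disjoint_of_subset_left (erase_subset _ _) (disjoint_insert_left.2 ⟨hpK', hKK'⟩)⟩
  · simp only [mem_union, Walk.mem_support_append_iff]
    exact fun v hv => hv.imp (hKw v) (hKw' v)

lemma Extendable.exists_paths_on {ι : Type*} (hW : Extendable G Q D M W c)
    (hjoin : SetsJoined G M) (hD : 2 ≤ D) (hM : M ≤ 2 ^ h) {p q : ι → V}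
    (hpq : ∀ i j, p i ≠ q j) (hpi : p.Injective) (hqi : q.Injective)
    (hp : ∀ i, Placed Q W (p i)) (hq : ∀ i, Placed Q W (q i)) (hcp : ∀ i, 2 ≤ c (p i))
    (hcq : ∀ i, 2 ≤ c (q i)) {l : ι → ℕ} (hl : ∀ i, 2 * h + 1 ≤ l i) (I : Finset ι)
    (hroom : #W + ∑ i ∈ I, l i + spareRoom D M h ≤ #Q) :
    ∃ (K : Finset V) (c' : V → ℕ), Disjoint W K ∧ Extendable G Q D M (W ∪ K) c' ∧
      Spends (I.image p ∪ I.image q ∪ K) c c' ∧ #K + #I = ∑ i ∈ I, l i ∧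
      ∃ Kf : ι → Finset V, K = I.biUnion Kf ∧
        ∀ i ∈ I, ∃ w : G.Walk (p i) (q i), w.length = l i ∧ ∀ v ∈ Kf i, v ∈ w.support := by
  classical
  induction I using Finset.induction_on with
  | empty => exact ⟨∅, c, by simp, by simpa using hW, fun z => Nat.le_add_right _ _, by simp,
      fun _ => ∅, by simp, by simp⟩
  | insert a I ha ih =>
    rw [sum_insert ha] at hroom ⊢
    obtain ⟨K, c', hWK, hext, hspend, hK, Kf, hKf, hw⟩ := ih (by omega)
    have hnotMem := fun z hz => Placed.notMem (z := z) hz (subset_union_right.trans hext.subset) hWK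
    have hpa : p a ∉ I.image p ∪ I.image q ∪ K := by
      simp [hnotMem _ (hp a), hpi.eq_iff, ha, (hpq _ _).symm]
    have hqa : q a ∉ I.image p ∪ I.image q ∪ K := by
      simp [hnotMem _ (hq a), hqi.eq_iff, ha, hpq]
    obtain ⟨K', c'', hWK', hext', hspend', hK', w', hw', hKw'⟩ :=
      hext.exists_path hjoin hD hM ((hp a).mono subset_union_left) ((hq a).mono subset_union_left)
        (hpq a a) ((hcp a).trans (hspend.le_of_notMem hpa))
        ((hcq a).trans (hspend.le_of_notMem hqa)) (hl a)
        (by rw [card_union_of_disjoint hWK]; omega)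
    have hnotMem' := fun z hz => Placed.notMem (z := z) (Placed.mono hz subset_union_left)
      (subset_union_right.trans hext'.subset) hWK'
    obtain ⟨hWK'', hKK'⟩ := disjoint_union_left.1 hWK'
    refine ⟨K ∪ K', c'', disjoint_union_right.2 ⟨hWK, hWK''⟩, by rwa [← union_assoc], ?_,
      by rw [card_union_of_disjoint hKK', card_insert_of_notMem ha]; omega,
      Function.update Kf a K', ?_, ?_⟩
    · convert hspend.trans hspend' ?_ using 1
      · ext v
        simp only [image_insert, mem_union, mem_insert]
        tauto
      · rw [disjoint_insert_right, disjoint_insert_right]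
        exact ⟨hpa, hqa, disjoint_union_left.2 ⟨disjoint_union_left.2
          ⟨Finset.disjoint_left.2 (forall_mem_image.2 fun i _ => hnotMem' _ (hp i)),
            Finset.disjoint_left.2 (forall_mem_image.2 fun i _ => hnotMem' _ (hq i))⟩, hKK'⟩⟩
    · have hold : ∀ i ∈ I, Function.update Kf a K' i = Kf i := fun i hi =>
        Function.update_of_ne (ne_of_mem_of_not_mem hi ha) _ _
      rw [biUnion_insert, Function.update_self, union_comm, hKf, biUnion_congr rfl hold]
    · refine forall_mem_insert .. |>.2 ⟨⟨w', hw', by simpa using hKw'⟩, fun i hi => ?_⟩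
      rw [Function.update_of_ne (ne_of_mem_of_not_mem hi ha)]
      exact hw i hi

lemma Extendable.exists_paths {ι : Type*} [Fintype ι] (hW : Extendable G Q D M W c)
    (hjoin : SetsJoined G M) (hD : 2 ≤ D) (hM : M ≤ 2 ^ h) {p q : ι → V}
    (hpq : ∀ i j, p i ≠ q j) (hpi : p.Injective) (hqi : q.Injective)
    (hp : ∀ i, Placed Q W (p i)) (hq : ∀ i, Placed Q W (q i)) (hcp : ∀ i, 2 ≤ c (p i))
    (hcq : ∀ i, 2 ≤ c (q i)) {l : ι → ℕ} (hl : ∀ i, 2 * h + 1 ≤ l i)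
    (hroom : #W + ∑ i, l i + spareRoom D M h ≤ #Q) :
    ∃ (K : Finset V) (c' : V → ℕ), Disjoint W K ∧ Extendable G Q D M (W ∪ K) c' ∧
      Spends (univ.image p ∪ univ.image q ∪ K) c c' ∧ #K + Fintype.card ι = ∑ i, l i ∧
      ∃ w : ∀ i, G.Walk (p i) (q i), (∀ i, (w i).length = l i) ∧
        ∀ v ∈ K, ∃ i, v ∈ (w i).support := by
  obtain ⟨K, c', hWK, hext, hspend, hK, Kf, hKf, hw⟩ :=
    hW.exists_paths_on hjoin hD hM hpq hpi hqi hp hq hcp hcq hl univ hroom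
  choose w hlen hKw using fun i => hw i (mem_univ i)
  refine ⟨K, c', hWK, hext, hspend, hK, w, hlen, fun v hv => ?_⟩
  rw [hKf, mem_biUnion] at hv
  exact hv.imp fun i hi => hKw i v hi.2

end Connect

section Switch

open Finset

variable {V : Type*} {G : SimpleGraph V}

lemma isPath_and_support_subset_of_card [DecidableEq V] {p q : V} {w : G.Walk p q} {K : Finset V}
    (hK : ∀ v ∈ K, v ∈ w.support) (hl : w.length = #K + 1) (hp : p ∉ K) (hq : q ∉ K)
    (hpq : p ≠ q) : w.IsPath ∧ ∀ v ∈ w.support, v ∈ insert p (insert q K) := by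
  have hcard : #(insert p (insert q K)) = w.support.length := by
    rw [card_insert_of_notMem (by simp [hp, hpq]), card_insert_of_notMem hq, w.length_support, hl]
  have hsub : insert p (insert q K) ⊆ w.support.toFinset := by
    simp only [insert_subset_iff, List.mem_toFinset, w.start_mem_support, w.end_mem_support,
      true_and]
    exact fun v hv => List.mem_toFinset.2 (hK v hv)
  have heq := eq_of_subset_of_card_le hsub (hcard ▸ w.support.toFinset_card_le)
  refine ⟨(Walk.isPath_def w).2 ?_, fun v hv => heq ▸ List.mem_toFinset.2 hv⟩
  exact Multiset.toFinset_card_eq_card_iff_nodup.1 ((congrArg card heq.symm).trans hcard)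

lemma exists_zigzag (A : Bool → ℕ → V) {x : V} {s k : ℕ} (hx : ∀ b, G.Adj x (A b 0))
    (hA : ∀ b, ∀ i < k, G.Adj (A b i) (A b (i + 1))) (R : ∀ i < k, G.Walk (A true i) (A false i))
    (hR : ∀ i hi, (R i hi).length = s) {i : ℕ} (hi : i ≤ k) (b : Bool) :
    ∃ w : G.Walk x (A b i), w.length = i * (s + 1) + 1 ∧
      ∀ j hj, j < i → ∀ v ∈ (R j hj).support, v ∈ w.support := by
  induction i generalizing b with
  | zero => exact ⟨(hx b).toWalk, by simp, by simp⟩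
  | succ i ih =>
    obtain ⟨w, hw, hRw⟩ := ih (by omega) (!b)
    obtain ⟨r, hr, hRr⟩ : ∃ r : G.Walk (A (!b) i) (A b i), r.length = s ∧
        ∀ v ∈ (R i hi).support, v ∈ r.support := by
      cases b
      · exact ⟨R i hi, hR i hi, fun v hv => hv⟩
      · exact ⟨(R i hi).reverse, by rw [Walk.length_reverse, hR], by simp⟩
    refine ⟨(w.append r).concat (hA b i hi), ?_, fun j hj hji v hv => ?_⟩
    · rw [Walk.length_concat, Walk.length_append, hw, hr]
      ring
    · rw [Walk.support_concat, List.mem_append, Walk.mem_support_append_iff]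
      rcases Nat.lt_succ_iff_lt_or_eq.1 hji with hlt | rfl
      · exact Or.inl (Or.inl (hRw j hj hlt v hv))
      · exact Or.inl (Or.inr (hRr v hv))

/-- A ladder with sides `A true 0, …, A true k` and `A false 0, …, A false k`, whose bottom ends are
both joined to `p` and whose top ends are both joined to `m`. Its rungs are walks of length `s`
between the vertices of the sides below the top. Every vertex of `K` lies on a rung or is `m` or
one of the two top ends. -/
structure IsLadder (G : SimpleGraph V) (K : Finset V) (s k : ℕ) (p m : V) (A : Bool → ℕ → V) :
    Prop where
  adj_bottom : ∀ b, G.Adj p (A b 0)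
  adj_succ : ∀ b, ∀ i < k, G.Adj (A b i) (A b (i + 1))
  adj_top : ∀ b, G.Adj m (A b k)
  exists_rungs : ∃ R : ∀ i < k, G.Walk (A true i) (A false i), (∀ i hi, (R i hi).length = s) ∧
    ∀ v ∈ K, (∃ i hi, v ∈ (R i hi).support) ∨ v = m ∨ ∃ b, v = A b k

-- The walk from `x false` zigzags up the ladder and leaves it on whichever side is wanted; the
-- other walk reaches the other side through `m`.
lemma IsLadder.linked [DecidableEq V] {x : Bool → V} {m : V} {s k : ℕ} {A : Bool → ℕ → V}
    {K K' : Finset V} (h : IsLadder G K s k (x false) m A) (t : G.Walk (x true) m)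
    (ht : t.length = k * (s + 1)) (hK' : ∀ v ∈ K', v ∈ t.support) (σ : Equiv.Perm Bool) :
    Linked G (K ∪ K') (k * (s + 1) + 1) x ((fun b => A b k) ∘ σ) := by
  obtain ⟨R, hR, hK⟩ := h.exists_rungs
  obtain ⟨w, hw, hRw⟩ := exists_zigzag A h.adj_bottom h.adj_succ R hR le_rfl (σ false)
  refine ⟨fun b => match b with
    | false => w
    | true => t.concat (h.adj_top (σ true)), ?_, fun v hv => ?_⟩
  · rintro (_ | _)
    · exact hw
    · rw [Walk.length_concat, ht]
  · have hsupp : ∀ v ∈ t.support, v ∈ (t.concat (h.adj_top (σ true))).support := fun v hv => by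
      rw [Walk.support_concat]
      exact List.mem_append_left _ hv
    rcases mem_union.1 hv with hv | hv
    · rcases hK v hv with ⟨j, hj, hv⟩ | rfl | ⟨b, rfl⟩
      · exact ⟨false, hRw j hj hj v hv⟩
      · exact ⟨true, hsupp _ t.end_mem_support⟩
      · obtain ⟨b, rfl⟩ := σ.surjective b
        exact ⟨b, by cases b <;> exact Walk.end_mem_support _⟩
    · exact ⟨true, hsupp v (hK' v hv)⟩

lemma isLadder_of_cycle [DecidableEq V] {h : ℕ} {p : V} {u : ℕ → V} (h0 : G.Adj p (u 0))
    (hu : ∀ i < 2 * h + 3, G.Adj (u i) (u (i + 1))) (hend : u (2 * h + 3) = p)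
    {r : ∀ j : Fin h, G.Walk (u (2 * h + 2 - j)) (u j)} (hr : ∀ j, (r j).length = 2 * h + 1)
    {K : Finset V} (hK : ∀ v ∈ K, ∃ j, v ∈ (r j).support) :
    IsLadder G ((range (2 * h + 3)).image u ∪ K) (2 * h + 1) h p (u (h + 1))
      fun b i => if b then u (2 * h + 2 - i) else u i := by
  have hprev : ∀ i < h + 2, G.Adj (u (2 * h + 3 - i)) (u (2 * h + 2 - i)) := fun i hi => by
    have := hu (2 * h + 2 - i) (by omega)
    rw [show 2 * h + 2 - i + 1 = 2 * h + 3 - i by omega] at this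
    exact this.symm
  refine ⟨?_, ?_, ?_, fun j hj => r ⟨j, hj⟩, fun j hj => hr _, fun v hv => ?_⟩
  · rintro (_ | _)
    · exact h0
    · simpa [hend] using hprev 0 (by omega)
  · rintro (_ | _) i hi
    · exact hu i (by omega)
    · simpa [show 2 * h + 3 - (i + 1) = 2 * h + 2 - i by omega,
        show 2 * h + 2 - (i + 1) = 2 * h + 1 - i by omega] using hprev (i + 1) (by omega)
  · rintro (_ | _)
    · exact (hu h (by omega)).symm
    · simpa [show 2 * h + 2 - h = h + 2 by omega] using hu (h + 1) (by omega)
  · rcases mem_union.1 hv with hv | hv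
    · obtain ⟨i, hi, rfl⟩ := mem_image.1 hv
      rw [mem_range] at hi
      rcases lt_trichotomy i (h + 1) with hlt | rfl | hgt
      · rcases Nat.lt_succ_iff_lt_or_eq.1 hlt with hlt | rfl
        · exact Or.inl ⟨i, hlt, Walk.end_mem_support _⟩
        · exact Or.inr (Or.inr ⟨false, rfl⟩)
      · exact Or.inr (Or.inl rfl)
      · obtain ⟨j, rfl⟩ : ∃ j, i = 2 * h + 2 - j := ⟨2 * h + 2 - i, by omega⟩
        rcases (show j < h ∨ j = h ∨ h < j by omega) with hlt | rfl | hlt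
        · exact Or.inl ⟨j, hlt, Walk.start_mem_support _⟩
        · exact Or.inr (Or.inr ⟨true, rfl⟩)
        · omega
    · obtain ⟨j, hj⟩ := hK v hv
      exact Or.inl ⟨j, j.2, hj⟩

variable [DecidableEq V] [DecidableRel G.Adj] {Q W : Finset V} {D M h : ℕ} {c : V → ℕ}

lemma Extendable.exists_cycle (hW : Extendable G Q D M W c) (hjoin : SetsJoined G M)
    (hD : 3 ≤ D) (hM : M ≤ 2 ^ h) {p : V} (hp : Placed Q W p) (hcp : 3 ≤ c p) {l : ℕ}
    (hl : 2 * h + 1 ≤ l) (hroom : #W + l + 1 + spareRoom D M h ≤ #Q) :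
    ∃ (u : ℕ → V) (c' : V → ℕ), Set.InjOn u (range l) ∧ Disjoint W ((range l).image u) ∧
      Extendable G Q D M (W ∪ (range l).image u) c' ∧ (∀ i < l, D ≤ c' (u i) + 1) ∧
      (∀ z ∉ (range l).image u, z ≠ p → c z ≤ c' z) ∧
      G.Adj p (u 0) ∧ (∀ i < l, G.Adj (u i) (u (i + 1))) ∧ u l = p := by
  have : (2 * D + 1) * M ≤ spareRoom D M h := Nat.le_add_left _ _
  obtain ⟨a, haQ, haW, hadj, hexta⟩ := hW.exists_leaf hjoin (by omega) hp (by omega)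
  have hap : a ≠ p := hadj.ne'
  obtain ⟨K, c', hWK, hext, hspend, hK, w, hw, hKw⟩ :=
    hexta.exists_path hjoin (by omega) hM (Or.inl (mem_insert_self _ _))
      (hp.mono (subset_insert _ _)) hap
      (by rw [Function.update_of_ne hap, hW.fresh a haQ haW]; omega)
      (by rw [Function.update_self]; omega) hl (by rw [card_insert_of_notMem haW]; omega)
  have hpK : p ∉ K := (hp.mono (subset_insert a W)).notMem
    (subset_union_right.trans hext.subset) hWK
  obtain ⟨haK, hWK⟩ := disjoint_insert_left.1 hWK
  obtain ⟨hpath, hsupp⟩ := isPath_and_support_subset_of_card hKw (by omega) haK hpK hap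
  have hinj : Set.InjOn w.getVert (Set.Iic l) := hw ▸ hpath.getVert_injOn
  have hend : w.getVert l = p := hw ▸ w.getVert_length
  have himage : (range l).image w.getVert = insert a K := by
    refine eq_of_subset_of_card_le (image_subset_iff.2 fun i hi => ?_) ?_
    · have hne : w.getVert i ≠ p := fun h => (mem_range.1 hi).ne
        (hinj (mem_range.1 hi).le (Set.mem_Iic.2 le_rfl) (h.trans hend.symm))
      simpa [hne] using hsupp _ (w.getVert_mem_support i)
    · rw [card_insert_of_notMem haK, card_image_of_injOn fun i hi j hj => hinj
        (mem_range.1 hi).le (mem_range.1 hj).le, card_range, hK]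
  refine ⟨w.getVert, c', fun i hi j hj => hinj (mem_range.1 hi).le (mem_range.1 hj).le,
    himage ▸ disjoint_insert_right.2 ⟨haW, hWK⟩,
    by rwa [himage, union_insert, ← insert_union], fun i hi => ?_, fun z hz hzp => ?_,
    by rwa [w.getVert_zero], fun i hi => w.adj_getVert_succ (hw ▸ hi), hend⟩
  · have hi' := himage ▸ mem_image_of_mem w.getVert (mem_range.2 hi)
    have hspend_i := hspend.le_add_one (w.getVert i)
    have hne : w.getVert i ≠ p := ne_of_mem_of_not_mem hi' (by simp [hap.symm, hpK])
    rcases mem_insert.1 hi' with hia | hiK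
    · rwa [Function.update_of_ne hne, hia, hW.fresh a haQ haW, ← hia] at hspend_i
    · have hiQ := hext.subset (mem_union_right _ hiK)
      rwa [Function.update_of_ne hne, hW.fresh _ hiQ (Finset.disjoint_right.1 hWK hiK)]
        at hspend_i
  · rw [himage, mem_insert, not_or] at hz
    have := hspend.le_of_notMem (z := z) (by simp [hz, hzp])
    rwa [Function.update_of_ne hzp] at this

lemma Extendable.exists_rungs (hW : Extendable G Q D M W c) (hjoin : SetsJoined G M) (hD : 2 ≤ D)
    (hM : M ≤ 2 ^ h) {u : ℕ → V} (hu : Set.InjOn u (range (2 * h + 3)))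
    (huW : ∀ i < 2 * h + 3, u i ∈ W) (hcu : ∀ i < 2 * h + 3, 2 ≤ c (u i))
    (hroom : #W + h * (2 * h + 1) + spareRoom D M h ≤ #Q) :
    ∃ (K : Finset V) (c' : V → ℕ), Disjoint W K ∧ Extendable G Q D M (W ∪ K) c' ∧
      #K = h * (2 * h) ∧ (∀ z ∉ K, (∀ i < h, z ≠ u i ∧ z ≠ u (2 * h + 2 - i)) → c z ≤ c' z) ∧
      ∃ r : ∀ j : Fin h, G.Walk (u (2 * h + 2 - j)) (u j), (∀ j, (r j).length = 2 * h + 1) ∧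
        ∀ v ∈ K, ∃ j, v ∈ (r j).support := by
  have hmul : h * (2 * h + 1) = h * (2 * h) + h := by ring
  have hsum : ∑ _j : Fin h, (2 * h + 1) = h * (2 * h + 1) := by simp
  have hune : ∀ i < 2 * h + 3, ∀ j < 2 * h + 3, u i = u j → i = j := fun i hi j hj h =>
    hu (mem_range.2 hi) (mem_range.2 hj) h
  obtain ⟨K, c', hWK, hext, hspend, hK, r, hr, hrK⟩ :=
    hW.exists_paths (p := fun j : Fin h => u (2 * h + 2 - j)) (q := fun j : Fin h => u j)
      (l := fun _ => 2 * h + 1) hjoin hD hM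
      (fun i j hij => by have := hune _ (by omega) _ (by omega) hij; omega)
      (fun i j hij => by have := hune _ (by omega) _ (by omega) hij; omega)
      (fun i j hij => by have := hune _ (by omega) _ (by omega) hij; omega)
      (fun i => Or.inl (huW _ (by omega))) (fun i => Or.inl (huW _ (by omega)))
      (fun i => hcu _ (by omega)) (fun i => hcu _ (by omega)) (fun _ => le_rfl) (by rwa [hsum])
  rw [Fintype.card_fin, hsum, hmul, Nat.add_left_inj] at hK
  refine ⟨K, c', hWK, hext, hK, fun z hz hzu => hspend.le_of_notMem ?_, r, hr, hrK⟩
  simp only [mem_union, mem_image, mem_univ, true_and, not_or, not_exists]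
  exact ⟨⟨fun j => (hzu j j.2).2.symm, fun j => (hzu j j.2).1.symm⟩, hz⟩

-- The sides of the ladder are the two halves of a cycle through `p`.
lemma Extendable.exists_ladder (hW : Extendable G Q D M W c) (hjoin : SetsJoined G M)
    (hD : 3 ≤ D) (hM : M ≤ 2 ^ h) {p : V} (hp : Placed Q W p) (hcp : 3 ≤ c p)
    (hroom : #W + (h * (2 * h + 3) + 4) + spareRoom D M h ≤ #Q) :
    ∃ (A : Bool → ℕ → V) (m : V) (K : Finset V) (c' : V → ℕ), Disjoint W K ∧
      Extendable G Q D M (W ∪ K) c' ∧ #K = h * (2 * h + 2) + 3 ∧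
      (∀ z ∉ K, z ≠ p → c z ≤ c' z) ∧ IsLadder G K (2 * h + 1) h p m A ∧ A true h ≠ A false h ∧
      (∀ b, A b h ∈ K ∧ D ≤ c' (A b h) + 1) ∧ (∀ b, A b h ≠ m) ∧ m ∈ K ∧ D ≤ c' m + 1 := by
  have hmul : h * (2 * h + 3) = h * (2 * h + 1) + 2 * h := by ring
  have hmul' : h * (2 * h + 2) = h * (2 * h) + 2 * h := by ring
  obtain ⟨u, c₁, hu, hWC, hext₁, hcu, hc₁, h0, hcyc, hend⟩ :=
    hW.exists_cycle hjoin hD hM hp hcp (l := 2 * h + 3) (by omega) (by omega)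
  set C := (range (2 * h + 3)).image u
  have hC : #C = 2 * h + 3 := by rw [card_image_of_injOn hu, card_range]
  have huC : ∀ i < 2 * h + 3, u i ∈ C := fun i hi => mem_image_of_mem u (mem_range.2 hi)
  have hune : ∀ i < 2 * h + 3, ∀ j < 2 * h + 3, i ≠ j → u i ≠ u j := fun i hi j hj hij h =>
    hij (hu (mem_range.2 hi) (mem_range.2 hj) h)
  obtain ⟨K, c₂, hWK, hext₂, hK, hc₂, r, hr, hrK⟩ :=
    hext₁.exists_rungs hjoin (by omega) hM hu (fun i hi => mem_union_right _ (huC i hi))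
      (fun i hi => by have := hcu i hi; omega) (by rw [card_union_of_disjoint hWC]; omega)
  obtain ⟨hWK, hCK⟩ := disjoint_union_left.1 hWK
  have hspent : ∀ i, h ≤ i → i ≤ h + 2 → D ≤ c₂ (u i) + 1 := fun i hi₁ hi₂ =>
    (hcu i (by omega)).trans (Nat.add_le_add_right (hc₂ _
      (Finset.disjoint_left.1 hCK (huC i (by omega))) fun j hj =>
        ⟨hune _ (by omega) _ (by omega) (by omega), hune _ (by omega) _ (by omega) (by omega)⟩) 1)
  refine ⟨fun b i => if b then u (2 * h + 2 - i) else u i, u (h + 1), C ∪ K, c₂,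
    disjoint_union_right.2 ⟨hWC, hWK⟩, by rwa [← union_assoc],
    by rw [card_union_of_disjoint hCK]; omega, fun z hz hzp => ?_,
    isLadder_of_cycle h0 hcyc hend hr hrK, hune _ (by omega) _ (by omega) (by omega), ?_, ?_,
    mem_union_left _ (huC _ (by omega)), hspent _ (by omega) (by omega)⟩
  · obtain ⟨hzC, hzK⟩ := notMem_union.1 hz
    exact (hc₁ z hzC hzp).trans (hc₂ z hzK fun j hj =>
      ⟨(ne_of_mem_of_not_mem (huC _ (by omega)) hzC).symm,
        (ne_of_mem_of_not_mem (huC _ (by omega)) hzC).symm⟩)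
  · rintro (_ | _)
    · exact ⟨mem_union_left _ (huC _ (by omega)), hspent _ (by omega) (by omega)⟩
    · exact ⟨mem_union_left _ (huC _ (by omega)), hspent _ (by omega) (by omega)⟩
  · rintro (_ | _)
    · exact hune _ (by omega) _ (by omega) (by omega)
    · exact hune _ (by omega) _ (by omega) (by omega)

/-- In the extendable state `(W, c)`, new vertices `K` have been used to build a network with
entrances `x` and exits `y`, which leads to the state `(W ∪ K, c')`. For each permutation in `P` it
links the entrances to the correspondingly permuted exits by walks of length `L` covering `K`. -/
structure IsNetwork {ι : Type*} [Fintype ι] (G : SimpleGraph V) [DecidableRel G.Adj] (Q : Finset V)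
    (D M L : ℕ) (P : Set (Equiv.Perm ι)) (W : Finset V) (c : V → ℕ) (x y : ι → V) (K : Finset V)
    (c' : V → ℕ) : Prop where
  disjoint : Disjoint W K
  extendable : Extendable G Q D M (W ∪ K) c'
  card_eq : #K = Fintype.card ι * L
  injective : y.Injective
  exit_mem : ∀ i, y i ∈ K ∨ ∃ j, y i = x j
  three_le : ∀ i, 3 ≤ c' (y i)
  le : ∀ z ∉ K, (∀ i, z ≠ x i) → c z ≤ c' z
  linked : ∀ σ ∈ P, Linked G K L x (y ∘ σ)

/-- A network with paths of length `L` can be built in every extendable state which has `room`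
vertices more than the network needs, from all entrances with budget at least `3`. -/
def Routable (G : SimpleGraph V) [DecidableRel G.Adj] (Q : Finset V) (D M room : ℕ) (ι : Type*)
    [Fintype ι] (L : ℕ) (P : Set (Equiv.Perm ι)) : Prop :=
  ∀ (W : Finset V) (c : V → ℕ) (x : ι → V), Extendable G Q D M W c →
    #W + Fintype.card ι * L + room ≤ #Q → x.Injective → (∀ i, Placed Q W (x i)) →
    (∀ i, 3 ≤ c (x i)) → ∃ y K c', IsNetwork G Q D M L P W c x y K c'

/-- The length of each path through a switch. -/
def switchLength (h : ℕ) : ℕ := h * (2 * h + 2) + 1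

-- The entrance `x true` is joined to the top of a ladder which starts at `x false`; the exits are
-- the top ends of the two sides.
theorem routable_bool (hjoin : SetsJoined G M) (hD : 4 ≤ D) (hM : M ≤ 2 ^ h) (hh : 1 ≤ h) :
    Routable G Q D M (spareRoom D M h + 1) Bool (switchLength h) Set.univ := by
  intro W c x hW hroom hxi hxp hxc
  have hmul : h * (2 * h + 3) = h * (2 * h + 2) + h := by ring
  have hle : 2 * h + 2 ≤ h * (2 * h + 2) := Nat.le_mul_of_pos_left _ (by omega)
  rw [Fintype.card_bool, switchLength] at hroom
  obtain ⟨A, m, K, c₁, hWK, hext₁, hK, hc₁, hladder, hexit, hA, hAm, hmK, hcm⟩ :=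
    hW.exists_ladder hjoin (by omega) hM (hxp false) (hxc false) (by omega)
  have hxK := fun b => (hxp b).notMem (subset_union_right.trans hext₁.subset) hWK
  have hx : x true ≠ x false := hxi.ne (by decide)
  obtain ⟨K', c₂, hWK', hext₂, hspend, hK', t, ht, htK'⟩ :=
    hext₁.exists_path hjoin (by omega) hM ((hxp true).mono subset_union_left)
      (Or.inl (mem_union_right _ hmK)) (ne_of_mem_of_not_mem hmK (hxK true)).symm
      ((hxc true).trans (hc₁ _ (hxK true) hx) |>.trans' (by omega)) (by omega)
      (l := h * (2 * h + 2)) (by omega) (by rw [card_union_of_disjoint hWK]; omega)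
  obtain ⟨hWK', hKK'⟩ := disjoint_union_left.1 hWK'
  refine ⟨fun b => A b h, K ∪ K', c₂, disjoint_union_right.2 ⟨hWK, hWK'⟩, by rwa [← union_assoc],
    ?_, ?_, fun b => Or.inl (mem_union_left _ (hA b).1), fun b => ?_, fun z hz hzx => ?_,
    fun σ _ => hladder.linked t ht htK' σ⟩
  · rw [card_union_of_disjoint hKK', Fintype.card_bool, switchLength]
    omega
  · exact Bool.injective_iff.2 hexit.symm
  · have := (hA b).2
    have := hspend.le_of_notMem (z := A b h) (by
      simp [hAm b, ne_of_mem_of_not_mem (hA b).1 (hxK true),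
        Finset.disjoint_left.1 hKK' (hA b).1])
    omega
  · obtain ⟨hzK, hzK'⟩ := notMem_union.1 hz
    exact (hc₁ z hzK (hzx false)).trans (hspend.le_of_notMem (by
      simp [hzx true, hzK', (ne_of_mem_of_not_mem hmK hzK).symm]))

end Switch

section Decomposition

open Equiv Finset

variable {κ : Type*} [Finite κ]

lemma exists_bijective_fst_apply (σ : Perm (κ × Bool)) :
    ∃ β : κ → Bool, Function.Bijective fun k => (σ (k, β k)).1 := by
  classical
  cases nonempty_fintype κ
  have hhall : ∀ S : Finset κ, #S ≤ #(S.biUnion fun k => {(σ (k, false)).1, (σ (k, true)).1}) := by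
    refine fun S => Nat.le_of_mul_le_mul_right (c := #(univ : Finset Bool)) ?_ (by simp)
    rw [← card_product, ← card_product]
    refine card_le_card_of_injOn σ (fun p hp => ?_) σ.injective.injOn
    obtain ⟨k, b⟩ := p
    exact mem_product.2 ⟨mem_biUnion.2 ⟨k, (mem_product.1 hp).1, by cases b <;> simp⟩, mem_univ _⟩
  obtain ⟨a, ha, hat⟩ := (all_card_le_biUnion_card_iff_exists_injective _).1 hhall
  have hβ : ∀ k, ∃ b, (σ (k, b)).1 = a k := fun k => by
    rcases mem_insert.1 (hat k) with h | h
    · exact ⟨false, h.symm⟩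
    · exact ⟨true, (mem_singleton.1 h).symm⟩
  choose β hβ using hβ
  exact ⟨β, by simpa only [hβ] using Finite.injective_iff_bijective.1 ha⟩

lemma bijective_fst_apply_not (σ : Perm (κ × Bool)) {β : κ → Bool}
    (hβ : Function.Bijective fun k => (σ (k, β k)).1) :
    Function.Bijective fun k => (σ (k, !β k)).1 := by
  refine Finite.surjective_iff_bijective.1 fun k' => ?_
  obtain ⟨k, rfl⟩ := hβ.2 k'
  obtain ⟨⟨l, b⟩, hl⟩ := σ.surjective ((σ (k, β k)).1, !(σ (k, β k)).2)
  suffices b = !β l from ⟨l, by simp only [← this, hl]⟩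
  refine Bool.eq_not.2 fun hb => ?_
  subst hb
  have hlk : (σ (l, β l)).1 = (σ (k, β k)).1 := by rw [hl]
  obtain rfl := hβ.1 hlk
  simpa using congrArg Prod.snd hl

-- By Hall's theorem one can send one of the two elements over each `k` through the first copy of
-- `κ`, and the other one through the second copy.
lemma exists_benes_decomposition (σ : Perm (κ × Bool)) :
    ∃ (f₁ f₂ : κ → Perm Bool) (g : Bool → Perm κ), ∀ k b,
      σ (k, b) = (g (f₁ k b) k, f₂ (g (f₁ k b) k) (f₁ k b)) := by
  obtain ⟨β, hβ⟩ := exists_bijective_fst_apply σ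
  have hg : ∀ b, Function.Bijective fun k => (σ (k, xor b (β k))).1 := by
    rintro (_ | _)
    · simpa using hβ
    · simpa using bijective_fst_apply_not σ hβ
  let g : Bool → Perm κ := fun b => ofBijective _ (hg b)
  have hgσ : ∀ b k, g b k = (σ (k, xor b (β k))).1 := fun _ _ => rfl
  have hf₂ : ∀ k, Function.Bijective fun b => (σ ((g b).symm k, xor b (β ((g b).symm k)))).2 := by
    refine fun k => Finite.injective_iff_bijective.1 fun b b' h => ?_
    have heq := σ.injective (Prod.ext (by
      rw [← hgσ, ← hgσ, apply_symm_apply, apply_symm_apply]) h)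
    obtain ⟨hk, hb⟩ := Prod.mk.inj heq
    rw [hk] at hb
    simpa using hb
  have hxor : ∀ k, Function.Involutive fun b => xor b (β k) := fun k b => by simp
  refine ⟨fun k => (hxor k).toPerm, fun k => ofBijective _ (hf₂ k), g, fun k b => ?_⟩
  simp only [Function.Involutive.coe_toPerm, ofBijective_apply, symm_apply_apply]
  simp [hgσ]

end Decomposition

section Network

open Equiv Finset
open scoped Pointwise

variable {V : Type*} [DecidableEq V] {G : SimpleGraph V} [DecidableRel G.Adj] {Q W : Finset V}
  {c : V → ℕ} {D M room : ℕ} {ι κ : Type*} [Fintype ι] [Fintype κ] {L L' : ℕ}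

omit [DecidableRel G.Adj] [Fintype ι] [Fintype κ] in
lemma Linked.sum {A B : Finset V} {x y : ι ⊕ κ → V}
    (hA : Linked G A L (x ∘ Sum.inl) (y ∘ Sum.inl))
    (hB : Linked G B L (x ∘ Sum.inr) (y ∘ Sum.inr)) : Linked G (A ∪ B) L x y := by
  obtain ⟨w, hw, hAw⟩ := hA
  obtain ⟨w', hw', hBw⟩ := hB
  refine ⟨fun i => match i with
    | Sum.inl i => w i
    | Sum.inr k => w' k, Sum.rec hw hw', fun v hv => ?_⟩
  rcases mem_union.1 hv with hv | hv
  · exact (hAw v hv).imp' Sum.inl fun _ => id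
  · exact (hBw v hv).imp' Sum.inr fun _ => id

lemma IsNetwork.placed {P : Set (Perm ι)} {x y : ι → V} {K : Finset V} {c' : V → ℕ}
    (h : IsNetwork G Q D M L P W c x y K c') (hx : ∀ i, Placed Q W (x i)) (i : ι) :
    Placed Q (W ∪ K) (y i) := by
  rcases h.exit_mem i with hy | ⟨j, hy⟩
  · exact Or.inl (mem_union_right _ hy)
  · exact hy ▸ (hx j).mono subset_union_left

lemma Routable.mono {P P' : Set (Perm ι)} (h : Routable G Q D M room ι L P) (hP : P' ⊆ P) :
    Routable G Q D M room ι L P' := by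
  intro W c x hW hroom hx hxp hxc
  obtain ⟨y, K, c', hK⟩ := h W c x hW hroom hx hxp hxc
  exact ⟨y, K, c', { hK with linked := fun σ hσ => hK.linked σ (hP hσ) }⟩

lemma routable_zero : Routable G Q D M room ι 0 {1} := by
  intro W c x hW _ hx _ hxc
  refine ⟨x, ∅, c, disjoint_empty_right _, by simpa using hW, by simp, hx, fun i => Or.inr ⟨i, rfl⟩,
    hxc, fun z _ _ => le_rfl, ?_⟩
  rintro _ rfl
  exact Linked.refl _

lemma routable_of_isEmpty [IsEmpty ι] {P : Set (Perm ι)} : Routable G Q D M room ι L P := by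
  intro W c x hW _ hx _ _
  exact ⟨x, ∅, c, disjoint_empty_right _, by simpa using hW, by simp, hx, isEmptyElim, isEmptyElim,
    fun z _ _ => le_rfl, fun σ _ => ⟨isEmptyElim, isEmptyElim, by simp⟩⟩

lemma Routable.comp {P P' : Set (Perm ι)} (h : Routable G Q D M room ι L P)
    (h' : Routable G Q D M room ι L' P') : Routable G Q D M room ι (L + L') (P' * P) := by
  intro W c x hW hroom hx hxp hxc
  rw [Nat.mul_add] at hroom
  obtain ⟨y, K, c', hK⟩ := h W c x hW (by omega) hx hxp hxc
  obtain ⟨y', K', c'', hK'⟩ := h' (W ∪ K) c' y hK.extendable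
    (by rw [card_union_of_disjoint hK.disjoint, hK.card_eq]; omega) hK.injective (hK.placed hxp)
    hK.three_le
  obtain ⟨hWK', hKK'⟩ := disjoint_union_left.1 hK'.disjoint
  refine ⟨y', K ∪ K', c'', disjoint_union_right.2 ⟨hK.disjoint, hWK'⟩,
    by simpa only [union_assoc] using hK'.extendable,
    by rw [card_union_of_disjoint hKK', hK.card_eq, hK'.card_eq, Nat.mul_add], hK'.injective,
    fun i => ?_, hK'.three_le, fun z hz hzx => ?_, ?_⟩
  · rcases hK'.exit_mem i with hi | ⟨j, hi⟩
    · exact Or.inl (mem_union_right _ hi)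
    · exact hi ▸ (hK.exit_mem j).imp_left (mem_union_left _)
  · obtain ⟨hzK, hzK'⟩ := notMem_union.1 hz
    refine (hK.le z hzK hzx).trans (hK'.le z hzK' ?_)
    rintro i rfl
    exact (hK.exit_mem i).elim hzK fun ⟨j, hj⟩ => hzx j hj
  · rintro _ ⟨σ', hσ', σ, hσ, rfl⟩
    exact (hK.linked σ hσ).trans ((hK'.linked σ' hσ').comp σ.surjective)

lemma Routable.relabel {P : Set (Perm ι)} (h : Routable G Q D M room ι L P) (e : ι ≃ κ) :
    Routable G Q D M room κ L (e.permCongr '' P) := by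
  intro W c x hW hroom hx hxp hxc
  rw [← Fintype.card_congr e] at hroom
  obtain ⟨y, K, c', hK⟩ := h W c (x ∘ e) hW hroom (hx.comp e.injective) (fun i => hxp _)
    fun i => hxc _
  refine ⟨y ∘ e.symm, K, c', hK.disjoint, hK.extendable, by rw [← Fintype.card_congr e, hK.card_eq],
    hK.injective.comp e.symm.injective, fun k => ?_, fun i => hK.three_le _,
    fun z hz hzx => hK.le z hz fun i => hzx _, ?_⟩
  · exact (hK.exit_mem (e.symm k)).imp_right fun ⟨j, hj⟩ => ⟨e j, hj⟩
  · rintro _ ⟨σ, hσ, rfl⟩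
    convert (hK.linked σ hσ).comp e.symm.surjective using 1
    · ext k
      simp
    · ext k
      simp

lemma Routable.sum {P : Set (Perm ι)} {P' : Set (Perm κ)} (h : Routable G Q D M room ι L P)
    (h' : Routable G Q D M room κ L P') :
    Routable G Q D M room (ι ⊕ κ) L (Set.image2 Perm.sumCongr P P') := by
  intro W c x hW hroom hx hxp hxc
  rw [Fintype.card_sum, Nat.add_mul] at hroom
  obtain ⟨y, K, c', hK⟩ := h W c (x ∘ Sum.inl) hW (by omega) (hx.comp Sum.inl_injective)
    (fun i => hxp _) fun i => hxc _
  have hxK : ∀ j, x j ∉ K := fun j =>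
    (hxp j).notMem (subset_union_right.trans hK.extendable.subset) hK.disjoint
  obtain ⟨y', K', c'', hK'⟩ := h' (W ∪ K) c' (x ∘ Sum.inr) hK.extendable
    (by rw [card_union_of_disjoint hK.disjoint, hK.card_eq]; omega) (hx.comp Sum.inr_injective)
    (fun k => (hxp _).mono subset_union_left)
    fun k => (hxc _).trans (hK.le _ (hxK _) fun i => hx.ne Sum.inr_ne_inl)
  obtain ⟨hWK', hKK'⟩ := disjoint_union_left.1 hK'.disjoint
  have hyK' : ∀ i, y i ∉ K' ∧ ∀ k, y i ≠ x (Sum.inr k) := fun i => by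
    rcases hK.exit_mem i with hi | ⟨j, hi⟩
    · exact ⟨Finset.disjoint_left.1 hKK' hi, fun k => ne_of_mem_of_not_mem hi (hxK _)⟩
    · exact hi ▸ ⟨(hxp _).notMem (subset_union_right.trans hK'.extendable.subset) hWK',
        fun k => hx.ne Sum.inl_ne_inr⟩
  refine ⟨Sum.elim y y', K ∪ K', c'', disjoint_union_right.2 ⟨hK.disjoint, hWK'⟩,
    by simpa only [union_assoc] using hK'.extendable,
    by rw [card_union_of_disjoint hKK', hK.card_eq, hK'.card_eq, Fintype.card_sum, Nat.add_mul],
    hK.injective.sumElim hK'.injective fun i k hik => ?_, ?_, ?_, fun z hz hzx => ?_, ?_⟩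
  · exact (hK'.exit_mem k).elim (fun hk => (hyK' i).1 (hik ▸ hk))
      fun ⟨j, hj⟩ => (hyK' i).2 j (hik.trans hj)
  · rintro (i | k)
    · exact (hK.exit_mem i).imp (mem_union_left _) fun ⟨j, hj⟩ => ⟨Sum.inl j, hj⟩
    · exact (hK'.exit_mem k).imp (mem_union_right _) fun ⟨j, hj⟩ => ⟨Sum.inr j, hj⟩
  · rintro (i | k)
    · exact (hK.three_le i).trans (hK'.le _ (hyK' i).1 (hyK' i).2)
    · exact hK'.three_le k
  · obtain ⟨hzK, hzK'⟩ := notMem_union.1 hz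
    exact (hK.le z hzK fun i => hzx _).trans (hK'.le z hzK' fun k => hzx _)
  · rintro _ ⟨σ, hσ, σ', hσ', rfl⟩
    exact Linked.sum (hK.linked σ hσ) (hK'.linked σ' hσ')

lemma routable_fin_prod (h : Routable G Q D M room ι L Set.univ) (n : ℕ) :
    Routable G Q D M room (Fin n × ι) L (Set.range (prodShear (Equiv.refl (Fin n)))) := by
  induction n with
  | zero => exact routable_of_isEmpty
  | succ n ih =>
    let e : ι ⊕ Fin n × ι ≃ Fin (n + 1) × ι :=
      optionProdEquiv.symm.trans ((finSuccEquiv n).symm.prodCongr (Equiv.refl ι))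
    refine ((h.sum ih).relabel e).mono ?_
    rintro _ ⟨f, rfl⟩
    refine ⟨_, ⟨f 0, Set.mem_univ _, _, ⟨fun k => f k.succ, rfl⟩, rfl⟩, ?_⟩
    ext ⟨k, i⟩ <;> cases k using Fin.cases <;> simp [e]

lemma Routable.prod (h : Routable G Q D M room ι L Set.univ) :
    Routable G Q D M room (κ × ι) L (Set.range (prodShear (Equiv.refl κ))) := by
  let e := (Fintype.equivFin κ).symm.prodCongr (Equiv.refl ι)
  refine ((routable_fin_prod h _).relabel e).mono ?_
  rintro _ ⟨f, rfl⟩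
  refine ⟨_, ⟨f ∘ (Fintype.equivFin κ).symm, rfl⟩, ?_⟩
  ext ⟨k, i⟩ <;> simp [e]

lemma Routable.benes (h : Routable G Q D M room κ L Set.univ)
    (hs : Routable G Q D M room Bool L' Set.univ) :
    Routable G Q D M room (κ × Bool) (L' + L + L') Set.univ := by
  refine ((hs.prod.comp (h.prod.relabel (prodComm Bool κ))).comp hs.prod).mono fun σ _ => ?_
  obtain ⟨f₁, f₂, g, hσ⟩ := exists_benes_decomposition σ
  refine ⟨_, ⟨f₂, rfl⟩, _, ⟨_, ⟨_, ⟨g, rfl⟩, rfl⟩, _, ⟨f₁, rfl⟩, rfl⟩, ?_⟩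
  ext1 ⟨k, b⟩
  simp [hσ]

theorem routable_of_card_eq_two_pow (hs : Routable G Q D M room Bool L' Set.univ) (q : ℕ)
    (hι : Fintype.card ι = 2 ^ q) : Routable G Q D M room ι (2 * q * L') Set.univ := by
  induction q generalizing ι with
  | zero =>
    have : Subsingleton ι := Fintype.card_le_one_iff_subsingleton.1 (by simp [hι])
    rw [show 2 * 0 * L' = 0 by simp]
    exact routable_zero.mono fun σ _ => Subsingleton.elim _ _
  | succ q ih =>
    have h := (ih (ι := ULift (Fin (2 ^ q))) (by simp)).benes hs
    rw [show 2 * (q + 1) * L' = L' + 2 * q * L' + L' by ring]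
    simpa using h.relabel (Fintype.equivOfCardEq (by simp [hι, pow_succ]))

end Network

section Assembly

open Finset

variable {V : Type*} {G : SimpleGraph V}

lemma eq_start_or_eq_end_or_exists_getVert {x y v : V} {w : G.Walk x y} (hv : v ∈ w.support) :
    v = x ∨ v = y ∨ ∃ i : Fin (w.length - 1), v = w.getVert (i + 1) := by
  obtain ⟨i, rfl, hi⟩ := Walk.mem_support_iff_exists_getVert.1 hv
  rcases i.eq_zero_or_pos with rfl | hi0
  · exact Or.inl w.getVert_zero
  rcases hi.eq_or_lt with rfl | hi1
  · exact Or.inr (Or.inl w.getVert_length)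
  · exact Or.inr (Or.inr ⟨⟨i - 1, by omega⟩, by rw [Nat.sub_add_cancel hi0]⟩)

lemma isPath_of_injective_getVert {x y : V} {w : G.Walk x y} (hxy : x ≠ y)
    (hw : Function.Injective fun i : Fin (w.length - 1) => w.getVert (i + 1))
    (hx : ∀ i : Fin (w.length - 1), w.getVert (i + 1) ≠ x)
    (hy : ∀ i : Fin (w.length - 1), w.getVert (i + 1) ≠ y) : w.IsPath := by
  have hlt : ∀ i j, i < j → j ≤ w.length → w.getVert i ≠ w.getVert j := by
    intro i j hij hj heq
    rcases i.eq_zero_or_pos with rfl | hi <;> rcases hj.eq_or_lt with rfl | hj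
    · exact hxy (by simpa using heq)
    · exact hx ⟨j - 1, by omega⟩ (by simpa [Nat.sub_add_cancel hij] using heq.symm)
    · exact hy ⟨i - 1, by omega⟩ (by simpa [Nat.sub_add_cancel hi] using heq)
    · have := hw (a₁ := ⟨i - 1, by omega⟩) (a₂ := ⟨j - 1, by omega⟩)
        (by simpa [Nat.sub_add_cancel hi, Nat.sub_add_cancel (hi.trans hij)] using heq)
      rw [Fin.mk.injEq] at this
      omega
  rw [Walk.isPath_iff_injective_get_support]
  rintro ⟨i, hi⟩ ⟨j, hj⟩ hij
  rw [Walk.length_support] at hi hj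
  simp only [List.get_eq_getElem, Walk.support_getElem_eq_getVert] at hij
  rcases lt_trichotomy i j with h | h | h
  · exact absurd hij (hlt i j h (by omega))
  · exact Fin.ext h
  · exact absurd hij.symm (hlt j i h (by omega))

/-- The pairs of branch vertices of a subdivision of `K_t`. -/
abbrev BranchPair (t : ℕ) := {k : Fin t × Fin t // k.1 < k.2}

/-- The branch vertices `b` and the inner vertices of the branching walks `w`. -/
def subdivisionVertex {t : ℕ} (b : Fin t → V) (w : ∀ k : BranchPair t, G.Walk (b k.1.1) (b k.1.2)) :
    (Fin t ⊕ Σ k, Fin ((w k).length - 1)) → V :=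
  Sum.elim b fun x => (w x.1).getVert (x.2 + 1)

lemma hasSpanningNearlyBalancedKSubdivision_of_injective {t : ℕ} {b : Fin t → V}
    {w : ∀ k : BranchPair t, G.Walk (b k.1.1) (b k.1.2)} (hinj : (subdivisionVertex b w).Injective)
    (hcov : ∀ v, ∃ k, v ∈ (w k).support) {l : ℕ} (hl : 1 ≤ l)
    (hbal : ∀ k, l - 1 ≤ (w k).length ∧ (w k).length ≤ l + 1) :
    HasSpanningNearlyBalancedKSubdivision G t := by
  obtain ⟨hb, hw, hbw⟩ := Sum.elim_injective.1 hinj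
  have hpath : ∀ k, (w k).IsPath := fun k =>
    isPath_of_injective_getVert (hb.ne k.2.ne)
      (fun i j h => eq_of_heq (Sigma.mk.inj (hw (a₁ := ⟨k, i⟩) (a₂ := ⟨k, j⟩) h)).2)
      (fun i => (hbw k.1.1 ⟨k, i⟩).symm) fun i => (hbw k.1.2 ⟨k, i⟩).symm
  refine ⟨⟨b, hb⟩, fun i j h => w ⟨(i, j), h⟩, fun i j h => hpath _, ?_, ?_, ?_, l, hl,
    fun i j h => hbal _⟩
  · intro i j h k hki hkj hk
    rcases eq_start_or_eq_end_or_exists_getVert hk with hk | hk | ⟨x, hk⟩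
    · exact hki (hb hk)
    · exact hkj (hb hk)
    · exact hbw k ⟨⟨(i, j), h⟩, x⟩ hk
  · intro i j h i' j' h' hne v hv hv'
    rcases eq_start_or_eq_end_or_exists_getVert hv with rfl | rfl | ⟨x, rfl⟩
    · exact ⟨i, rfl⟩
    · exact ⟨j, rfl⟩
    rcases eq_start_or_eq_end_or_exists_getVert hv' with hx | hx | ⟨x', hx⟩
    · exact ⟨i', hx⟩
    · exact ⟨j', hx⟩
    · have := congrArg (·.1.1) (hw (a₁ := ⟨⟨(i, j), h⟩, x⟩) (a₂ := ⟨⟨(i', j'), h'⟩, x'⟩) hx)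
      exact absurd (Prod.mk.inj this) hne
  · intro v
    obtain ⟨k, hk⟩ := hcov v
    exact ⟨k.1.1, k.1.2, k.2, hk⟩

-- Walks that visit all vertices and have the smallest possible total length cannot meet.
theorem hasSpanningNearlyBalancedKSubdivision_of_card [Fintype V] {t : ℕ} {b : Fin t → V}
    {w : ∀ k : BranchPair t, G.Walk (b k.1.1) (b k.1.2)}
    (hcov : ∀ v, ∃ k, v ∈ (w k).support)
    (hcard : t + ∑ k, ((w k).length - 1) = Fintype.card V) {l : ℕ} (hl : 1 ≤ l)
    (hbal : ∀ k, l - 1 ≤ (w k).length ∧ (w k).length ≤ l + 1) :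
    HasSpanningNearlyBalancedKSubdivision G t := by
  have hsurj : (subdivisionVertex b w).Surjective := fun v => by
    obtain ⟨k, hk⟩ := hcov v
    rcases eq_start_or_eq_end_or_exists_getVert hk with rfl | rfl | ⟨i, rfl⟩
    · exact ⟨Sum.inl _, rfl⟩
    · exact ⟨Sum.inl _, rfl⟩
    · exact ⟨Sum.inr ⟨k, i⟩, rfl⟩
  refine hasSpanningNearlyBalancedKSubdivision_of_injective
    ((Fintype.bijective_iff_surjective_and_card _).2 ⟨hsurj, ?_⟩).1 hcov hl hbal
  simp [← hcard]

variable {κ : Type*} {s : κ → ℕ}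

/-- The entrance of a trip: the exit of the previous trip, or `u k` for the first trip. -/
def tripStart (u : κ → V) (J : (Σ k, Fin (s k)) → V) (x : Σ k, Fin (s k)) : V :=
  if x.2.val = 0 then u x.1 else J ⟨x.1, x.2.val - 1, by omega⟩

lemma exists_tripStart_eq (u : κ → V) (J : (Σ k, Fin (s k)) → V) (x : Σ k, Fin (s k)) :
    (∃ k, tripStart u J x = u k) ∨ ∃ x', tripStart u J x = J x' := by
  rw [tripStart]
  split_ifs
  · exact Or.inl ⟨_, rfl⟩
  · exact Or.inr ⟨_, rfl⟩

lemma tripStart_injective {u : κ → V} {J : (Σ k, Fin (s k)) → V} (hu : u.Injective)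
    (hJ : J.Injective) (huJ : ∀ k x, u k ≠ J x) : (tripStart u J).Injective := by
  rintro ⟨k, i⟩ ⟨k', i'⟩ h
  simp only [tripStart] at h
  split_ifs at h with h1 h2 h2
  · obtain rfl := hu h
    obtain rfl : i = i' := Fin.ext (h1.trans h2.symm)
    rfl
  · exact absurd h (huJ _ _)
  · exact absurd h.symm (huJ _ _)
  · obtain ⟨rfl, hval⟩ := Sigma.mk.inj_iff.1 (hJ h)
    have : i.val - 1 = i'.val - 1 := congrArg Fin.val (eq_of_heq hval)
    obtain rfl : i = i' := Fin.ext (by omega)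
    rfl

lemma exists_walk_of_trips {u : κ → V} {J : (Σ k, Fin (s k)) → V} {T : ℕ}
    (w : ∀ x, G.Walk (tripStart u J x) (J x)) (hw : ∀ x, (w x).length = T) (k : κ) {i : ℕ}
    (hi : i < s k) : ∃ w' : G.Walk (u k) (J ⟨k, i, hi⟩), w'.length = (i + 1) * T ∧
      ∀ j (hj : j < s k), j ≤ i → (w ⟨k, j, hj⟩).support ⊆ w'.support := by
  induction i with
  | zero =>
    refine ⟨(w ⟨k, 0, hi⟩).copy (by simp [tripStart]) rfl, by simp [hw], fun j hj hj0 v hv => ?_⟩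
    obtain rfl := Nat.le_zero.1 hj0
    rwa [Walk.support_copy]
  | succ i ih =>
    obtain ⟨w', hlen, hsupp⟩ := ih (by omega)
    refine ⟨w'.append ((w ⟨k, i + 1, hi⟩).copy (by simp [tripStart]) rfl), ?_,
      fun j hj hji v hv => ?_⟩
    · rw [Walk.length_append, Walk.length_copy, hw, hlen]
      ring
    · rw [Walk.mem_support_append_iff, Walk.support_copy]
      rcases hji.eq_or_lt with rfl | hji
      · exact Or.inr hv
      · exact Or.inl (hsupp j hj (by omega) hv)

lemma Linked.exists_walks_of_trips {u : κ → V} {J : (Σ k, Fin (s k)) → V} {T : ℕ} {A : Finset V}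
    (h : Linked G A T (tripStart u J) J) (hs : ∀ k, 0 < s k) :
    ∃ w : ∀ k, G.Walk (u k) (J ⟨k, s k - 1, Nat.sub_one_lt_of_lt (hs k)⟩),
      (∀ k, (w k).length = s k * T) ∧ ∀ v ∈ A, ∃ k, v ∈ (w k).support := by
  obtain ⟨w, hw, hA⟩ := h
  choose w' hlen hsupp using fun k => exists_walk_of_trips w hw k (Nat.sub_one_lt_of_lt (hs k))
  refine ⟨w', fun k => by rw [hlen, Nat.sub_add_cancel (hs k)], fun v hv => ?_⟩
  obtain ⟨⟨k, j, hj⟩, hx⟩ := hA v hv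
  exact ⟨k, hsupp k j hj (by omega) hx⟩

end Assembly

section Core

open Finset Equiv

variable {V : Type*} [DecidableEq V] {G : SimpleGraph V}

lemma exists_injective_image_eq {ι : Type*} [Fintype ι] {A : Finset V}
    (hA : #A = Fintype.card ι) : ∃ f : ι → V, f.Injective ∧ univ.image f = A := by
  let e : ι ≃ A := Fintype.equivOfCardEq (by simp [hA])
  refine ⟨fun i => e i, Subtype.val_injective.comp e.injective, ext fun v => ?_⟩
  rw [mem_image]
  exact ⟨fun ⟨i, _, hi⟩ => hi ▸ (e i).2, fun hv => ⟨e.symm ⟨v, hv⟩, mem_univ _, by simp⟩⟩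

lemma Linked.union_image {ι : Type*} [Fintype ι] {A : Finset V} {L : ℕ} {x y : ι → V}
    (h : Linked G A L x y) : Linked G (A ∪ univ.image y) L x y := by
  obtain ⟨w, hw, hA⟩ := h
  refine ⟨w, hw, fun v hv => ?_⟩
  rcases mem_union.1 hv with hv | hv
  · exact hA v hv
  · obtain ⟨i, -, rfl⟩ := mem_image.1 hv
    exact ⟨i, Walk.end_mem_support _⟩

/-- The number of inner vertices of each path through a network for `2 ^ q` paths that is extended
to prescribed ends. -/
def routingLength (q h : ℕ) : ℕ := 2 * q * switchLength h + 2 * h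

variable [DecidableRel G.Adj] {Q W : Finset V} {D M h q : ℕ} {c : V → ℕ}

theorem Extendable.exists_routing {ι : Type*} [Fintype ι] (hW : Extendable G Q D M W c)
    (hjoin : SetsJoined G M) (hD : 4 ≤ D) (hM : M ≤ 2 ^ h) (hh : 1 ≤ h)
    (hι : Fintype.card ι = 2 ^ q) {x y : ι → V} (hxy : ∀ i j, x i ≠ y j) (hx : x.Injective)
    (hy : y.Injective) (hxQ : ∀ i, x i ∉ Q) (hyQ : ∀ i, y i ∉ Q) (hcx : ∀ i, 3 ≤ c (x i))
    (hcy : ∀ i, 2 ≤ c (y i))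
    (hroom : #W + 2 ^ q * (routingLength q h + 1) + (spareRoom D M h + 1) ≤ #Q) :
    ∃ K ⊆ Q, Disjoint W K ∧ #K = 2 ^ q * routingLength q h ∧
      ∀ σ : Perm ι, Linked G K (routingLength q h + 1) x (y ∘ σ) := by
  rw [routingLength, add_assoc _ (2 * h), Nat.mul_add] at hroom
  obtain ⟨z, K₁, c₁, hz⟩ := routable_of_card_eq_two_pow (routable_bool (Q := Q) hjoin hD hM hh) q hι
    W c x hW (by rw [hι]; omega) hx (fun i => Or.inr (hxQ i)) hcx
  have hK₁Q : K₁ ⊆ Q := subset_union_right.trans hz.extendable.subset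
  have hzy : ∀ i j, z i ≠ y j := fun i j hij => by
    rcases hz.exit_mem i with hi | ⟨k, hi⟩
    · exact hyQ j (hij ▸ hK₁Q hi)
    · exact hxy k j (hi ▸ hij)
  obtain ⟨K₂, c₂, hK₂, hext₂, -, hcard₂, w, hw, hKw⟩ :=
    hz.extendable.exists_paths hjoin (by omega) hM hzy hz.injective hy
      (hz.placed fun i => Or.inr (hxQ i)) (fun i => Or.inr (hyQ i))
      (fun i => (hz.three_le i).trans' (by simp))
      (fun i => (hcy i).trans (hz.le _ (fun hi => hyQ i (hK₁Q hi)) fun j => (hxy j i).symm))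
      (l := fun _ => 2 * h + 1) (fun _ => le_rfl)
      (by
        rw [card_union_of_disjoint hz.disjoint, hz.card_eq, sum_const, card_univ, hι, smul_eq_mul]
        omega)
  refine ⟨K₁ ∪ K₂, union_subset hK₁Q (subset_union_right.trans hext₂.subset),
    disjoint_union_right.2 ⟨hz.disjoint, (disjoint_union_left.1 hK₂).1⟩, ?_, fun σ => ?_⟩
  · rw [card_union_of_disjoint (disjoint_union_left.1 hK₂).2, hz.card_eq, hι, routingLength]
    rw [sum_const, card_univ, hι, smul_eq_mul] at hcard₂
    linarith
  · exact (hz.linked σ trivial).trans (Linked.comp ⟨w, hw, hKw⟩ σ.surjective)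

-- The network undoes the permutation by which the paths through the rest of `U` join `y` to `z`.
lemma Extendable.linked_sdiff {ι : Type*} [Fintype ι] {U Z : Finset V} {r : ℕ}
    (hW : Extendable G Q D M W c) (hjoin : SetsJoined G M) (hD : 4 ≤ D) (hM : M ≤ 2 ^ h)
    (hh : 1 ≤ h) (hι : Fintype.card ι = 2 ^ q) {x y z : ι → V} (hxy : ∀ i j, x i ≠ y j)
    (hx : x.Injective) (hxQ : ∀ i, x i ∉ Q) (hyz : (Sum.elim y z).Injective)
    (hyzU : ∀ i, Sum.elim y z i ∈ U \ (Q ∪ Z)) (hcx : ∀ i, 3 ≤ c (x i)) (hcy : ∀ i, 2 ≤ c (y i))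
    (hroom : #W + 2 ^ q * (routingLength q h + 1) + (spareRoom D M h + 1) ≤ #Q) (hQU : Q ⊆ U)
    (hZU : Z ⊆ U) (hZQ : Disjoint Z Q) (hU : #U = #W + 2 ^ q * (routingLength q h + r + 2))
    (hchain : ∀ R, Z ⊆ R → #R = 2 ^ q * r → ∃ σ : Perm ι, Linked G R (r + 1) y (z ∘ σ)) :
    Linked G (U \ W) (routingLength q h + r + 2) x z := by
  simp only [mem_sdiff, notMem_union] at hyzU
  obtain ⟨K, hKQ, hWK, hK, hlink⟩ := hW.exists_routing hjoin hD hM hh hι hxy hx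
    (hyz.comp Sum.inl_injective) hxQ (fun i => (hyzU (Sum.inl i)).2.1) hcx hcy hroom
  set Y := univ.image (Sum.elim y z)
  have hmemY : ∀ v ∈ Y, v ∈ U ∧ v ∉ Q ∧ v ∉ Z := forall_mem_image.2 fun i _ => hyzU i
  have hYcard : #Y = 2 ^ q + 2 ^ q := by
    rw [card_image_of_injective _ hyz, card_univ, Fintype.card_sum, hι]
  have hWKQ : W ∪ K ⊆ Q := union_subset hW.subset hKQ
  have hWKY : Disjoint (W ∪ K) Y :=
    Finset.disjoint_right.2 fun v hv hvK => (hmemY v hv).2.1 (hWKQ hvK)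
  obtain ⟨σ, hσ⟩ := hchain (U \ (W ∪ K ∪ Y))
    (subset_sdiff.2 ⟨hZU, disjoint_union_right.2 ⟨hZQ.mono_right hWKQ,
      Finset.disjoint_right.2 fun v hv => (hmemY v hv).2.2⟩⟩)
    (by
      rw [card_sdiff_of_subset (union_subset (hWKQ.trans hQU) fun v hv => (hmemY v hv).1),
        card_union_of_disjoint hWKY, card_union_of_disjoint hWK, hYcard, hK, hU]
      simp only [Nat.mul_add]
      omega)
  have hlinked := ((hlink σ⁻¹).union_image.trans (hσ.comp σ⁻¹.surjective)).union_image
  have hzσ : (z ∘ σ) ∘ ⇑σ⁻¹ = z := by ext; simp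
  rw [hzσ, show routingLength q h + 1 + (r + 1) = routingLength q h + r + 2 by ring] at hlinked
  refine hlinked.mono fun v hv => ?_
  have hvY : v ∈ Y → v ∈ univ.image (y ∘ ⇑σ⁻¹) ∨ v ∈ univ.image z := fun hvY => by
    obtain ⟨i | i, -, rfl⟩ := mem_image.1 hvY
    · exact Or.inl (mem_image.2 ⟨σ i, mem_univ _, by simp⟩)
    · exact Or.inr (mem_image_of_mem z (mem_univ i))
  simp only [mem_union, mem_sdiff] at hv ⊢
  tauto

variable {κ : Type*} [Fintype κ] {s e : κ → ℕ} {r : ℕ} {U Z : Finset V} {u v : κ → V}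
  {y z : (Σ k, Fin (s k)) → V}

-- The walk from `u k` to `v k` makes `s k` trips through the network and the rest of `U`, and then
-- goes through the reservoir.
theorem Extendable.exists_covering_walks (hQ : Extendable G Q D M ∅ fun _ => D)
    (hjoin : SetsJoined G M) (hD : 4 ≤ D) (hM : M ≤ 2 ^ h) (hh : 1 ≤ h)
    (hs : ∀ k, 0 < s k) (hsum : ∑ k, s k = 2 ^ q) (he : ∀ k, 2 * h + 1 ≤ e k)
    (hu : (Sum.elim u (Sum.elim y z)).Injective) (hv : (Sum.elim v (Sum.elim y z)).Injective)
    (huQ : ∀ k, u k ∉ Q) (hvQ : ∀ k, v k ∉ Q) (hyzU : ∀ i, Sum.elim y z i ∈ U \ (Q ∪ Z))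
    (hroom : ∑ k, e k + 2 ^ q * (routingLength q h + 1) + (spareRoom D M h + 1) ≤ #Q)
    (hQU : Q ⊆ U) (hZU : Z ⊆ U) (hZQ : Disjoint Z Q)
    (hU : #U + Fintype.card κ = ∑ k, e k + 2 ^ q * (routingLength q h + r + 2))
    (hchain : ∀ R, Z ⊆ R → #R = 2 ^ q * r →
      ∃ σ : Perm (Σ k, Fin (s k)), Linked G R (r + 1) y (z ∘ σ)) :
    ∃ w : ∀ k, G.Walk (u k) (v k),
      (∀ k, (w k).length = s k * (routingLength q h + r + 2) + e k) ∧
      ∀ a ∈ U, ∃ k, a ∈ (w k).support := by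
  obtain ⟨hu, hyz, huyz⟩ := Sum.elim_injective.1 hu
  obtain ⟨hv, -, hvyz⟩ := Sum.elim_injective.1 hv
  obtain ⟨-, hz, hyz'⟩ := Sum.elim_injective.1 hyz
  have hyzQ : ∀ i, Sum.elim y z i ∉ Q := fun i hi =>
    (mem_sdiff.1 (hyzU i)).2 (mem_union_left _ hi)
  let last : κ → Σ k, Fin (s k) := fun k => ⟨k, s k - 1, Nat.sub_one_lt_of_lt (hs k)⟩
  have hlast : last.Injective := fun k k' h => congrArg Sigma.fst h
  obtain ⟨K, c, -, hext, hspend, hK, w', hw', hKw'⟩ :=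
    hQ.exists_paths hjoin (by omega) hM (p := z ∘ last) (fun i j => (hvyz j (Sum.inr _)).symm)
      (hz.comp hlast) hv (fun i => Or.inr (hyzQ (Sum.inr _))) (fun i => Or.inr (hvQ i))
      (fun _ => by omega) (fun _ => by omega) he (by rw [card_empty]; omega)
  rw [empty_union] at hext
  have hstartQ : ∀ i, tripStart u z i ∉ Q := fun i => by
    rcases exists_tripStart_eq u z i with ⟨k, hk⟩ | ⟨j, hj⟩
    exacts [hk ▸ huQ k, hj ▸ hyzQ (Sum.inr j)]
  have hstarty : ∀ i j, tripStart u z i ≠ y j := fun i j => by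
    rcases exists_tripStart_eq u z i with ⟨k, hk⟩ | ⟨i', hi⟩
    exacts [hk ▸ huyz k (Sum.inl j), hi ▸ (hyz' j i').symm]
  obtain ⟨w, hw, hUw⟩ := (hext.linked_sdiff hjoin hD hM hh (by simpa using hsum) hstarty
    (tripStart_injective hu hz fun k i => huyz k (Sum.inr i)) hstartQ hyz hyzU
    (fun i => by have := hspend.le_add_one (tripStart u z i); omega)
    (fun i => by have := hspend.le_add_one (y i); omega) (by omega) hQU hZU hZQ (by omega)
    hchain).exists_walks_of_trips hs
  refine ⟨fun k => (w k).append (w' k), fun k => by rw [Walk.length_append, hw, hw'],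
    fun a ha => ?_⟩
  simp only [Walk.mem_support_append_iff]
  by_cases haK : a ∈ K
  · exact (hKw' a haK).imp fun k => Or.inr
  · exact (hUw a (mem_sdiff.2 ⟨ha, haK⟩)).imp fun k => Or.inl

end Core

section Reservoir

open Finset Equiv

variable {V : Type*} [Fintype V] {G : SimpleGraph V} {t : ℕ}

lemma exists_branchPair_eq (ht : 2 ≤ t) (i : Fin t) :
    ∃ k : BranchPair t, i = k.1.1 ∨ i = k.1.2 := by
  by_cases hi : i = ⟨0, by omega⟩
  · exact ⟨⟨(i, ⟨1, by omega⟩), by simp [hi]⟩, Or.inl rfl⟩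
  · exact ⟨⟨(⟨0, by omega⟩, i), Fin.lt_def.2 (Nat.pos_of_ne_zero fun h => hi (Fin.ext h))⟩,
      Or.inr rfl⟩

lemma hasSpanningNearlyBalancedKSubdivision_of_inner (ht : 2 ≤ t) {b : Fin t → V}
    {u v : BranchPair t → V} (hu : ∀ k, G.Adj (b k.1.1) (u k)) (hv : ∀ k, G.Adj (v k) (b k.1.2))
    {w : ∀ k, G.Walk (u k) (v k)}
    (hcov : ∀ a ∉ Set.range (Sum.elim b (Sum.elim u v)), ∃ k, a ∈ (w k).support)
    (hcard : t + ∑ k, ((w k).length + 1) = Fintype.card V) {l : ℕ} (hl : 1 ≤ l)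
    (hbal : ∀ k, l ≤ (w k).length + 3 ∧ (w k).length + 1 ≤ l) :
    HasSpanningNearlyBalancedKSubdivision G t := by
  let w' : ∀ k : BranchPair t, G.Walk (b k.1.1) (b k.1.2) := fun k =>
    ((w k).concat (hv k)).cons (hu k)
  have hlen : ∀ k, (w' k).length = (w k).length + 2 := fun k => by
    rw [Walk.length_cons, Walk.length_concat]
  have hsupp : ∀ k, (w k).support ⊆ (w' k).support := fun k a ha => by
    simp [w', Walk.support_concat, ha]
  refine hasSpanningNearlyBalancedKSubdivision_of_card (w := w') (fun a => ?_) ?_ hl fun k => ?_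
  · by_cases ha : a ∈ Set.range (Sum.elim b (Sum.elim u v))
    · obtain ⟨i | k | k, rfl⟩ := ha
      · obtain ⟨k, rfl | rfl⟩ := exists_branchPair_eq ht i
        exacts [⟨k, Walk.start_mem_support _⟩, ⟨k, Walk.end_mem_support _⟩]
      exacts [⟨k, hsupp k (Walk.start_mem_support _)⟩, ⟨k, hsupp k (Walk.end_mem_support _)⟩]
    · exact (hcov a ha).imp fun k hk => hsupp k hk
  · simpa [hlen] using hcard
  · rw [hlen]
    have := hbal k
    omega

variable [DecidableEq V] [DecidableRel G.Adj] {Q Z : Finset V} {D M h q r : ℕ} {b : Fin t → V}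
  {u v : BranchPair t → V} {s e : BranchPair t → ℕ} {y z : (Σ k, Fin (s k)) → V}

theorem hasSpanningNearlyBalancedKSubdivision_of_reservoir (ht : 2 ≤ t)
    (hQ : Extendable G Q D M ∅ fun _ => D) (hjoin : SetsJoined G M) (hD : 4 ≤ D) (hM : M ≤ 2 ^ h)
    (hh : 1 ≤ h) (hu : ∀ k, G.Adj (b k.1.1) (u k)) (hv : ∀ k, G.Adj (v k) (b k.1.2))
    (hinj : (Sum.elim (Sum.elim b (Sum.elim u v)) (Sum.elim y z)).Injective)
    (hQZ : ∀ i, Sum.elim (Sum.elim b (Sum.elim u v)) (Sum.elim y z) i ∉ Q ∪ Z)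
    (hZQ : Disjoint Z Q) (hs : ∀ k, 0 < s k) (hsum : ∑ k, s k = 2 ^ q)
    (he : ∀ k, 2 * h + 1 ≤ e k)
    (hroom : ∑ k, e k + 2 ^ q * (routingLength q h + 1) + (spareRoom D M h + 1) ≤ #Q)
    (hcount : t + ∑ k, (s k * (routingLength q h + r + 2) + e k + 1) = Fintype.card V)
    (hchain : ∀ R, Z ⊆ R → #R = 2 ^ q * r →
      ∃ σ : Perm (Σ k, Fin (s k)), Linked G R (r + 1) y (z ∘ σ)) {l : ℕ} (hl : 1 ≤ l)
    (hbal : ∀ k, l ≤ s k * (routingLength q h + r + 2) + e k + 3 ∧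
      s k * (routingLength q h + r + 2) + e k + 1 ≤ l) :
    HasSpanningNearlyBalancedKSubdivision G t := by
  obtain ⟨hS, hyz, hne⟩ := Sum.elim_injective.1 hinj
  obtain ⟨-, huv, -⟩ := Sum.elim_injective.1 hS
  set S := univ.image (Sum.elim b (Sum.elim u v))
  have hSQZ : S ⊆ (Q ∪ Z)ᶜ := image_subset_iff.2 fun i _ => mem_compl.2 (hQZ (Sum.inl i))
  have hcard : #S + #Sᶜ = Fintype.card V := card_add_card_compl S
  rw [card_image_of_injective _ hS] at hcard
  simp only [card_univ, Fintype.card_sum, Fintype.card_fin, ← hcount, sum_add_distrib, ← sum_mul,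
    hsum, sum_const, smul_eq_mul, mul_one] at hcard
  obtain ⟨w, hw, hSw⟩ := hQ.exists_covering_walks hjoin hD hM hh hs hsum he (U := Sᶜ) (Z := Z)
    (u := u) (v := v) (y := y) (z := z) (r := r)
    (Sum.elim_injective.2 ⟨huv.comp Sum.inl_injective, hyz, fun k => hne (Sum.inr (Sum.inl k))⟩)
    (Sum.elim_injective.2 ⟨huv.comp Sum.inr_injective, hyz, fun k => hne (Sum.inr (Sum.inr k))⟩)
    (fun k hk => hQZ (Sum.inl (Sum.inr (Sum.inl k))) (mem_union_left _ hk))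
    (fun k hk => hQZ (Sum.inl (Sum.inr (Sum.inr k))) (mem_union_left _ hk))
    (fun i => mem_sdiff.2 ⟨by simpa [S] using fun j => hne j i, hQZ (Sum.inr i)⟩) hroom
    (subset_compl_comm.1 (hSQZ.trans (compl_subset_compl.2 subset_union_left)))
    (subset_compl_comm.1 (hSQZ.trans (compl_subset_compl.2 subset_union_right))) hZQ (by omega)
    hchain
  refine hasSpanningNearlyBalancedKSubdivision_of_inner ht hu hv (w := w)
    (fun a ha => hSw a (by simpa [S] using ha))
    (by simpa only [hw] using hcount) hl (by simpa only [hw] using hbal)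

end Reservoir

section Rich

open Finset

variable {V : Type*} {G : SimpleGraph V} [DecidableRel G.Adj] {p lam δ : ℝ}

/-- Every vertex has at least `δ` neighbours in `A`. -/
def Rich (G : SimpleGraph V) [DecidableRel G.Adj] (δ : ℝ) (A : Finset V) : Prop :=
  ∀ v, δ ≤ #{w ∈ A | G.Adj v w}

lemma Rich.mono {A : Finset V} {δ' : ℝ} (h : Rich G δ A) (hδ : δ' ≤ δ) : Rich G δ' A :=
  fun v => hδ.trans (h v)

lemma Rich.subset {A B : Finset V} (h : Rich G δ A) (hAB : A ⊆ B) : Rich G δ B := fun v =>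
  (h v).trans (by gcongr)

lemma Rich.biUnion [DecidableEq V] {κ : Type*} {I : Finset κ} {P : κ → Finset V}
    (h : ∀ i ∈ I, Rich G δ (P i)) (hP : Pairwise (Function.onFun Disjoint P)) :
    Rich G (#I * δ) (I.biUnion P) := by
  classical
  intro v
  rw [filter_biUnion, card_biUnion fun i _ j _ hij => disjoint_filter_filter (hP hij),
    Nat.cast_sum, ← nsmul_eq_mul]
  exact card_nsmul_le_sum _ _ _ fun i hi => h i hi v

lemma Jumbled.extendable [DecidableEq V] (hJ : Jumbled G p lam) (hp : 0 ≤ p) (hlam : 0 ≤ lam)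
    {Q : Finset V} {D M : ℕ} (hQ : Rich G δ Q) (hδ : p * (2 * D * M) + lam * √D < δ) :
    Extendable G Q D M ∅ fun _ => D := by
  refine ⟨empty_subset _, fun _ => le_rfl, fun _ _ _ => rfl, fun U hU => ?_⟩
  rw [sum_const, smul_eq_mul, sdiff_empty, mul_comm]
  refine hJ.mul_card_le_card_nbrsIn hp hlam (fun u _ => hQ u) (lt_of_le_of_lt ?_ hδ)
  have hDU : (D * #U : ℝ) ≤ 2 * D * M := by exact_mod_cast (by nlinarith : D * #U ≤ 2 * D * M)
  gcongr

section Cover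

variable {ι : Type*} [Fintype ι]

lemma Jumbled.card_le_card_nbrsIn_of_rich (hJ : Jumbled G p lam) (hp : 0 < p) (hlam : 0 ≤ lam)
    (hδ : 2 * lam < δ) {X S : Finset V} (hX : Rich G δ X) (hS : #S ≤ ⌊lam / p⌋₊) :
    #S ≤ #(nbrsIn G X S) := by
  have hpS : p * #S ≤ lam := by
    rw [← le_div_iff₀' hp]
    exact (Nat.cast_le.2 hS).trans (Nat.floor_le (by positivity))
  simpa using hJ.mul_card_le_card_nbrsIn (K := 1) hp.le hlam (fun u _ => hX u)
    (by simp; linarith)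

variable [DecidableEq V]

lemma Jumbled.exists_linked_one_of_rich (hJ : Jumbled G p lam) (hp : 0 < p) (hlam : 0 ≤ lam)
    (hδ : 2 * lam < δ) {a : ι → V} (ha : a.Injective) (har : Rich G δ (univ.image a))
    {B : Finset V} (hB : #B = Fintype.card ι) (hBr : Rich G δ B) :
    ∃ a' : ι → V, a'.Injective ∧ univ.image a' = B ∧ Linked G B 1 a a' := by
  refine exists_linked_one_of_card_le_card_nbrsIn ha hB fun S hS =>
    card_le_card_nbrsIn_of_setsJoined (N := ⌊lam / p⌋₊) ?_ hS
      (fun S _ => hJ.card_le_card_nbrsIn_of_rich hp hlam hδ hBr)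
      (fun T _ => hJ.card_le_card_nbrsIn_of_rich hp hlam hδ har) (hJ.setsJoined hp hlam ?_)
  · rw [card_image_of_injective _ ha, card_univ, hB]
  · rw [← div_lt_iff₀' hp]
    exact_mod_cast Nat.lt_floor_add_one (lam / p)

lemma Jumbled.exists_linked_biUnion (hJ : Jumbled G p lam) (hp : 0 < p) (hlam : 0 ≤ lam)
    (hδ : 2 * lam < δ) {a : ι → V} (ha : a.Injective) (har : Rich G δ (univ.image a))
    {B : Finset V} (hB : #B = Fintype.card ι) (hBr : Rich G δ B) {r : ℕ} {P : Fin r → Finset V}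
    (hP : ∀ i, #(P i) = Fintype.card ι) (hPr : ∀ i, Rich G δ (P i)) :
    ∃ a' : ι → V, a'.Injective ∧ univ.image a' = B ∧
      Linked G (univ.biUnion P) (r + 1) a a' := by
  induction r generalizing a with
  | zero =>
    obtain ⟨a', ha', hB', hlink⟩ := hJ.exists_linked_one_of_rich hp hlam hδ ha har hB hBr
    exact ⟨a', ha', hB', hlink.mono (by simp)⟩
  | succ r ih =>
    obtain ⟨a₁, ha₁, hP₁, hlink₁⟩ := hJ.exists_linked_one_of_rich hp hlam hδ ha har (hP 0) (hPr 0)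
    obtain ⟨a', ha', hB', hlink⟩ := ih ha₁ (hP₁ ▸ hPr 0) (fun i => hP i.succ) fun i => hPr i.succ
    refine ⟨a', ha', hB', ?_⟩
    rw [add_comm (r + 1)]
    refine (hlink₁.trans hlink).mono fun v hv => ?_
    simpa [Fin.exists_fin_succ] using hv

lemma exists_perm_comp_eq {a z : ι → V} (ha : a.Injective) (h : univ.image a = univ.image z) :
    ∃ σ : Equiv.Perm ι, z ∘ σ = a := by
  have hmem : ∀ i, ∃ j, z j = a i := fun i => by
    simpa [h] using mem_image_of_mem a (mem_univ i)
  choose σ hσ using hmem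
  have hinj : σ.Injective := fun i j hij => ha (by rw [← hσ, ← hσ, hij])
  exact ⟨Equiv.ofBijective σ (Finite.injective_iff_bijective.1 hinj), funext hσ⟩

-- The set is split into `r` rich layers of equal size, and consecutive layers are matched.
theorem Jumbled.exists_linked_perm [Fintype V] (hJ : Jumbled G p lam) (hp : 0 < p)
    (hlam : 0 ≤ lam) (hδ : 2 * lam < δ) {a z : ι → V} (ha : a.Injective)
    (har : Rich G δ (univ.image a)) (hz : z.Injective) (hzr : Rich G δ (univ.image z)) {r : ℕ}
    {R : Finset V} (hR : #R = Fintype.card ι * r) (hRr : Rich G (4 * (r + 1) * δ) R)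
    (hbig : (Fintype.card V : ℝ) * r < Real.exp δ) :
    ∃ σ : Equiv.Perm ι, Linked G R (r + 1) a (z ∘ σ) := by
  have hδ' : 4 * ((r : ℝ) + 1) * δ / (4 * (r + 1)) = δ := by field_simp
  obtain ⟨P, hPR, hPcard, hPdisj, hPr⟩ := exists_degree_preserving_parts G R hR.ge
    (hR.le.trans (Nat.mul_le_mul_left _ r.le_succ)) hRr (by rwa [hδ'])
  rw [hδ'] at hPr
  obtain ⟨a', ha', hB', hlink⟩ := hJ.exists_linked_biUnion hp hlam hδ ha har
    (by rw [card_image_of_injective _ hz, card_univ]) hzr hPcard fun i v => hPr v i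
  obtain ⟨σ, rfl⟩ := exists_perm_comp_eq ha' hB'
  refine ⟨σ, hlink.mono (eq_of_subset_of_card_le (biUnion_subset.2 fun i _ => hPR i) ?_).ge⟩
  rw [card_biUnion fun i _ j _ hij => hPdisj hij]
  simp [hPcard, hR, mul_comm]

end Cover

end Rich

section Stars

open Finset

variable {V : Type*} {G : SimpleGraph V}

lemma Jumbled.exists_le_degree_within [DecidableRel G.Adj] {p lam : ℝ} (hJ : Jumbled G p lam)
    {X : Finset V} (hX : X.Nonempty) {t : ℕ} (h : t ≤ p * #X - lam) :
    ∃ v ∈ X, t ≤ #{w ∈ X | G.Adj v w} := by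
  have hlow : #X * (t : ℝ) ≤ #(G.interedges X X) := by
    have := (abs_le.1 (hJ X X)).1
    rw [Real.sqrt_mul_self (Nat.cast_nonneg _)] at this
    nlinarith [Nat.cast_nonneg (α := ℝ) #X]
  refine exists_le_of_sum_le hX ?_
  rw [sum_const, smul_eq_mul, ← card_interedges_eq_sum]
  exact_mod_cast hlow

lemma exists_pairwise_disjoint_of_greedy {P : Finset V → Prop} {c t : ℕ}
    (hP : ∀ S, P S → #S ≤ c) (h : ∀ U : Finset V, #U ≤ t * c → ∃ S, P S ∧ Disjoint S U) :
    ∃ S : Fin t → Finset V, (∀ i, P (S i)) ∧ Pairwise (Function.onFun Disjoint S) := by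
  classical
  suffices h' : ∀ k ≤ t, ∃ S : Fin k → Finset V, (∀ i, P (S i)) ∧
      Pairwise (Function.onFun Disjoint S) from h' t le_rfl
  intro k hk
  induction k with
  | zero => exact ⟨fun _ => ∅, fun i => i.elim0, fun i => i.elim0⟩
  | succ k ih =>
    obtain ⟨S, hS, hdisj⟩ := ih (by omega)
    obtain ⟨S₀, hS₀, hdisj₀⟩ := h (univ.biUnion S) <|
      (card_biUnion_le_card_mul _ _ c fun i _ => hP _ (hS i)).trans
        (Nat.mul_le_mul_right c (by simpa using by omega))
    rw [disjoint_biUnion_right] at hdisj₀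
    refine ⟨Fin.cons S₀ S, fun i => ?_, fun i j hij => ?_⟩
    · cases i using Fin.cases with
      | zero => exact hS₀
      | succ i => exact hS i
    · cases i using Fin.cases with
      | zero =>
        cases j using Fin.cases with
        | zero => exact absurd rfl hij
        | succ j => exact hdisj₀ j (mem_univ j)
      | succ i =>
        cases j using Fin.cases with
        | zero => exact (hdisj₀ i (mem_univ i)).symm
        | succ j => exact hdisj (ne_of_apply_ne Fin.succ hij)

variable [DecidableEq V]

lemma exists_disjoint_stars [DecidableRel G.Adj] {X : Finset V} {t : ℕ}
    (hX : ∀ U, #U ≤ t * (t + 1) → ∃ v ∈ X \ U, t ≤ #{w ∈ X \ U | G.Adj v w}) :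
    ∃ (b : Fin t → V) (leaf : Fin t × Fin t → V), (Sum.elim b leaf).Injective ∧
      (∀ x, G.Adj (b x.1) (leaf x)) ∧ ∀ i, Sum.elim b leaf i ∈ X := by
  obtain ⟨S, hS, hdisj⟩ := exists_pairwise_disjoint_of_greedy (c := t + 1)
    (P := fun S => S ⊆ X ∧ ∃ (v : V) (l : Fin t → V), l.Injective ∧ (∀ j, G.Adj v (l j)) ∧
      S = insert v (univ.image l))
    (by
      rintro _ ⟨-, v, l, -, -, rfl⟩
      exact (card_insert_le _ _).trans (Nat.succ_le_succ (card_image_le.trans (by simp))))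
    fun U hU => by
      obtain ⟨v, hv, hvt⟩ := hX U hU
      obtain ⟨L, hL, hLt⟩ := exists_subset_card_eq hvt
      obtain ⟨l, hl, rfl⟩ := exists_injective_image_eq (ι := Fin t) (by simpa using hLt)
      have hsub : insert v (univ.image l) ⊆ X \ U :=
        insert_subset hv (hL.trans (filter_subset _ _))
      exact ⟨_, ⟨hsub.trans sdiff_subset, v, l, hl, fun j =>
        (mem_filter.1 (hL (mem_image_of_mem l (mem_univ j)))).2, rfl⟩, (subset_sdiff.1 hsub).2⟩
  choose hSX b l hl hadj hSeq using hS
  have hb : ∀ i, b i ∈ S i := fun i => hSeq i ▸ mem_insert_self _ _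
  have hlS : ∀ i j, l i j ∈ S i := fun i j =>
    hSeq i ▸ mem_insert_of_mem (mem_image_of_mem _ (mem_univ j))
  have hsame : ∀ {z i j}, z ∈ S i → z ∈ S j → i = j := fun hi hj => by
    by_contra hij
    exact Finset.disjoint_left.1 (hdisj hij) hi hj
  refine ⟨b, fun x => l x.1 x.2, Sum.elim_injective.2 ⟨fun i j hij => hsame (hb i) (hij ▸ hb j),
    ?_, ?_⟩, fun x => hadj _ _, ?_⟩
  · rintro ⟨i, j⟩ ⟨i', j'⟩ (hij : l i j = l i' j')
    obtain rfl := hsame (hlS i j) (hij ▸ hlS i' j')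
    rw [hl i hij]
  · rintro i ⟨i', j⟩ hij
    obtain rfl := hsame (hb i) (hij ▸ hlS i' j)
    exact (hadj i j).ne hij
  · rintro (i | ⟨i, j⟩)
    exacts [hSX i (hb i), hSX i (hlS i j)]

-- The leaf `(i, j)` with `i < j` starts the branching path between the centres `i` and `j`, and the
-- leaf `(j, i)` ends it.
lemma exists_branch_stars [DecidableRel G.Adj] {X : Finset V} {t : ℕ}
    (hX : ∀ U, #U ≤ t * (t + 1) → ∃ v ∈ X \ U, t ≤ #{w ∈ X \ U | G.Adj v w}) :
    ∃ (b : Fin t → V) (u v : BranchPair t → V), (Sum.elim b (Sum.elim u v)).Injective ∧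
      (∀ k, G.Adj (b k.1.1) (u k)) ∧ (∀ k, G.Adj (v k) (b k.1.2)) ∧
      ∀ i, Sum.elim b (Sum.elim u v) i ∈ X := by
  obtain ⟨b, leaf, hinj, hadj, hmem⟩ := exists_disjoint_stars hX
  obtain ⟨hb, hleaf, hbleaf⟩ := Sum.elim_injective.1 hinj
  refine ⟨b, fun k => leaf k.1, fun k => leaf k.1.swap, Sum.elim_injective.2 ⟨hb,
    Sum.elim_injective.2 ⟨hleaf.comp Subtype.val_injective,
      hleaf.comp (Prod.swap_injective.comp Subtype.val_injective), fun k k' h => ?_⟩, ?_⟩,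
    fun k => hadj _, fun k => (hadj k.1.swap).symm, ?_⟩
  · have hkk' : k.1 = k'.1.swap := hleaf h
    have h₁ : k.1.1 = k'.1.2 := congrArg Prod.fst hkk'
    have h₂ : k.1.2 = k'.1.1 := congrArg Prod.snd hkk'
    exact (k.2.trans_eq h₂).asymm (k'.2.trans_eq h₁.symm)
  · rintro i (k | k)
    exacts [hbleaf i k.1, hbleaf i k.1.swap]
  · rintro (i | k | k)
    exacts [hmem (Sum.inl i), hmem (Sum.inr k.1), hmem (Sum.inr k.1.swap)]

end Stars

section Parameters

open Finset

lemma exists_balanced_sum {κ : Type*} [Fintype κ] [Nonempty κ] (N : ℕ) :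
    ∃ s : κ → ℕ, (∀ k, N / Fintype.card κ ≤ s k ∧ s k ≤ N / Fintype.card κ + 1) ∧
      ∑ k, s k = N := by
  set m := Fintype.card κ
  have hlt : N % m < m := Nat.mod_lt N Fintype.card_pos
  refine ⟨fun k => N / m + if (Fintype.equivFin κ k : ℕ) < N % m then 1 else 0, fun k => ?_, ?_⟩
  · dsimp only
    split_ifs <;> omega
  · have hfilter : {i ∈ range m | i < N % m} = range (N % m) := by
      ext i
      simp only [mem_filter, mem_range]
      omega
    rw [(Fintype.equivFin κ).sum_comp (fun i : Fin m => N / m + if (i : ℕ) < N % m then 1 else 0),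
      sum_add_distrib, sum_const, card_univ, Fintype.card_fin, smul_eq_mul,
      Fin.sum_univ_eq_sum_range (fun i => if i < N % m then 1 else 0), ← card_filter, hfilter,
      card_range, Nat.div_add_mod]

lemma exists_balanced_lengths {κ : Type*} [Fintype κ] [Nonempty κ] {N T L n : ℕ}
    (h : (N / Fintype.card κ + 1) * T + (L + 1) ≤ n / Fintype.card κ) :
    ∃ (s e : κ → ℕ) (l : ℕ), (∀ k, N / Fintype.card κ ≤ s k) ∧ ∑ k, s k = N ∧ (∀ k, L ≤ e k) ∧
      ∑ k, (s k * T + e k + 1) = n ∧ 1 ≤ l ∧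
      ∀ k, l ≤ s k * T + e k + 3 ∧ s k * T + e k + 1 ≤ l := by
  obtain ⟨s, hs, hsum⟩ := exists_balanced_sum (κ := κ) N
  obtain ⟨x, hx, hxsum⟩ := exists_balanced_sum (κ := κ) n
  have hsT : ∀ k, s k * T + (L + 1) ≤ x k := fun k =>
    (Nat.add_le_add_right (Nat.mul_le_mul_right T (hs k).2) _).trans (h.trans (hx k).1)
  have hsx : ∀ k, s k * T + (x k - 1 - s k * T) + 1 = x k := fun k => by
    have := hsT k
    omega
  refine ⟨s, fun k => x k - 1 - s k * T, n / Fintype.card κ + 1, fun k => (hs k).1, hsum,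
    fun k => ?_, ?_, by omega, fun k => ?_⟩
  · have := hsT k
    dsimp only
    omega
  · simpa only [hsx] using hxsum
  · have := hsx k
    have := hx k
    dsimp only
    omega

lemma exists_segment_length {m n t N L : ℕ} (hm : 0 < m) (hN : 1000 * m ≤ N)
    (hNn : 1000 * N ≤ n) (ht : 1000 * t ≤ n) (hL : 1000 * (m * (L + 1)) ≤ n) :
    ∃ T, (N / m + 1) * T + (L + 1) ≤ (n - t) / m ∧ 99 * n ≤ 100 * (N * T) ∧ N * T ≤ n := by
  set P := N / m
  set l := (n - t) / m
  have hLl : L + 1 ≤ l := (Nat.le_div_iff_mul_le hm).2 (by rw [mul_comm]; omega)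
  set T := (l - (L + 1)) / (P + 1)
  have hT : (P + 1) * T ≤ l - (L + 1) := Nat.mul_div_le _ _
  have hT' : l - (L + 1) + 1 ≤ (P + 1) * (T + 1) := Nat.lt_mul_div_succ _ P.succ_pos
  have hl : n - t < m * (l + 1) := Nat.lt_mul_div_succ _ hm
  have hlm : m * l ≤ n - t := Nat.mul_div_le _ _
  have hPm : m * P ≤ N := Nat.mul_div_le _ _
  have hNP : N ≤ m * (P + 1) := (Nat.lt_mul_div_succ _ hm).le
  refine ⟨T, by omega, ?_, ?_⟩
  · have hsplit : m * (l + 1) = m * (l - (L + 1) + 1) + m * (L + 1) := by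
      rw [← Nat.mul_add]
      congr 1
      omega
    have hmul : m * (l - (L + 1) + 1) ≤ m * ((P + 1) * (T + 1)) := Nat.mul_le_mul_left _ hT'
    have hround : 1000 * (m * ((P + 1) * (T + 1))) ≤ 1001 * (N * (T + 1)) :=
      calc 1000 * (m * ((P + 1) * (T + 1))) = (1000 * (m * P) + 1000 * m) * (T + 1) := by ring
        _ ≤ (1000 * N + N) * (T + 1) := Nat.mul_le_mul_right _ (by omega)
        _ = 1001 * (N * (T + 1)) := by ring
    rw [Nat.mul_succ N T] at hround
    omega
  · calc N * T ≤ m * (P + 1) * T := Nat.mul_le_mul_right T hNP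
      _ = m * ((P + 1) * T) := mul_assoc _ _ _
      _ ≤ m * l := Nat.mul_le_mul_left m (hT.trans (Nat.sub_le _ _))
      _ ≤ n := hlm.trans (Nat.sub_le _ _)

lemma exists_two_pow_mul_le_lt {n c : ℕ} (hc : 0 < c) (hcn : c ≤ n) :
    ∃ q, 2 ^ q * c ≤ n ∧ n < 2 ^ q * (2 * c) := by
  refine ⟨Nat.log 2 (n / c), ?_, ?_⟩
  · exact (Nat.le_div_iff_mul_le hc).1 (Nat.pow_log_le_self 2 (Nat.div_pos hcn hc).ne')
  · have h := (Nat.div_lt_iff_lt_mul hc).1 (Nat.lt_pow_succ_log_self one_lt_two (n / c))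
    rwa [pow_succ, mul_assoc] at h

lemma exists_le_two_pow_le {M : ℕ} (hM : 2 ≤ M) : ∃ h, 1 ≤ h ∧ M ≤ 2 ^ h ∧ 2 ^ h ≤ 2 * M := by
  refine ⟨Nat.clog 2 M, Nat.clog_pos one_lt_two hM, Nat.le_pow_clog one_lt_two M, ?_⟩
  calc 2 ^ Nat.clog 2 M = 2 * 2 ^ (Nat.clog 2 M - 1) := by
        rw [← pow_succ', Nat.sub_add_cancel (Nat.clog_pos one_lt_two hM)]
    _ ≤ 2 * M := Nat.mul_le_mul_left _ (Nat.pow_pred_clog_lt_self one_lt_two hM).le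

lemma routingLength_add_two_le {q h Λ : ℕ} (hΛ : 100 ≤ Λ) (hq : q ≤ Λ) (hh : h ≤ Λ) :
    routingLength q h + 2 ≤ 6 * Λ ^ 3 := by
  calc routingLength q h + 2 ≤ 2 * Λ * (Λ * (2 * Λ + 2) + 1) + 2 * Λ + 2 := by
        rw [routingLength, switchLength]
        gcongr
    _ ≤ 6 * Λ ^ 3 := by nlinarith [Nat.mul_le_mul hΛ (Nat.le_refl (Λ ^ 2))]

/-- The scales of the construction on `n < 2 ^ (Λ + 1)` vertices: the vertex set is cut into
`n / 2 ^ q` parts of size `2 ^ q`, of which there are of order `Λ ^ 3`, and trees of depth `h` in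
the reservoir reach the `n / 10 ^ 4` vertices at which any two sets are joined by an edge. -/
structure Scales (n Λ q h : ℕ) : Prop where
  one_le_depth : 1 ≤ h
  le_two_pow_depth : n / 10 ^ 4 ≤ 2 ^ h
  two_pow_depth_le : 2 ^ h ≤ 2 * (n / 10 ^ 4)
  two_pow_mul_le : 2 ^ q * (1000 * Λ ^ 3) ≤ n
  lt_two_pow_mul : n < 2 ^ q * (2 * (1000 * Λ ^ 3))
  lt_two_pow : n < 2 ^ (Λ + 1)

lemma exists_scales {n Λ : ℕ} (hΛ : 100 ≤ Λ) (hn : 1000 * Λ ^ 3 ≤ n) (hnΛ : n < 2 ^ (Λ + 1)) :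
    ∃ q h, Scales n Λ q h := by
  have hΛ3 : 10 ^ 6 ≤ Λ ^ 3 := Nat.pow_le_pow_left hΛ 3
  obtain ⟨q, hq, hq'⟩ := exists_two_pow_mul_le_lt (by omega) hn
  obtain ⟨h, hh, hM, hM'⟩ := exists_le_two_pow_le (M := n / 10 ^ 4) (by omega)
  exact ⟨q, h, hh, hM, hM', hq, hq', hnΛ⟩

namespace Scales

variable {n Λ q h : ℕ}

lemma le_numParts (hS : Scales n Λ q h) : 1000 * Λ ^ 3 ≤ n / 2 ^ q :=
  (Nat.le_div_iff_mul_le (by positivity)).2 (by simpa only [mul_comm] using hS.two_pow_mul_le)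

lemma numParts_lt (hS : Scales n Λ q h) : n / 2 ^ q < 2000 * Λ ^ 3 :=
  (Nat.div_lt_iff_lt_mul (by positivity)).2 (by linarith [hS.lt_two_pow_mul])

lemma le_two_pow_of_mul_le (hS : Scales n Λ q h) {k : ℕ} (hk : k * (2 * (1000 * Λ ^ 3)) ≤ n) :
    k ≤ 2 ^ q :=
  (Nat.lt_of_mul_lt_mul_right (hk.trans_lt hS.lt_two_pow_mul)).le

lemma mul_two_pow_le (hS : Scales n Λ q h) (hΛ : 100 ≤ Λ) : 10 ^ 9 * 2 ^ q ≤ n :=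
  calc 10 ^ 9 * 2 ^ q = 2 ^ q * (1000 * 100 ^ 3) := by ring
    _ ≤ 2 ^ q * (1000 * Λ ^ 3) := by gcongr
    _ ≤ n := hS.two_pow_mul_le

lemma routingLength_le (hS : Scales n Λ q h) (hΛ : 100 ≤ Λ) :
    routingLength q h + 2 ≤ 6 * Λ ^ 3 := by
  have hexp : ∀ {k}, 2 ^ k ≤ n → k ≤ Λ := fun hk => Nat.lt_succ_iff.1 <|
    (Nat.pow_lt_pow_iff_right one_lt_two).1 (hk.trans_lt hS.lt_two_pow)
  have hq := hS.mul_two_pow_le hΛ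
  have hh := hS.two_pow_depth_le
  exact routingLength_add_two_le hΛ (hexp (by omega)) (hexp (by omega))

lemma exists_path_lengths (hS : Scales n Λ q h) (hΛ : 100 ≤ Λ) {κ : Type*} [Fintype κ]
    [Nonempty κ] (hκ : 1000 * Fintype.card κ ≤ 2 ^ q) {t : ℕ} (ht : 1000 * t ≤ n) :
    ∃ (r l : ℕ) (s e : κ → ℕ), r + 1 ≤ n / 2 ^ q ∧ (∀ k, 0 < s k) ∧ ∑ k, s k = 2 ^ q ∧
      (∀ k, 2 * h + 1 ≤ e k) ∧
      5 * (∑ k, e k + 2 ^ q * (routingLength q h + 1) + (spareRoom 4 (n / 10 ^ 4) h + 1)) ≤ n ∧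
      t + ∑ k, (s k * (routingLength q h + r + 2) + e k + 1) = n ∧ 1 ≤ l ∧
      ∀ k, l ≤ s k * (routingLength q h + r + 2) + e k + 3 ∧
        s k * (routingLength q h + r + 2) + e k + 1 ≤ l := by
  have hq := Nat.two_pow_pos q
  have hqn := hS.mul_two_pow_le hΛ
  have hhn := hS.two_pow_depth_le
  have hL : 1000 * (2 ^ q * (routingLength q h + 2)) ≤ 6 * n :=
    calc 1000 * (2 ^ q * (routingLength q h + 2)) ≤ 1000 * (2 ^ q * (6 * Λ ^ 3)) := by
          gcongr
          exact hS.routingLength_le hΛ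
      _ = 6 * (2 ^ q * (1000 * Λ ^ 3)) := by ring
      _ ≤ 6 * n := Nat.mul_le_mul_left 6 hS.two_pow_mul_le
  have hκh : 1000 * (Fintype.card κ * (2 * h + 1 + 1)) ≤ n :=
    calc 1000 * (Fintype.card κ * (2 * h + 1 + 1)) = 1000 * Fintype.card κ * (2 * h + 2) := by ring
      _ ≤ 2 ^ q * (routingLength q h + 2) := by rw [routingLength]; gcongr; omega
      _ ≤ n := by omega
  obtain ⟨T, hT, hTlo, hThi⟩ := exists_segment_length (Fintype.card_pos (α := κ)) hκ
    (by omega : 1000 * 2 ^ q ≤ n) ht hκh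
  obtain ⟨r, rfl⟩ : ∃ r, T = routingLength q h + r + 2 := by
    suffices routingLength q h + 2 ≤ T from ⟨T - (routingLength q h + 2), by omega⟩
    by_contra! hlt
    have := Nat.mul_le_mul_left (2 ^ q) hlt.le
    omega
  have hr : routingLength q h + r + 2 ≤ n / 2 ^ q :=
    (Nat.le_div_iff_mul_le (by positivity)).2 (by rwa [mul_comm])
  obtain ⟨s, e, l, hs, hsum, he, hcount, hl, hbal⟩ := exists_balanced_lengths hT
  refine ⟨r, l, s, e, by omega, fun k => lt_of_lt_of_le ?_ (hs k), hsum, he, ?_, by omega, hl, hbal⟩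
  · exact Nat.div_pos (by omega) Fintype.card_pos
  · rw [sum_add_distrib, sum_add_distrib, ← sum_mul, hsum] at hcount
    rw [Nat.mul_add_one, spareRoom]
    rw [Nat.mul_add _ (routingLength q h) 2] at hL
    omega

end Scales

end Parameters

section Main

open Finset

variable {V : Type*} [Fintype V] {G : SimpleGraph V} [DecidableRel G.Adj]

lemma exists_rich_blocks {ι : Type*} [Fintype ι] {N s : ℕ} {δ : ℝ} (hG : Rich G δ univ)
    (hlo : N * s ≤ Fintype.card V) (hhi : Fintype.card V ≤ N * (s + 1))
    (hbig : (Fintype.card V : ℝ) * s < Real.exp (δ / (4 * (s + 1)))) {m : ι → ℕ}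
    (hm : ∑ i, m i ≤ s) :
    ∃ B : ι → Finset V, (∀ i, #(B i) = m i * N) ∧ Pairwise (Function.onFun Disjoint B) ∧
      ∀ i, Rich G (m i * (δ / (4 * (s + 1)))) (B i) := by
  classical
  obtain ⟨P, -, hPcard, hPdisj, hPrich⟩ :=
    exists_degree_preserving_parts G univ (by simpa using hlo) (by simpa using hhi) hG hbig
  obtain ⟨f⟩ : Nonempty ((Σ i, Fin (m i)) ↪ Fin s) :=
    Function.Embedding.nonempty_of_card_le (by simpa using hm)
  have hdisj : ∀ {x y}, x ≠ y → Disjoint (P (f x)) (P (f y)) := fun hxy =>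
    hPdisj (f.injective.ne hxy)
  refine ⟨fun i => univ.biUnion fun j => P (f ⟨i, j⟩), fun i => ?_, fun i i' hi => ?_, fun i => ?_⟩
  · rw [card_biUnion fun j _ j' _ hj => hdisj (by simpa using hj)]
    simp [hPcard]
  · refine (disjoint_biUnion_left _ _ _).2 fun j _ => (disjoint_biUnion_right _ _ _).2 fun j' _ =>
      hdisj fun h => hi (congrArg Sigma.fst h)
  · simpa using Rich.biUnion (I := (univ : Finset (Fin (m i)))) (P := fun j => P (f ⟨i, j⟩))
      (fun j _ v => hPrich v _) fun j j' hj => hdisj (by simpa using hj)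

lemma natCast_mul_lt_exp {n m Λ : ℕ} (hn : n < 2 ^ (Λ + 1)) (hm : m ≤ n) :
    (n : ℝ) * m < Real.exp (2 * (Λ + 1)) := by
  have hexp : (n : ℝ) < Real.exp (Λ + 1) :=
    calc (n : ℝ) < 2 ^ (Λ + 1) := by exact_mod_cast hn
      _ ≤ Real.exp 1 ^ (Λ + 1) := by
        have := Real.add_one_le_exp (1 : ℝ)
        gcongr
        linarith
      _ = Real.exp (Λ + 1) := by rw [← Real.exp_nat_mul, mul_one]; push_cast; rfl
  calc (n : ℝ) * m ≤ n * n := by gcongr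
    _ < Real.exp (Λ + 1) * Real.exp (Λ + 1) := by gcongr
    _ = Real.exp (2 * (Λ + 1)) := by rw [← Real.exp_add, ← two_mul]

lemma Scales.exists_blocks {Λ q h : ℕ} (hS : Scales (Fintype.card V) Λ q h) (hΛ : 100 ≤ Λ)
    {d δ : ℝ} (hG : Rich G d univ) (hδ : 4 * (Λ : ℝ) ≤ δ) (hd : 160000 * (Λ : ℝ) ^ 3 * δ ≤ d) :
    ∃ Q X Z A B : Finset V, Pairwise (Function.onFun Disjoint ![Q, X, Z, A, B]) ∧
      Fintype.card V ≤ 5 * #Q ∧ Fintype.card V ≤ 5 * #X ∧ #A = 2 ^ q ∧ #B = 2 ^ q ∧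
      Rich G (d / 20) Q ∧ Rich G (d / 20) Z ∧ Rich G δ A ∧ Rich G δ B := by
  set n := Fintype.card V
  set s := n / 2 ^ q
  set g := s / 4
  have hΛ3 : 100 ≤ Λ ^ 3 := hΛ.trans (Nat.le_self_pow (by norm_num) _)
  have hslo : 1000 * Λ ^ 3 ≤ s := hS.le_numParts
  have hns : n < 2 ^ q * (s + 1) := Nat.lt_mul_div_succ _ (by positivity)
  have hs' : (s : ℝ) + 1 ≤ 2000 * (Λ : ℝ) ^ 3 := by exact_mod_cast hS.numParts_lt
  have hg : (s : ℝ) + 1 ≤ 5 * g := by exact_mod_cast (by omega : s + 1 ≤ 5 * g)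
  have hgs : g + (g + (g + (1 + 1))) ≤ s := by omega
  have hΛ' : (100 : ℝ) ≤ Λ := by exact_mod_cast hΛ
  have hδ0 : 0 ≤ δ := by linarith
  have hd0 : 0 ≤ d := le_trans (by positivity) hd
  have hsδ : δ ≤ d / (4 * (s + 1)) := by
    rw [le_div_iff₀ (by positivity)]
    nlinarith [mul_le_mul_of_nonneg_right hs' hδ0]
  have hgd : d / 20 ≤ g * (d / (4 * (s + 1))) := by
    rw [mul_div_assoc', div_le_div_iff₀ (by norm_num) (by positivity)]
    nlinarith
  obtain ⟨B, hBcard, hBdisj, hBrich⟩ := exists_rich_blocks (m := ![g, g, g, 1, 1]) hG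
    (Nat.mul_div_le _ _) hns.le
    ((natCast_mul_lt_exp hS.lt_two_pow (Nat.div_le_self _ _)).trans_le <|
      Real.exp_le_exp.2 (by linarith))
    (by simpa [Fin.sum_univ_succ] using hgs)
  have hgn : n ≤ 5 * (g * 2 ^ q) :=
    calc n ≤ 2 ^ q * (s + 1) := hns.le
      _ ≤ 2 ^ q * (5 * g) := Nat.mul_le_mul_left _ (by omega)
      _ = 5 * (g * 2 ^ q) := by ring
  have hone : δ ≤ ((1 : ℕ) : ℝ) * (d / (4 * (s + 1))) := by simpa using hsδ
  refine ⟨B 0, B 1, B 2, B 3, B 4, ?_, ?_, ?_, ?_, ?_, (hBrich 0).mono hgd, (hBrich 2).mono hgd,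
    (hBrich 3).mono hone, (hBrich 4).mono hone⟩
  · convert hBdisj using 2
    ext i : 1
    fin_cases i <;> rfl
  · simpa [hBcard] using hgn
  · simpa [hBcard] using hgn
  · simp [hBcard]
  · simp [hBcard]

lemma Jumbled.exists_branch_stars {d lam : ℝ}
    (hJ : Jumbled G (d / Fintype.card V) lam) {X : Finset V} {t : ℕ}
    (hX : Fintype.card V ≤ 5 * #X) (ht : 0 < t) (htn : 10 * (t * (t + 1)) ≤ Fintype.card V)
    (htd : t + lam ≤ d / 10) (hd : 0 ≤ d) :
    ∃ (b : Fin t → V) (u v : BranchPair t → V), (Sum.elim b (Sum.elim u v)).Injective ∧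
      (∀ k, G.Adj (b k.1.1) (u k)) ∧ (∀ k, G.Adj (v k) (b k.1.2)) ∧
      ∀ i, Sum.elim b (Sum.elim u v) i ∈ X := by
  classical
  have htt : 0 < t * (t + 1) := by positivity
  refine _root_.exists_branch_stars fun U hU => ?_
  have hXU : Fintype.card V ≤ 10 * #(X \ U) := by
    have := le_card_sdiff U X
    omega
  refine hJ.exists_le_degree_within (card_pos.1 (by omega)) ?_
  have hn : (0 : ℝ) < Fintype.card V := by exact_mod_cast (by omega : 0 < Fintype.card V)
  have hXU' : (Fintype.card V : ℝ) ≤ 10 * #(X \ U) := by exact_mod_cast hXU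
  have : d / 10 ≤ d / Fintype.card V * #(X \ U) := by
    rw [div_mul_eq_mul_div, div_le_div_iff₀ (by norm_num) hn]
    nlinarith
  linarith

lemma Jumbled.setsJoined_div {d lam : ℝ} (hJ : Jumbled G (d / Fintype.card V) lam) (hd : 0 < d)
    (hlam : 0 ≤ lam) (hlamd : 10 ^ 5 * lam ≤ d) (hn : 10 ^ 5 ≤ Fintype.card V) :
    SetsJoined G (Fintype.card V / 10 ^ 4) := by
  set n := Fintype.card V
  have hn0 : (0 : ℝ) < n := by exact_mod_cast (by omega : 0 < n)
  refine hJ.setsJoined (div_pos hd hn0) hlam ?_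
  have hM : (n : ℝ) < 2 * 10 ^ 4 * (n / 10 ^ 4 : ℕ) := by
    exact_mod_cast (by omega : n < 2 * 10 ^ 4 * (n / 10 ^ 4))
  calc lam ≤ d / n * (n / 10 ^ 5) := by
        field_simp
        linarith
    _ < d / n * (n / 10 ^ 4 : ℕ) := by
        gcongr
        linarith

lemma Jumbled.extendable_div [DecidableEq V] {d lam : ℝ}
    (hJ : Jumbled G (d / Fintype.card V) lam) (hd : 0 < d) (hlam : 0 ≤ lam)
    (hlamd : 10 ^ 3 * lam ≤ d) {Q : Finset V} (hQ : Rich G (d / 20) Q) :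
    Extendable G Q 4 (Fintype.card V / 10 ^ 4) ∅ fun _ => 4 := by
  set n := Fintype.card V
  refine hJ.extendable (by positivity) hlam hQ ?_
  have hsqrt : √((4 : ℕ) : ℝ) = 2 := by
    rw [Real.sqrt_eq_iff_mul_self_eq_of_pos two_pos]
    norm_num
  have hM : d / n * (n / 10 ^ 4 : ℕ) ≤ d / 10 ^ 4 :=
    calc d / n * (n / 10 ^ 4 : ℕ) ≤ d / n * (n / (10 ^ 4 : ℕ)) := by
          gcongr
          exact Nat.cast_div_le
      _ = d * (n / n) / 10 ^ 4 := by push_cast; ring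
      _ ≤ d / 10 ^ 4 := by
          gcongr
          exact mul_le_of_le_one_right hd.le (div_self_le_one _)
  rw [hsqrt]
  push_cast at hM ⊢
  linarith

lemma hasSpanningNearlyBalancedKSubdivision_of_blocks [DecidableEq V] {Q X Z A B : Finset V}
    {D M h q r t l : ℕ} {b : Fin t → V} {u v : BranchPair t → V} {s e : BranchPair t → ℕ}
    (hdisj : Pairwise (Function.onFun Disjoint ![Q, X, Z, A, B])) (ht : 2 ≤ t)
    (hQ : Extendable G Q D M ∅ fun _ => D) (hjoin : SetsJoined G M) (hD : 4 ≤ D) (hM : M ≤ 2 ^ h)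
    (hh : 1 ≤ h) (hinj : (Sum.elim b (Sum.elim u v)).Injective) (hu : ∀ k, G.Adj (b k.1.1) (u k))
    (hv : ∀ k, G.Adj (v k) (b k.1.2)) (hX : ∀ i, Sum.elim b (Sum.elim u v) i ∈ X)
    (hA : #A = 2 ^ q) (hB : #B = 2 ^ q) (hs : ∀ k, 0 < s k) (hsum : ∑ k, s k = 2 ^ q)
    (he : ∀ k, 2 * h + 1 ≤ e k)
    (hroom : ∑ k, e k + 2 ^ q * (routingLength q h + 1) + (spareRoom D M h + 1) ≤ #Q)
    (hcount : t + ∑ k, (s k * (routingLength q h + r + 2) + e k + 1) = Fintype.card V)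
    (hchain : ∀ y z : (Σ k, Fin (s k)) → V, y.Injective → univ.image y = A → z.Injective →
      univ.image z = B → ∀ R, Z ⊆ R → #R = 2 ^ q * r →
        ∃ σ : Equiv.Perm (Σ k, Fin (s k)), Linked G R (r + 1) y (z ∘ σ))
    (hl : 1 ≤ l) (hbal : ∀ k, l ≤ s k * (routingLength q h + r + 2) + e k + 3 ∧
      s k * (routingLength q h + r + 2) + e k + 1 ≤ l) :
    HasSpanningNearlyBalancedKSubdivision G t := by
  have hcard : Fintype.card (Σ k, Fin (s k)) = 2 ^ q := by simpa using hsum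
  obtain ⟨y, hy, hyA⟩ := exists_injective_image_eq (hA.trans hcard.symm)
  obtain ⟨z, hz, hzB⟩ := exists_injective_image_eq (hB.trans hcard.symm)
  have hyA' : ∀ i, y i ∈ A := fun i => hyA ▸ mem_image_of_mem y (mem_univ i)
  have hzB' : ∀ i, z i ∈ B := fun i => hzB ▸ mem_image_of_mem z (mem_univ i)
  have hne : ∀ {i j x x'}, i ≠ j → x ∈ ![Q, X, Z, A, B] i → x' ∈ ![Q, X, Z, A, B] j → x ≠ x' :=
    fun hij hx hx' => disjoint_iff_ne.1 (hdisj hij) _ hx _ hx'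
  have hnotMem : ∀ {i x}, i ≠ 0 → i ≠ 2 → x ∈ ![Q, X, Z, A, B] i → x ∉ Q ∪ Z := fun h0 h2 hx hxQZ =>
    (mem_union.1 hxQZ).elim (fun hxQ => hne (j := 0) h0 hx hxQ rfl)
      fun hxZ => hne (j := 2) h2 hx hxZ rfl
  have hyz : (Sum.elim y z).Injective := hy.sumElim hz fun i j =>
    hne (by decide : (3 : Fin 5) ≠ 4) (hyA' i) (hzB' j)
  refine hasSpanningNearlyBalancedKSubdivision_of_reservoir ht hQ hjoin hD hM hh hu hv
    (hinj.sumElim hyz ?_) ?_ (hdisj (by decide : (2 : Fin 5) ≠ 0)) hs hsum he hroom hcount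
    (hchain y z hy hyA hz hzB) hl hbal
  · rintro i (j | j)
    · exact hne (by decide : (1 : Fin 5) ≠ 3) (hX i) (hyA' j)
    · exact hne (by decide : (1 : Fin 5) ≠ 4) (hX i) (hzB' j)
  · rintro (i | j | j)
    · exact hnotMem (i := 1) (by decide) (by decide) (hX i)
    · exact hnotMem (i := 3) (by decide) (by decide) (hyA' j)
    · exact hnotMem (i := 4) (by decide) (by decide) (hzB' j)

lemma card_branchPair_le (t : ℕ) : Fintype.card (BranchPair t) ≤ t ^ 2 := by
  simpa [pow_two] using Fintype.card_subtype_le fun x : Fin t × Fin t => x.1 < x.2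

theorem Jumbled.hasSpanningNearlyBalancedKSubdivision {d lam δ : ℝ} {t Λ : ℕ}
    (hJ : Jumbled G (d / Fintype.card V) lam) (hG : Rich G d univ) (hlam : 0 ≤ lam)
    (hΛ : 100 ≤ Λ) (hnΛ : Fintype.card V < 2 ^ (Λ + 1)) (hδlam : 2 * lam < δ)
    (hδ : 4 * (Λ : ℝ) ≤ δ) (hd : 160000 * (Λ : ℝ) ^ 3 * δ ≤ d) (ht : 2 ≤ t) (htd : 100 * t ≤ d)
    (htn : 1000 * t ^ 2 * (2 * (1000 * Λ ^ 3)) ≤ Fintype.card V) :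
    HasSpanningNearlyBalancedKSubdivision G t := by
  classical
  have hΛ' : (100 : ℝ) ≤ Λ := by exact_mod_cast hΛ
  have hΛ3 : (100 : ℝ) ^ 3 ≤ (Λ : ℝ) ^ 3 := by gcongr
  have htt : t ≤ t ^ 2 := Nat.le_self_pow two_ne_zero t
  have hnt : 10 ^ 12 * t ^ 2 ≤ Fintype.card V :=
    calc 10 ^ 12 * t ^ 2 ≤ 1000 * t ^ 2 * (2 * (1000 * 100 ^ 3)) := by omega
      _ ≤ 1000 * t ^ 2 * (2 * (1000 * Λ ^ 3)) := by gcongr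
      _ ≤ Fintype.card V := htn
  have hnΛ3 : 1000 * Λ ^ 3 ≤ Fintype.card V := by nlinarith
  have hn0 : (0 : ℝ) < Fintype.card V := by exact_mod_cast (by omega : 0 < Fintype.card V)
  have hd0 : 0 < d := lt_of_lt_of_le (by positivity) htd
  have hlamd : 10 ^ 10 * lam ≤ d := by nlinarith
  obtain ⟨q, h, hS⟩ := exists_scales hΛ hnΛ3 hnΛ
  have : Nonempty (BranchPair t) := ⟨⟨⟨⟨0, by omega⟩, ⟨1, by omega⟩⟩, by simp⟩⟩
  have hcard : 1000 * Fintype.card (BranchPair t) ≤ 2 ^ q :=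
    (Nat.mul_le_mul_left 1000 (card_branchPair_le t)).trans (hS.le_two_pow_of_mul_le htn)
  obtain ⟨r, l, s, e, hr, hs, hsum, he, hroom, hcount, hl, hbal⟩ :=
    hS.exists_path_lengths hΛ hcard (by omega : 1000 * t ≤ Fintype.card V)
  obtain ⟨Q, X, Z, A, B, hdisj, hQ, hX, hA, hB, hQr, hZr, hAr, hBr⟩ := hS.exists_blocks hΛ hG hδ hd
  obtain ⟨b, u, v, hinj, hu, hv, hmem⟩ := hJ.exists_branch_stars (t := t) hX
    (by omega) (by nlinarith) (by linarith) hd0.le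
  refine hasSpanningNearlyBalancedKSubdivision_of_blocks hdisj ht
    (hJ.extendable_div hd0 hlam (by linarith) hQr)
    (hJ.setsJoined_div hd0 hlam (by linarith) (by omega)) le_rfl hS.le_two_pow_depth
    hS.one_le_depth hinj hu hv hmem hA hB hs hsum he (by omega) hcount ?_ hl hbal
  rintro y z hy rfl hz rfl R hZR hR
  have hr' : (r : ℝ) + 1 ≤ 2000 * (Λ : ℝ) ^ 3 := by exact_mod_cast hr.trans hS.numParts_lt.le
  refine hJ.exists_linked_perm (div_pos hd0 hn0) hlam hδlam hy hAr hz hBr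
    (by rw [hR, Fintype.card_sigma, ← hsum]; simp) ((hZr.subset hZR).mono ?_) ?_
  · nlinarith
  · refine (natCast_mul_lt_exp hnΛ ?_).trans_le (Real.exp_le_exp.2 (by linarith))
    exact (Nat.le_of_succ_le hr).trans (Nat.div_le_self _ _)

end Main

section Bounds

open Finset

lemma mul_pow_four_le_two_pow {Λ : ℕ} (hΛ : 100 ≤ Λ) : 2 * 10 ^ 7 * Λ ^ 4 ≤ 2 ^ Λ := by
  induction Λ, hΛ using Nat.le_induction with
  | base => norm_num
  | succ k hk ih =>
    have hsucc : (100 * (k + 1)) ^ 4 ≤ (101 * k) ^ 4 := Nat.pow_le_pow_left (by omega) 4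
    rw [mul_pow, mul_pow] at hsucc
    rw [pow_succ 2]
    omega

variable {V : Type*} [Fintype V] {G : SimpleGraph V} [DecidableRel G.Adj] {lam : ℝ}

lemma Jumbled.degree_le {p : ℝ} (hJ : Jumbled G p lam) (hp : p ≤ 1 / 2) (v : V) :
    G.degree v ≤ 4 * lam ^ 2 := by
  have hcard : #(G.interedges {v} (G.neighborFinset v)) = G.degree v := by
    rw [card_interedges_eq_sum, sum_singleton, ← card_neighborFinset_eq_degree,
      filter_true_of_mem fun w hw => (mem_neighborFinset G v w).1 hw]
  have hnbrs := (abs_le.1 (hJ {v} (G.neighborFinset v))).2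
  rw [hcard, card_singleton, card_neighborFinset_eq_degree, Nat.cast_one, mul_one, one_mul] at hnbrs
  have hsqrt := Real.mul_self_sqrt (Nat.cast_nonneg (α := ℝ) (G.degree v))
  nlinarith [sq_nonneg (√(G.degree v) - 2 * lam), Nat.cast_nonneg (α := ℝ) (G.degree v)]

-- A sparse graph has `d ≤ 4λ²`, so a large ratio `d / λ` forces a large degree.
lemma Jumbled.mul_pow_four_le_degree [Nonempty V] {d Λ : ℕ} (hreg : G.IsRegularOfDegree d)
    (hJ : Jumbled G (d / Fintype.card V) lam) (hΛ : 100 ≤ Λ) (hΛV : 2 ^ Λ ≤ Fintype.card V)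
    (hlam : 0 < lam) (hlamd : 10 ^ 8 * (Λ : ℝ) ^ 3 * lam ≤ d) : 10 ^ 7 * (Λ : ℝ) ^ 4 ≤ d := by
  have hΛ' : (1 : ℝ) ≤ Λ := by exact_mod_cast (by omega : 1 ≤ Λ)
  have hn0 : (0 : ℝ) < Fintype.card V := by exact_mod_cast Fintype.card_pos
  rcases le_or_gt ((d : ℝ) / Fintype.card V) (1 / 2) with hp | hp
  · obtain ⟨v⟩ := ‹Nonempty V›
    have hd0 : (0 : ℝ) < d := lt_of_lt_of_le (by positivity) hlamd
    have hdlam : (d : ℝ) ≤ 4 * lam ^ 2 := hreg v ▸ hJ.degree_le hp v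
    have hsq : (10 ^ 8 * (Λ : ℝ) ^ 3) ^ 2 * d ≤ 4 * d * d :=
      calc (10 ^ 8 * (Λ : ℝ) ^ 3) ^ 2 * d ≤ (10 ^ 8 * (Λ : ℝ) ^ 3) ^ 2 * (4 * lam ^ 2) := by gcongr
        _ = 4 * (10 ^ 8 * (Λ : ℝ) ^ 3 * lam) ^ 2 := by ring
        _ ≤ 4 * (d : ℝ) ^ 2 := by gcongr
        _ = 4 * d * d := by ring
    have hpow : (Λ : ℝ) ^ 4 ≤ Λ ^ 6 := pow_le_pow_right₀ hΛ' (by norm_num)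
    linarith [le_of_mul_le_mul_right hsq hd0]
  · have hpow : 2 * 10 ^ 7 * (Λ : ℝ) ^ 4 ≤ Fintype.card V := by
      exact_mod_cast (mul_pow_four_le_two_pow hΛ).trans hΛV
    rw [lt_div_iff₀ hn0] at hp
    linarith

theorem IsNDLGraph.hasSpanningNearlyBalancedKSubdivision [DecidableEq V] {n d t : ℕ}
    (hG : IsNDLGraph n d lam G) (hlam : 0 < lam) (hΛ : 100 ≤ Nat.log 2 n)
    (hlamd : 10 ^ 8 * (Nat.log 2 n : ℝ) ^ 3 * lam ≤ d) (ht : 2 ≤ t) (htd : 100 * t ≤ d)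
    (htn : 1000 * t ^ 2 * (2 * (1000 * Nat.log 2 n ^ 3)) ≤ n) :
    HasSpanningNearlyBalancedKSubdivision G t := by
  have hΛ' : (100 : ℝ) ≤ Nat.log 2 n := by exact_mod_cast hΛ
  have hΛ3 : (100 : ℝ) ^ 3 ≤ (Nat.log 2 n : ℝ) ^ 3 := by gcongr
  have hn0 : 0 < n := Nat.pos_of_ne_zero fun h => by simp [h] at hΛ
  have hJ := hG.jumbled hlam.le (by nlinarith)
  obtain ⟨rfl, hreg, -⟩ := hG
  have : Nonempty V := Fintype.card_pos_iff.1 hn0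
  have hrich : Rich G d univ := fun v => by
    rw [← neighborFinset_eq_filter, card_neighborFinset_eq_degree, hreg v]
  have hd := hJ.mul_pow_four_le_degree hreg hΛ (Nat.pow_log_le_self 2 hn0.ne') hlam hlamd
  exact hJ.hasSpanningNearlyBalancedKSubdivision (δ := 4 * Nat.log 2 (Fintype.card V) + 3 * lam)
    hrich hlam.le hΛ (Nat.lt_pow_succ_log_self one_lt_two _) (by linarith) (by linarith)
    (by nlinarith) ht (by exact_mod_cast htd) htn

lemma natLog_two_pow_three_le (n : ℕ) : (Nat.log 2 n : ℝ) ^ 3 ≤ 4 * Real.log n ^ 3 := by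
  have hlog := Real.log_natCast_nonneg n
  have hle : (Nat.log 2 n : ℝ) ≤ 3 / 2 * Real.log n := by
    refine (Real.natLog_le_logb n 2).trans ?_
    rw [Real.logb, div_le_iff₀ (by positivity)]
    push_cast
    nlinarith [Real.log_two_gt_d9]
  calc (Nat.log 2 n : ℝ) ^ 3 ≤ (3 / 2 * Real.log n) ^ 3 := by gcongr
    _ ≤ 4 * Real.log n ^ 3 := by linarith [pow_nonneg hlog 3, mul_pow (3 / 2) (Real.log n) 3]

lemma hundred_le_natLog_two {n : ℕ} (hlog : 0 < Real.log n)
    (hn : 10 ^ 40 * Real.log n ^ 3 ≤ n) : 100 ≤ Nat.log 2 n := by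
  refine Nat.le_log_of_pow_le one_lt_two ?_
  have hn2 : 2 ≤ n := by
    by_contra! hlt
    interval_cases n <;> simp at hlog
  have hhalf : 1 / 2 ≤ Real.log n := by
    have := Real.log_le_log two_pos (by exact_mod_cast hn2 : (2 : ℝ) ≤ n)
    linarith [Real.log_two_gt_d9]
  have hcube : (1 / 2 : ℝ) ^ 3 ≤ Real.log n ^ 3 := by gcongr
  have : (2 : ℝ) ^ 100 ≤ n := by linarith
  exact_mod_cast this

end Bounds

/-- Theorem 1.2: there are constants `C > 0` and `c ∈ (0,1]` such that, whenever
`d/λ ≥ C log³ n`, every `(n,d,λ)`-graph contains a spanning nearly-balanced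
subdivision of `K_t` for all `2 ≤ t ≤ min{cd, c√(n/log³ n)}`. -/
theorem spanning_nearly_balanced_clique_subdivision_in_pseudorandom :
    ∃ C : ℝ, 0 < C ∧ ∃ c : ℝ, 0 < c ∧ c ≤ 1 ∧
      ∀ (n d : ℕ) (lam : ℝ), 0 < lam →
        ∀ (V : Type) [Fintype V] [DecidableEq V] (G : SimpleGraph V) [DecidableRel G.Adj],
          IsNDLGraph n d lam G → C * (Real.log n) ^ 3 ≤ (d : ℝ) / lam →
          ∀ t : ℕ, 2 ≤ t → (t : ℝ) ≤ c * d →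
            (t : ℝ) ≤ c * Real.sqrt ((n : ℝ) / (Real.log n) ^ 3) →
            HasSpanningNearlyBalancedKSubdivision G t := by
  refine ⟨10 ^ 9, by norm_num, 1 / 10 ^ 20, by norm_num, by norm_num, ?_⟩
  intro n d lam hlam V _ _ G _ hG hdlam t ht htd htn
  have ht' : (2 : ℝ) ≤ t := by exact_mod_cast ht
  -- if `log n = 0` then the bound on `t` reads `t ≤ 0`, as `n / 0 = 0`
  have hlog : 0 < Real.log n := (Real.log_natCast_nonneg n).lt_of_ne' fun h => by
    norm_num [h] at htn
    omega
  have htlog : 10 ^ 40 * (t ^ 2 * Real.log n ^ 3) ≤ n := by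
    have hsqrt : 10 ^ 20 * t ≤ √(n / Real.log n ^ 3) := by linarith
    rw [Real.le_sqrt' (by positivity), le_div_iff₀ (by positivity)] at hsqrt
    linarith
  have hcube : Real.log n ^ 3 ≤ t ^ 2 * Real.log n ^ 3 :=
    le_mul_of_one_le_left (pow_pos hlog 3).le (one_le_pow₀ (by linarith))
  have hΛ := natLog_two_pow_three_le n
  rw [le_div_iff₀ hlam] at hdlam
  refine hG.hasSpanningNearlyBalancedKSubdivision hlam
    (hundred_le_natLog_two hlog (by linarith)) ?_ ht ?_ ?_
  · nlinarith
  · exact_mod_cast (by linarith : 100 * (t : ℝ) ≤ d)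
  · have : 1000 * (t : ℝ) ^ 2 * (2 * (1000 * (Nat.log 2 n : ℝ) ^ 3)) ≤ n := by nlinarith
    exact_mod_cast this
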